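/- arXiv:2002.12013 — 5 statements merged into one kernel-verified Lean document; each statement's English description precedes it below -/
import Mathlib

section
/- Suppose R_N can be dissected into finitely many triangles with angles α = (a/n)π, β = (b/n)π, γ = (c/n)π, where a, b, c, n are positive integers with a + b + c = n, and let the equation at the vertex V_j of R_N be p_jα + q_jβ + r_jγ = δ_N for j = 1,…,N. If k is an integer prime to n·N and {k/N} < 1/2, then {ka/n} + {kb/n} + {kc/n} = 1, and p_j{ka/n} + q_j{kb/n} + r_j{kc/n} = 1 − 2{k/N} for every j = 1,…,N. -/
/-!
Let `ξ = exp(πi/(2nN))` and let `σ` be the automorphism `ξ ↦ ξ ^ k` of the cyclotomic field `ℚ(ξ)`,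
where `k` is taken odd (adding `nN` to `k` changes no fractional part). Extending `σ` semilinearly
over the real subfield by means of a Hamel basis gives an additive injection `Φ` of the plane
(`exists_compat`) which turns rotations through `θ ∈ ℤπ/(2nN)` into rotations through `kθ`. By the
law of sines, `Φ` maps the vertices of a tile to those of a triangle with angles `π{ka/n}`,
`π{kb/n}`, `π{kc/n}`, positively oriented, if these fractional parts add up to `1`, and to a
negatively oriented triangle if they add up to `2` (`image_tile`). It maps the vertices of `R_N`
to the points `exp(2πikl/N)`, up to a similarity.

The map `Φ` sends lines whose direction is a multiple of `π/(2nN)` ("good" lines) into lines. Hence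
for a vertex `V` of `R_N` the signed angle under which `Φ P`, `Φ Q` are seen from `Φ V`, for edges
`PQ` of good direction and `0` for the other ones, is exact on lines, and such functions satisfy a
discrete Stokes formula (`tiling_sum`): their sum over the boundaries of the tiles equals the sum
over the boundary of `R_N`, which is `π(1 - 2{k/N})` by the inscribed angle theorem
(`boundary_sum`). The same formula for the identity in place of `Φ`, with and without the restriction
to good edges, shows that tiles with sides of other directions have no vertex at `V`.

If the fractional parts added up to `2`, every tile would be reversed and every term on the left
would be nonpositive (`H_nonpos`), while `π(1 - 2{k/N}) > 0`. So they add up to `1`, every image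
triangle is positively oriented, and it is seen from `Φ V` under an angle at least equal to its
angle at `Φ V` (`H_ge`). Thus `p{ka/n} + q{kb/n} + r{kc/n} ≤ 1 - 2{k/N}`. The left side is
positive, the right side is at most `1`, and they are congruent modulo `1` because
`pa/n + qb/n + rc/n = 1 - 2/N`; therefore they are equal.
-/

open Real EuclideanGeometry

noncomputable section

/-- The Euclidean plane. -/
abbrev Pt : Type := EuclideanSpace ℝ (Fin 2)

/-- The `j`-th vertex of the regular `N`-gon inscribed in the unit circle. -/
noncomputable def ngonVertex (N : ℕ) (j : ℕ) : Pt :=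
  (WithLp.equiv 2 (Fin 2 → ℝ)).symm ![Real.cos (2 * π * j / N), Real.sin (2 * π * j / N)]

/-- The regular `N`-gon `R_N`. -/
noncomputable def ngon (N : ℕ) : Set Pt :=
  convexHull ℝ (Set.range fun j : Fin N => ngonVertex N j)

/-- The interior angle `δ_N = (N-2)π/N` of the regular `N`-gon. -/
noncomputable def ngonAngle (N : ℕ) : ℝ := ((N : ℝ) - 2) * π / N

/-- The closed triangular region spanned by the three points `T 0, T 1, T 2`. -/
noncomputable def triRegion (T : Fin 3 → Pt) : Set Pt :=
  convexHull ℝ (Set.range T)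

/-- The angle of the triangle `T` at its `i`-th vertex. -/
noncomputable def angleAt (T : Fin 3 → Pt) (i : Fin 3) : ℝ :=
  EuclideanGeometry.angle (T (i + 1)) (T i) (T (i + 2))

/-- `T` is a tiling of the regular `N`-gon by finitely many nondegenerate triangles:
the tiles have pairwise disjoint interiors and their union is `R_N`. -/
def IsTiling (N : ℕ) {m : ℕ} (T : Fin m → Fin 3 → Pt) : Prop :=
  (∀ t, AffineIndependent ℝ (T t)) ∧
  (Pairwise fun t s => Disjoint (interior (triRegion (T t))) (interior (triRegion (T s)))) ∧
  (⋃ t, triRegion (T t)) = ngon N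

/-- The triangle `T` has angles `α, β, γ` at its vertices `0, 1, 2` (a labeling of its
vertices by the three angles). -/
def HasAngles (T : Fin 3 → Pt) (α β γ : ℝ) : Prop :=
  angleAt T 0 = α ∧ angleAt T 1 = β ∧ angleAt T 2 = γ

/-- The triangle `T` is similar to a triangle with angles `α, β, γ`:
its angles are `α, β, γ` in some order (sizes and orientation are unrestricted). -/
def SimilarTo (T : Fin 3 → Pt) (α β γ : ℝ) : Prop :=
  ∃ σ : Equiv.Perm (Fin 3), HasAngles (fun i => T (σ i)) α β γ

/-- The number of tiles of the (labeled) tiling `T` whose vertex labeled `i`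
lies at the point `V`. -/
noncomputable def countAt {m : ℕ} (T : Fin m → Fin 3 → Pt) (i : Fin 3) (V : Pt) : ℕ :=
  Nat.card {t : Fin m // T t i = V}

/-- The tiling `T`, by triangles similar to the triangle with angles `α, β, γ`, is
regular: one can label the vertices of each tile by the angles `α, β, γ` of the tile
at those vertices so that, for two of the labels, at every point of the plane the
number of tiles having their vertex carrying the first label at that point equals the
number of tiles having their vertex carrying the second label there. -/
def IsRegularTiling {m : ℕ} (T : Fin m → Fin 3 → Pt) (α β γ : ℝ) : Prop :=
  ∃ L : Fin m → Equiv.Perm (Fin 3),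
    (∀ t, HasAngles (fun i => T t (L t i)) α β γ) ∧
    ∃ i j : Fin 3, i ≠ j ∧
      ∀ V : Pt, countAt (fun t i' => T t (L t i')) i V
              = countAt (fun t i' => T t (L t i')) j V

open ComplexConjugate

/-! ### Functions exact on lines and weighted families of triangles -/

/-- Twice the signed area of the triangle `PQX`; it is positive when `X` lies to the left of the
directed line `PQ`. -/
def cr (P Q X : ℂ) : ℝ := (Q.re - P.re) * (X.im - P.im) - (Q.im - P.im) * (X.re - P.re)

lemma cr_rot (A B C : ℂ) : cr B C A = cr A B C := by simp only [cr]; ring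

lemma cr_swap (A B C : ℂ) : cr A C B = - cr A B C := by simp only [cr]; ring

open Classical in
/-- The indicator of a proposition, as a real number. -/
def ind (p : Prop) : ℝ := if p then 1 else 0

lemma ind_pos {p : Prop} (h : p) : ind p = 1 := if_pos h
lemma ind_neg {p : Prop} (h : ¬ p) : ind p = 0 := if_neg h
lemma ind_congr {p q : Prop} (h : p ↔ q) : ind p = ind q := by rw [propext h]

open Filter Topology in
/-- If a combination of the step functions `x ↦ ind (v i < x)` vanishes off a finite set, then for every
`u` the coefficients of those with jump at `u` add up to zero, as one sees by comparing the values
just before and just after `u`. -/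
lemma fiber_sum_zero {ι : Type*} [Fintype ι] (c v : ι → ℝ) (B : Set ℝ) (hB : B.Finite)
    (h : ∀ x, x ∉ B → ∑ i, c i * ind (v i < x) = 0) (u : ℝ) :
    ∑ i, c i * ind (v i = u) = 0 := by
  have h1 : ∀ᶠ x in 𝓝[>] u, x ∉ B ∧ ∀ i, (v i < x ↔ v i ≤ u) := by
    refine Filter.Eventually.and ?_ ?_
    · have : ∀ᶠ x in 𝓝[≠] u, x ∉ B := by
        have := (hB.subset (Set.sdiff_subset : B \ {u} ⊆ B)).isClosed.isOpen_compl.mem_nhds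
          (show u ∈ (B \ {u})ᶜ by simp)
        filter_upwards [nhdsWithin_le_nhds this, self_mem_nhdsWithin] with x hx hxu hxB
        exact hx ⟨hxB, hxu⟩
      exact this.filter_mono (nhdsWithin_mono _ fun x (hx : u < x) => ne_of_gt hx)
    · rw [Filter.eventually_all]
      intro i
      rcases le_or_gt (v i) u with hi | hi
      · filter_upwards [self_mem_nhdsWithin] with x (hx : u < x)
        exact ⟨fun _ => hi, fun _ => hi.trans_lt hx⟩
      · filter_upwards [nhdsWithin_le_nhds (Iio_mem_nhds hi)] with x (hx : x < v i)
        exact ⟨fun h => absurd h (not_lt.2 hx.le), fun h => absurd h (not_le.2 hi)⟩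
  have h2 : ∀ᶠ x in 𝓝[<] u, x ∉ B ∧ ∀ i, (v i < x ↔ v i < u) := by
    refine Filter.Eventually.and ?_ ?_
    · have : ∀ᶠ x in 𝓝[≠] u, x ∉ B := by
        have := (hB.subset (Set.sdiff_subset : B \ {u} ⊆ B)).isClosed.isOpen_compl.mem_nhds
          (show u ∈ (B \ {u})ᶜ by simp)
        filter_upwards [nhdsWithin_le_nhds this, self_mem_nhdsWithin] with x hx hxu hxB
        exact hx ⟨hxB, hxu⟩
      exact this.filter_mono (nhdsWithin_mono _ fun x (hx : x < u) => ne_of_lt hx)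
    · rw [Filter.eventually_all]
      intro i
      rcases lt_or_ge (v i) u with hi | hi
      · filter_upwards [nhdsWithin_le_nhds (Ioi_mem_nhds hi)] with x (hx : v i < x)
        exact ⟨fun _ => hi, fun _ => hx⟩
      · filter_upwards [self_mem_nhdsWithin] with x (hx : x < u)
        exact ⟨fun h => h.trans hx, fun h => absurd h (not_lt.2 hi)⟩
  obtain ⟨x, hxB, hx⟩ := h1.exists
  obtain ⟨y, hyB, hy⟩ := h2.exists
  have e : ∑ i, c i * ind (v i = u) =
      ∑ i, c i * ind (v i < x) - ∑ i, c i * ind (v i < y) := by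
    rw [← Finset.sum_sub_distrib]
    refine Finset.sum_congr rfl fun i _ => ?_
    rw [ind_congr (hx i), ind_congr (hy i)]
    rcases lt_trichotomy (v i) u with g | g | g
    · rw [ind_pos g.le, ind_pos g, ind_neg g.ne]; ring
    · rw [ind_pos g.le, ind_neg g.not_lt, ind_pos g]; ring
    · rw [ind_neg g.not_ge, ind_neg g.not_gt, ind_neg g.ne']; ring
  rw [e, h x hxB, h y hyB, sub_zero]

/-- Step functions with distinct jumps are linearly independent; in the form used below, a relation
between steps remains true when the step at `v i` is replaced by `g (v i)` for any function `g`. -/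
lemma step_lemma {ι : Type*} [Fintype ι] (c v : ι → ℝ) (B : Set ℝ) (hB : B.Finite)
    (h : ∀ x, x ∉ B → ∑ i, c i * ind (v i < x) = 0) (g : ℝ → ℝ) :
    ∑ i, c i * g (v i) = 0 := by
  classical
  have key : ∀ i, c i * g (v i) =
      ∑ u ∈ Finset.univ.image v, g u * (c i * ind (v i = u)) := by
    intro i
    rw [Finset.sum_eq_single (v i)]
    · rw [ind_pos rfl]; ring
    · intro u _ hu
      rw [ind_neg (Ne.symm hu)]; ring
    · intro hi
      exact absurd (Finset.mem_image_of_mem v (Finset.mem_univ i)) hi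
  rw [Finset.sum_congr rfl fun i _ => key i, Finset.sum_comm]
  refine Finset.sum_eq_zero fun u _ => ?_
  rw [← Finset.mul_sum, fiber_sum_zero c v B hB h u, mul_zero]

/-- The edge function `F` is exact on lines: along each line, `F P Q` is the difference of the values
at `Q` and `P` of a function on this line, which may depend on the line. -/
def LineExact (F : ℂ → ℂ → ℝ) : Prop :=
  ∀ P d : ℂ, d ≠ 0 → ∃ f : ℝ → ℝ, ∀ s t : ℝ, F (P + s * d) (P + t * d) = f t - f s

lemma LineExact.self {F : ℂ → ℂ → ℝ} (hF : LineExact F) (P : ℂ) : F P P = 0 := by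
  obtain ⟨f, hf⟩ := hF P 1 one_ne_zero
  simpa using hf 0 0

lemma LineExact.antisymm {F : ℂ → ℂ → ℝ} (hF : LineExact F) (P Q : ℂ) : F P Q = - F Q P := by
  by_cases h : P = Q
  · subst h; simp [hF.self]
  obtain ⟨f, hf⟩ := hF P (Q - P) (sub_ne_zero.2 (Ne.symm h))
  have h1 := hf 0 1
  have h2 := hf 1 0
  simp at h1 h2
  rw [h1, h2]; ring

/-- The indicator at `X` of the region below the segment `PQ`, with the sign given by the direction
(left to right or right to left) of the segment. -/
def below (P Q X : ℂ) : ℝ :=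
  (ind (P.re < X.re) - ind (Q.re < X.re)) * ind (cr P Q X * (Q.re - P.re) < 0)

/-- If the signed regions below a family of weighted non-vertical edges cancel, then so do the values
of a function exact on lines. Over a generic abscissa the edges on different lines are ordered, so
the weights cancel on each line separately; there exactness applies. -/
lemma edges_sum_zero {ι : Type*} [Fintype ι] (F : ℂ → ℂ → ℝ) (hF : LineExact F)
    (c : ι → ℝ) (P Q : ι → ℂ) (hPQ : ∀ i, (P i).re ≠ (Q i).re)
    (h : ∀ X : ℂ, (∀ i, cr (P i) (Q i) X ≠ 0) → (∀ i, (P i).re ≠ X.re ∧ (Q i).re ≠ X.re) →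
      ∑ i, c i * below (P i) (Q i) X = 0) :
    ∑ i, c i * F (P i) (Q i) = 0 := by
  classical
  -- slope and intercept
  set M : ι → ℝ := fun i => ((Q i).im - (P i).im) / ((Q i).re - (P i).re) with hM
  set b : ι → ℝ := fun i => (P i).im - M i * (P i).re with hb
  have hne : ∀ i, (Q i).re - (P i).re ≠ 0 := fun i => sub_ne_zero.2 (hPQ i).symm
  have hMi : ∀ i, M i * ((Q i).re - (P i).re) = (Q i).im - (P i).im := fun i =>
    div_mul_cancel₀ _ (hne i)
  have hcr : ∀ i (X : ℂ), cr (P i) (Q i) X = ((Q i).re - (P i).re) * (X.im - (M i * X.re + b i)) := by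
    intro i X
    simp only [cr, hb]
    rw [← hMi i]; ring
  let L : ι → ℝ × ℝ := fun i => (M i, b i)
  -- abscissae to avoid: the endpoints, and the crossings of two different lines
  let B : Set ℝ := Set.range (fun i => (P i).re) ∪ Set.range (fun i => (Q i).re) ∪
    Set.range (fun ij : ι × ι => (b ij.1 - b ij.2) / (M ij.2 - M ij.1))
  have hB : B.Finite :=
    ((Set.finite_range _).union (Set.finite_range _)).union (Set.finite_range _)
  have hsame : ∀ x, x ∉ B → ∀ i j, M i * x + b i = M j * x + b j → L i = L j := by
    intro x hx i j hij
    by_cases hm : M i = M j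
    · rw [hm] at hij
      exact Prod.ext hm (by simpa using hij)
    · exfalso
      refine hx (Or.inr ⟨(i, j), ?_⟩)
      have : M j - M i ≠ 0 := sub_ne_zero.2 (Ne.symm hm)
      simp only
      rw [div_eq_iff this]; linarith
  have hx : ∀ x, x ∉ B → ∀ j, ∑ i, c i * (ind ((P i).re < x) - ind ((Q i).re < x)) *
      ind (L i = L j) = 0 := by
    intro x hx j
    have hstep := step_lemma (fun i => c i * (ind ((P i).re < x) - ind ((Q i).re < x)))
      (fun i => -(M i * x + b i)) (Set.range fun i => -(M i * x + b i)) (Set.finite_range _) ?_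
      (fun u => ind (u = -(M j * x + b j)))
    · rw [← hstep]
      refine Finset.sum_congr rfl fun i _ => ?_
      congr 1
      refine ind_congr ⟨fun hL => ?_, fun hL => hsame x hx i j (neg_injective hL)⟩
      have h1 : M i = M j := congrArg Prod.fst hL
      have h2 : b i = b j := congrArg Prod.snd hL
      rw [h1, h2]
    · intro y hy
      have := h ⟨x, -y⟩ ?_ ?_
      · rw [← this]
        refine Finset.sum_congr rfl fun i _ => ?_
        rw [below, mul_assoc]
        congr 2
        refine ind_congr ?_
        rw [hcr]
        have h0 := hne i
        have : 0 < ((Q i).re - (P i).re) ^ 2 := by positivity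
        simp only
        constructor
        · intro hlt
          nlinarith
        · intro hlt
          by_contra hcon
          push Not at hcon
          nlinarith
      · intro i
        rw [hcr]
        refine mul_ne_zero (hne i) fun h0 => hy ⟨i, ?_⟩
        simp only at h0 ⊢
        linarith
      · intro i
        exact ⟨fun h0 => hx (Or.inl (Or.inl ⟨i, h0⟩)), fun h0 => hx (Or.inl (Or.inr ⟨i, h0⟩))⟩
  have hline : ∀ j, ∑ i, c i * F (P i) (Q i) * ind (L i = L j) = 0 := by
    intro j
    obtain ⟨f, hf⟩ := hF ⟨0, b j⟩ ⟨1, M j⟩ (by intro h; simpa using congrArg Complex.re h)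
    have := step_lemma (ι := ι ⊕ ι)
      (Sum.elim (fun i => c i * ind (L i = L j)) (fun i => - (c i * ind (L i = L j))))
      (Sum.elim (fun i => (P i).re) (fun i => (Q i).re)) B hB ?_ f
    · rw [Fintype.sum_sum_type] at this
      simp only [Sum.elim_inl, Sum.elim_inr] at this
      rw [← Finset.sum_add_distrib] at this
      rw [← neg_eq_zero, ← Finset.sum_neg_distrib, ← this]
      refine Finset.sum_congr rfl fun i _ => ?_
      by_cases hL : L i = L j
      · have h1 : M i = M j := congrArg Prod.fst hL
        have h2 : b i = b j := congrArg Prod.snd hL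
        have e1 : P i = (⟨0, b j⟩ : ℂ) + ((P i).re : ℂ) * ⟨1, M j⟩ := by
          apply Complex.ext
          · simp
          · simp [← h1, ← h2]; simp only [hb]; ring
        have e2 : Q i = (⟨0, b j⟩ : ℂ) + ((Q i).re : ℂ) * ⟨1, M j⟩ := by
          apply Complex.ext
          · simp
          · simp [← h1, ← h2]; simp [hb]; linarith [hMi i]
        have e3 := hf (P i).re (Q i).re
        rw [← e1, ← e2] at e3
        rw [e3]; ring
      · rw [ind_neg hL]; ring
    · intro x hxB
      rw [Fintype.sum_sum_type]
      simp only [Sum.elim_inl, Sum.elim_inr]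
      rw [← Finset.sum_add_distrib, ← hx x hxB j]
      refine Finset.sum_congr rfl fun i _ => by ring
  rw [← Finset.sum_fiberwise_of_maps_to (g := L) (t := Finset.univ.image L)
    (fun i _ => Finset.mem_image_of_mem _ (Finset.mem_univ i))]
  refine Finset.sum_eq_zero fun ℓ hℓ => ?_
  obtain ⟨j, -, rfl⟩ := Finset.mem_image.1 hℓ
  rw [← hline j, Finset.sum_filter]
  refine Finset.sum_congr rfl fun i _ => ?_
  by_cases hL : L i = L j
  · rw [if_pos hL, ind_pos hL, mul_one]
  · rw [if_neg hL, ind_neg hL, mul_zero]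

/-- `X` lies strictly inside the positively oriented triangle `ABC`. -/
def Inside (A B C X : ℂ) : Prop := 0 < cr A B X ∧ 0 < cr B C X ∧ 0 < cr C A X

/-- A sign computation: `a, b` stand for the abscissae of the ends of an edge relative to a point, and
`w` for the side of the edge on which the point lies. -/
lemma below_sign {a b w : ℝ} (ha : a ≠ 0) (hb : b ≠ 0) (hw : w ≠ 0) :
    (ind (a < 0) - ind (b < 0)) * ind (w * (b - a) < 0) =
      ind (a < 0 ∧ 0 < b ∧ w < 0) - ind (0 < a ∧ b < 0 ∧ 0 < w) := by
  rcases ha.lt_or_gt with ha | ha <;> rcases hb.lt_or_gt with hb | hb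
  · simp [ind, ha, hb, not_lt.2 ha.le, not_lt.2 hb.le]
  · have : w * (b - a) < 0 ↔ w < 0 := by
      rw [← neg_pos, ← neg_mul, mul_pos_iff_of_pos_right (by linarith), neg_pos]
    simp [ind, this, ha, hb, not_lt.2 ha.le, not_lt.2 hb.le]
  · have : w * (b - a) < 0 ↔ 0 < w := by
      rw [← neg_pos, ← mul_neg]; exact mul_pos_iff_of_pos_right (by linarith)
    rcases hw.lt_or_gt with hw | hw <;>
      simp [ind, this, ha, hb, hw, not_lt.2 ha.le, not_lt.2 hb.le, not_lt.2 hw.le]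
  · simp [ind, ha, hb, not_lt.2 ha.le, not_lt.2 hb.le]

/-- The signs behind `ind_inside`: `a, b, c` are the relative abscissae of the vertices and
`u, v, w` the unnormalised barycentric coordinates of the point. -/
lemma ind_inside_sign {a b c u v w : ℝ} (ha : a ≠ 0) (hb : b ≠ 0) (hc : c ≠ 0)
    (hu : u ≠ 0) (hv : v ≠ 0) (hw : w ≠ 0) (h1 : u * a + v * b + w * c = 0)
    (h2 : 0 < u + v + w) :
    ind (0 < w ∧ 0 < u ∧ 0 < v) = -((ind (a < 0) - ind (b < 0)) * ind (w * (b - a) < 0)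
      + (ind (b < 0) - ind (c < 0)) * ind (u * (c - b) < 0)
      + (ind (c < 0) - ind (a < 0)) * ind (v * (a - c) < 0)) := by
  rw [below_sign ha hb hw, below_sign hb hc hu, below_sign hc ha hv]
  rcases ha.lt_or_gt with ha | ha <;> rcases hb.lt_or_gt with hb | hb <;>
  rcases hc.lt_or_gt with hc | hc <;> rcases hu.lt_or_gt with hu | hu <;>
  rcases hv.lt_or_gt with hv | hv <;> rcases hw.lt_or_gt with hw | hw <;>
  first
  | (simp [ind, ha, hb, hc, hu, hv, hw, not_lt.2 ha.le, not_lt.2 hb.le, not_lt.2 hc.le,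
      not_lt.2 hu.le, not_lt.2 hv.le, not_lt.2 hw.le]; done)
  | (exfalso; linarith)
  | (exfalso
     have h3 : u * a < 0 := by nlinarith
     have h4 : v * b < 0 := by nlinarith
     have h5 : w * c < 0 := by nlinarith
     linarith)

/-- The indicator of a triangle is the signed sum of the regions below its edges. -/
lemma ind_inside {A B C X : ℂ} (h : 0 < cr A B C) (h1 : cr A B X ≠ 0) (h2 : cr B C X ≠ 0)
    (h3 : cr C A X ≠ 0) (hA : A.re ≠ X.re) (hB : B.re ≠ X.re) (hC : C.re ≠ X.re) :
    ind (Inside A B C X) = -(below A B X + below B C X + below C A X) := by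
  have := ind_inside_sign (a := A.re - X.re) (b := B.re - X.re) (c := C.re - X.re)
    (sub_ne_zero.2 hA) (sub_ne_zero.2 hB) (sub_ne_zero.2 hC) h2 h3 h1
    (by simp only [cr]; ring)
    (by have : cr B C X + cr C A X + cr A B X = cr A B C := by simp only [cr]; ring
        rw [this]; exact h)
  simpa only [Inside, below, sub_neg, sub_sub_sub_cancel_right] using this

lemma cr_mul (w A B C : ℂ) : cr (w * A) (w * B) (w * C) = Complex.normSq w * cr A B C := by
  simp only [cr, Complex.mul_re, Complex.mul_im, Complex.normSq_apply]; ring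

/-- If a weighted family of triangles covers almost every point with total weight zero, then the sum
over their boundaries of a function exact on lines vanishes. Rotating the plane makes all edges
non-vertical, so that `edges_sum_zero` applies. -/
lemma triangles_sum_zero {I : Type*} [Fintype I] (F : ℂ → ℂ → ℝ) (hF : LineExact F)
    (c : I → ℝ) (A B C : I → ℂ) (hpos : ∀ i, 0 < cr (A i) (B i) (C i))
    (h : ∀ X : ℂ, (∀ i, cr (A i) (B i) X ≠ 0 ∧ cr (B i) (C i) X ≠ 0 ∧ cr (C i) (A i) X ≠ 0) →
      ∑ i, c i * ind (Inside (A i) (B i) (C i) X) = 0) :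
    ∑ i, c i * (F (A i) (B i) + F (B i) (C i) + F (C i) (A i)) = 0 := by
  let P : I ⊕ I ⊕ I → ℂ := Sum.elim A (Sum.elim B C)
  let Q : I ⊕ I ⊕ I → ℂ := Sum.elim B (Sum.elim C A)
  have hPQ : ∀ e, Q e - P e ≠ 0 := by
    have key : ∀ {X Y Z : ℂ}, 0 < cr X Y Z → Y - X ≠ 0 := by
      intro X Y Z h h0
      rw [sub_eq_zero.1 h0] at h
      simp [cr] at h
    rintro (i | i | i)
    · exact key (hpos i)
    · exact key (Z := A i) ((cr_rot (A i) (B i) (C i)).symm ▸ hpos i)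
    · exact key (Z := B i) ((cr_rot (C i) (A i) (B i)) ▸ hpos i)
  -- rotate so that no edge is vertical
  obtain ⟨τ, hτ⟩ : ∃ τ : ℝ, ∀ e, (Q e - P e).re - τ * (Q e - P e).im ≠ 0 := by
    obtain ⟨τ, hτ⟩ := (Set.finite_range fun e => (Q e - P e).re / (Q e - P e).im).exists_notMem
    refine ⟨τ, fun e h0 => ?_⟩
    by_cases him : (Q e - P e).im = 0
    · rw [him, mul_zero, sub_zero] at h0
      exact hPQ e (Complex.ext h0 him)
    · refine hτ ⟨e, ?_⟩
      simp only
      rw [div_eq_iff him]; linarith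
  set w : ℂ := ⟨1, τ⟩ with hw
  have hw0 : w ≠ 0 := fun h0 => by simpa [hw] using congrArg Complex.re h0
  have hwn : 0 < Complex.normSq w := Complex.normSq_pos.2 hw0
  have hF' : LineExact fun X Y => F (w⁻¹ * X) (w⁻¹ * Y) := by
    intro X d hd
    obtain ⟨f, hf⟩ := hF (w⁻¹ * X) (w⁻¹ * d) (mul_ne_zero (inv_ne_zero hw0) hd)
    refine ⟨f, fun s t => ?_⟩
    beta_reduce
    rw [← hf s t, mul_add, mul_add, mul_left_comm w⁻¹ (s : ℂ), mul_left_comm w⁻¹ (t : ℂ)]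
  have main := edges_sum_zero _ hF' (ι := I ⊕ I ⊕ I) (Sum.elim c (Sum.elim c c))
    (fun e => w * P e) (fun e => w * Q e) ?_ ?_
  · simp only [inv_mul_cancel_left₀ hw0] at main
    rw [Fintype.sum_sum_type, Fintype.sum_sum_type] at main
    simp only [Sum.elim_inl, Sum.elim_inr, P, Q] at main
    rw [← main, ← Finset.sum_add_distrib, ← Finset.sum_add_distrib]
    exact Finset.sum_congr rfl fun i _ => by ring
  · intro e h0
    apply hτ e
    simp [hw, Complex.mul_re] at h0 ⊢
    linarith
  · intro X hX1 hX2
    have hXw : X = w * (w⁻¹ * X) := (mul_inv_cancel_left₀ hw0 X).symm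
    set Y := w⁻¹ * X with hY
    have hcr : ∀ e, cr (P e) (Q e) Y ≠ 0 := fun e h0 => hX1 e (by rw [hXw, cr_mul, h0, mul_zero])
    have h0 := h Y fun i => ⟨hcr (Sum.inl i), hcr (Sum.inr (Sum.inl i)), hcr (Sum.inr (Sum.inr i))⟩
    rw [← neg_eq_zero, ← h0, Fintype.sum_sum_type, Fintype.sum_sum_type]
    simp only [Sum.elim_inl, Sum.elim_inr, P, Q]
    rw [← Finset.sum_add_distrib, ← Finset.sum_add_distrib, ← Finset.sum_neg_distrib]
    refine Finset.sum_congr rfl fun i _ => ?_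
    have hin : ind (Inside (A i) (B i) (C i) Y) =
        ind (Inside (w * A i) (w * B i) (w * C i) X) := by
      refine ind_congr ?_
      rw [hXw]
      simp only [Inside, cr_mul, mul_pos_iff_of_pos_left hwn]
    have hin' := ind_inside (A := w * A i) (B := w * B i) (C := w * C i) (X := X) (by rw [cr_mul]; exact mul_pos hwn (hpos i)) (hX1 (Sum.inl i))
      (hX1 (Sum.inr (Sum.inl i))) (hX1 (Sum.inr (Sum.inr i))) (hX2 (Sum.inl i)).1
      (hX2 (Sum.inl i)).2 (hX2 (Sum.inr (Sum.inr i))).1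
    rw [hin, hin']
    ring

/-! ### Tilings of the regular polygon -/

/-- The vertices of the regular `N`-gon as complex numbers; the index is read modulo `N`. -/
def vx (N l : ℕ) : ℂ := ⟨Real.cos (2 * π * l / N), Real.sin (2 * π * l / N)⟩

/-- The regular `N`-gon in the complex plane. -/
def rN (N : ℕ) : Set ℂ := convexHull ℝ (Set.range fun j : Fin N => vx N j)

lemma mem_hull_of_cr {A B C X : ℂ} (hD : 0 < cr A B C) (h1 : 0 ≤ cr A B X) (h2 : 0 ≤ cr B C X)
    (h3 : 0 ≤ cr C A X) {s : Set ℂ} (hs : Convex ℝ s) (hA : A ∈ s) (hB : B ∈ s) (hC : C ∈ s) :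
    X ∈ s := by
  have hsum : cr B C X + cr C A X + cr A B X = cr A B C := by simp only [cr]; ring
  have := hs.sum_mem (t := Finset.univ) (w := ![cr B C X / cr A B C, cr C A X / cr A B C,
    cr A B X / cr A B C]) (z := ![A, B, C])
    (by intro i _; fin_cases i <;> simp <;> positivity)
    (by simp [Fin.sum_univ_three]; rw [← add_div, ← add_div, hsum, div_self hD.ne'])
    (by intro i _; fin_cases i <;> simpa)
  convert this using 1
  simp only [Fin.sum_univ_three, Matrix.cons_val]
  apply Complex.ext
  · simp only [Complex.add_re, Complex.real_smul, Complex.mul_re, Complex.ofReal_re,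
      Complex.ofReal_im, zero_mul, sub_zero]
    field_simp
    simp only [cr]; ring
  · simp only [Complex.add_im, Complex.real_smul, Complex.mul_im, Complex.ofReal_re,
      Complex.ofReal_im, zero_mul, add_zero]
    field_simp
    simp only [cr]; ring

lemma convex_cr (A B : ℂ) : Convex ℝ {X | 0 ≤ cr A B X} := by
  intro X hX Y hY a b ha hb hab
  simp only [Set.mem_ofPred_eq] at *
  have : cr A B (a • X + b • Y) = a * cr A B X + b * cr A B Y := by
    have hb' : b = 1 - a := by linarith
    subst hb'
    simp [cr]; ring
  rw [this]; positivity

lemma cr_self_left (A B : ℂ) : cr A B A = 0 := by simp [cr]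
lemma cr_self_right (A B : ℂ) : cr A B B = 0 := by simp [cr]; ring

lemma cr_nonneg_of_mem_hull {A B C X : ℂ} (hD : 0 < cr A B C)
    (hX : X ∈ convexHull ℝ ({A, B, C} : Set ℂ)) :
    0 ≤ cr A B X ∧ 0 ≤ cr B C X ∧ 0 ≤ cr C A X := by
  refine ⟨?_, ?_, ?_⟩
  · refine convexHull_min ?_ (convex_cr A B) hX
    rintro Y (rfl | rfl | rfl)
    · exact (cr_self_left _ _).ge
    · exact (cr_self_right _ _).ge
    · exact hD.le
  · refine convexHull_min ?_ (convex_cr B C) hX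
    rintro Y (rfl | rfl | rfl)
    · exact (show 0 ≤ cr B C Y by rw [cr_rot]; exact hD.le)
    · exact (cr_self_left _ _).ge
    · exact (cr_self_right _ _).ge
  · refine convexHull_min ?_ (convex_cr C A) hX
    rintro Y (rfl | rfl | rfl)
    · exact (cr_self_right _ _).ge
    · exact (show 0 ≤ cr C A Y by rw [cr_rot, cr_rot]; exact hD.le)
    · exact (cr_self_left _ _).ge

lemma vx_mem (N j : ℕ) (hj : j < N) : vx N j ∈ rN N := subset_convexHull _ _ ⟨⟨j, hj⟩, rfl⟩

lemma vx_eq_exp (N l : ℕ) : vx N l = Complex.exp ((2 * π * l / N : ℝ) * Complex.I) := by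
  apply Complex.ext
  · rw [Complex.exp_ofReal_mul_I_re]; rfl
  · rw [Complex.exp_ofReal_mul_I_im]; rfl

lemma vx_self (N : ℕ) (hN : 3 ≤ N) : vx N N = vx N 0 := by
  have : (N : ℝ) ≠ 0 := by positivity
  simp [vx, this]

lemma vx_succ_mem (N j : ℕ) (hN : 3 ≤ N) (hj : j < N) : vx N (j + 1) ∈ rN N := by
  rcases Nat.lt_or_ge (j + 1) N with h | h
  · exact vx_mem _ _ h
  · rw [show j + 1 = N by omega, vx_self N hN]; exact vx_mem _ _ (by omega)

lemma zero_mem_rN (N : ℕ) (hN : 3 ≤ N) : (0 : ℂ) ∈ rN N := by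
  have hN0 : (N : ℝ) ≠ 0 := by positivity
  have h := (convex_convexHull ℝ (Set.range fun j : Fin N => vx N j)).sum_mem
    (t := Finset.univ) (w := fun _ : Fin N => (1 / N : ℝ)) (z := fun j : Fin N => vx N j)
    (fun _ _ => by positivity) (by simp [hN0]) (fun j _ => subset_convexHull _ _ ⟨j, rfl⟩)
  have hs : ∑ j : Fin N, vx N j = 0 := by
    have hp := (Complex.isPrimitiveRoot_exp N (by omega)).geom_sum_eq_zero (by omega)
    rw [← hp, Finset.sum_range]
    refine Finset.sum_congr rfl fun j _ => ?_
    rw [vx_eq_exp, ← Complex.exp_nat_mul]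
    congr 1; push_cast; ring
  rw [← Finset.smul_sum, hs, smul_zero] at h
  exact h

lemma cos_le_cos_pi_div {N : ℕ} (hN : 3 ≤ N) {x : ℝ} (h1 : π / N ≤ x) (h2 : x ≤ 2 * π - π / N) :
    Real.cos x ≤ Real.cos (π / N) := by
  have hp : 0 < π / N := by positivity
  rcases le_total x π with h | h
  · exact Real.cos_le_cos_of_nonneg_of_le_pi hp.le h h1
  · rw [← Real.cos_two_pi_sub]
    exact Real.cos_le_cos_of_nonneg_of_le_pi hp.le (by linarith) (by linarith)

/-- The equation of the line through two consecutive vertices, in normal form. -/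
lemma cr_edge (N l : ℕ) (X : ℂ) : cr (vx N l) (vx N (l + 1)) X =
    2 * Real.sin (π / N) * (Real.cos (π / N) - (X.re * Real.cos ((2 * l + 1) * π / N) +
      X.im * Real.sin ((2 * l + 1) * π / N))) := by
  have e1 : 2 * π * (l : ℝ) / N = (2 * l + 1) * π / N - π / N := by ring
  have e2 : 2 * π * ((l + 1 : ℕ) : ℝ) / N = (2 * l + 1) * π / N + π / N := by push_cast; ring
  simp only [cr, vx, e1, e2, Real.cos_add, Real.cos_sub, Real.sin_add, Real.sin_sub]
  have := Real.sin_sq_add_cos_sq ((2 * l + 1) * π / N)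
  linear_combination (2 * Real.sin (π / N) * Real.cos (π / N)) * this

lemma sin_pi_div_pos {N : ℕ} (hN : 3 ≤ N) : 0 < Real.sin (π / N) := by
  have : (3 : ℝ) ≤ N := by exact_mod_cast hN
  apply Real.sin_pos_of_pos_of_lt_pi (by positivity)
  rw [div_lt_iff₀ (by linarith)]
  nlinarith [Real.pi_pos]

lemma cr_edge_nonneg {N l : ℕ} (hN : 3 ≤ N) (hl : l < N) {X : ℂ} (hX : X ∈ rN N) :
    0 ≤ cr (vx N l) (vx N (l + 1)) X := by
  refine convexHull_min ?_ (convex_cr _ _) hX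
  rintro _ ⟨j, rfl⟩
  simp only [Set.mem_ofPred_eq]
  rw [cr_edge]
  have hN0 : (0 : ℝ) < N := by positivity
  have hs := sin_pi_div_pos hN
  refine mul_nonneg (by linarith) (sub_nonneg.2 ?_)
  have : (vx N j).re * Real.cos ((2 * l + 1) * π / N) + (vx N j).im * Real.sin ((2 * l + 1) * π / N)
      = Real.cos ((2 * (j - l : ℤ) - 1) * (π / N)) := by
    simp only [vx]
    rw [← Real.cos_sub]
    congr 1; push_cast; ring
  rw [this]
  have hp : 0 < π / N := by positivity
  have hpN : N * (π / N) = π := by field_simp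
  have hj := j.2
  rcases lt_or_ge l j.1 with h | h
  · apply cos_le_cos_pi_div hN
    · have : (1 : ℝ) ≤ ((j - l : ℤ) : ℝ) := by exact_mod_cast (by omega : (1 : ℤ) ≤ j - l)
      push_cast at this ⊢
      nlinarith
    · have : ((j - l : ℤ) : ℝ) ≤ N - 1 := by exact_mod_cast (by omega : (j - l : ℤ) ≤ N - 1)
      push_cast at this ⊢
      nlinarith
  · rw [← Real.cos_neg]
    apply cos_le_cos_pi_div hN
    · have : ((j - l : ℤ) : ℝ) ≤ 0 := by exact_mod_cast (by omega : (j - l : ℤ) ≤ 0)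
      push_cast at this ⊢
      nlinarith
    · have : (-(N - 1) : ℝ) ≤ ((j - l : ℤ) : ℝ) := by
        exact_mod_cast (by omega : (-(N - 1) : ℤ) ≤ (j - l : ℤ))
      push_cast at this ⊢
      nlinarith

lemma exists_polar (X : ℂ) (hX : X ≠ 0) : ∃ r θ : ℝ, 0 < r ∧ 0 ≤ θ ∧ θ < 2 * π ∧
    X.re = r * Real.cos θ ∧ X.im = r * Real.sin θ := by
  have hr : 0 < ‖X‖ := norm_pos_iff.2 hX
  have e1 : X.re = ‖X‖ * Real.cos X.arg := by rw [Complex.cos_arg hX]; field_simp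
  have e2 : X.im = ‖X‖ * Real.sin X.arg := by rw [Complex.sin_arg]; field_simp
  rcases le_or_gt 0 X.arg with h | h
  · exact ⟨‖X‖, X.arg, hr, h, by linarith [Complex.arg_le_pi X, Real.pi_pos], e1, e2⟩
  · refine ⟨‖X‖, X.arg + 2 * π, hr, by linarith [Complex.neg_pi_lt_arg X, Real.pi_pos],
      by linarith, ?_, ?_⟩
    · rw [Real.cos_add_two_pi, ← e1]
    · rw [Real.sin_add_two_pi, ← e2]

/-- Off the edges, the regular `N`-gon is the disjoint union of the `N` triangles joining the centre to
its sides. -/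
lemma fan_ind {N : ℕ} (hN : 3 ≤ N) {X : ℂ}
    (h1 : ∀ l < N, cr 0 (vx N l) X ≠ 0) (h2 : ∀ l < N, cr (vx N l) (vx N (l + 1)) X ≠ 0) :
    ind (X ∈ rN N) = ∑ l : Fin N, ind (Inside 0 (vx N l) (vx N (l + 1)) X) := by
  have hN3 : (3 : ℝ) ≤ N := by exact_mod_cast hN
  have hN0 : (0 : ℝ) < N := by linarith
  have hX : X ≠ 0 := by
    rintro rfl
    exact h1 0 (by omega) (cr_self_left _ _)
  obtain ⟨r, θ, hr, hθ0, hθ1, hre, him⟩ := exists_polar X hX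
  have hA : ∀ l : ℕ, cr 0 (vx N l) X = r * Real.sin (θ - 2 * π * l / N) := by
    intro l
    simp only [cr, vx, hre, him, Real.sin_sub, Complex.zero_re, Complex.zero_im]; ring
  have hB : ∀ l : ℕ, cr (vx N l) 0 X = r * Real.sin (2 * π * l / N - θ) := by
    intro l
    simp only [cr, vx, hre, him, Real.sin_sub, Complex.zero_re, Complex.zero_im]; ring
  set h : ℝ := 2 * π / N with hh
  have hpi := Real.pi_pos
  have hhpos : 0 < h := by positivity
  have hhlt : h < π := by rw [hh, div_lt_iff₀ hN0]; nlinarith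
  have hhN : N * h = 2 * π := by rw [hh]; field_simp
  have hφ : ∀ l : ℕ, 2 * π * (l : ℝ) / N = l * h := fun l => by rw [hh]; ring
  have hsector : ∀ l < N, Inside 0 (vx N l) (vx N (l + 1)) X →
      (l : ℝ) * h < θ ∧ θ < (l + 1) * h := by
    intro l hl ⟨i1, _, i3⟩
    rw [hA, hφ, mul_pos_iff_of_pos_left hr] at i1
    rw [hB, hφ, mul_pos_iff_of_pos_left hr] at i3
    push_cast at i3
    have hl' : (l : ℝ) + 1 ≤ N := by exact_mod_cast hl
    have hlh : (l + 1) * h ≤ 2 * π := by nlinarith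
    have hl0 : (0 : ℝ) ≤ l * h := by positivity
    constructor
    · by_contra hcon
      push Not at hcon
      rcases le_or_gt (-π) (θ - l * h) with hc | hc
      · exact absurd i1 (not_lt.2 (Real.sin_nonpos_of_nonpos_of_neg_pi_le (by linarith) hc))
      · rw [← Real.sin_sub_two_pi] at i3
        exact absurd i3 (not_lt.2 (Real.sin_nonpos_of_nonpos_of_neg_pi_le (by linarith)
          (by linarith)))
    · by_contra hcon
      push Not at hcon
      rcases le_or_gt (-π) ((l + 1) * h - θ) with hc | hc
      · exact absurd i3 (not_lt.2 (Real.sin_nonpos_of_nonpos_of_neg_pi_le (by linarith) hc))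
      · rw [← Real.sin_sub_two_pi] at i1
        exact absurd i1 (not_lt.2 (Real.sin_nonpos_of_nonpos_of_neg_pi_le (by linarith)
          (by linarith)))
  by_cases hmem : X ∈ rN N
  · rw [ind_pos hmem]
    set l := ⌊θ / h⌋₊ with hl
    have hl1 : (l : ℝ) * h ≤ θ := by
      rw [← le_div_iff₀ hhpos]; exact Nat.floor_le (by positivity)
    have hl2 : θ < (l + 1) * h := by
      rw [← div_lt_iff₀ hhpos]; exact Nat.lt_floor_add_one _
    have hlN : l < N := by
      have : (l : ℝ) < N := by
        by_contra hcon; push Not at hcon; nlinarith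
      exact_mod_cast this
    rw [Finset.sum_eq_single (⟨l, hlN⟩ : Fin N)]
    · rw [ind_pos]
      have hne := h1 l hlN
      rw [hA, hφ] at hne
      have hne' : θ - l * h ≠ 0 := fun h0 => hne (by rw [h0, Real.sin_zero, mul_zero])
      have hlt : 0 < θ - l * h := lt_of_le_of_ne (by linarith) hne'.symm
      refine ⟨?_, lt_of_le_of_ne (cr_edge_nonneg hN hlN hmem) (h2 l hlN).symm, ?_⟩
      · rw [hA, hφ]
        exact mul_pos hr (Real.sin_pos_of_pos_of_lt_pi hlt (by linarith))
      · rw [hB, hφ]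
        push_cast
        exact mul_pos hr (Real.sin_pos_of_pos_of_lt_pi (by linarith) (by linarith))
    · intro j _ hj
      apply ind_neg
      intro hin
      obtain ⟨j1, j2⟩ := hsector j j.2 hin
      apply hj
      apply Fin.ext
      have a1 : (j : ℝ) < l + 1 := by
        by_contra hcon; push Not at hcon; nlinarith
      have a2 : (l : ℝ) < j + 1 := by
        by_contra hcon; push Not at hcon; nlinarith
      have a1' : (j : ℕ) < l + 1 := by exact_mod_cast a1
      have a2' : l < (j : ℕ) + 1 := by exact_mod_cast a2
      simp only; omega
    · simp
  · rw [ind_neg hmem, eq_comm]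
    refine Finset.sum_eq_zero fun l _ => ind_neg fun hin => hmem ?_
    have hD : 0 < cr 0 (vx N l) (vx N (l + 1)) := by
      have : cr (vx N l) (vx N (l + 1)) X + cr (vx N (l + 1)) 0 X + cr 0 (vx N l) X =
        cr 0 (vx N l) (vx N (l + 1)) := by simp only [cr]; ring
      linarith [hin.1, hin.2.1, hin.2.2]
    exact mem_hull_of_cr hD hin.1.le hin.2.1.le hin.2.2.le (convex_convexHull _ _)
      (zero_mem_rN N hN) (vx_mem N l l.2) (vx_succ_mem N l hN l.2)

/-- Discrete Stokes formula: the sum over the boundaries of the tiles of a function exact on lines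
equals its sum over the boundary of the polygon, even when tiles do not meet edge to edge. The tiles
together with the negative of the fan of `fan_ind` form a family of total weight zero. -/
lemma tiling_sum {N m : ℕ} (hN : 3 ≤ N) (F : ℂ → ℂ → ℝ) (hF : LineExact F)
    (A B C : Fin m → ℂ) (hpos : ∀ t, 0 < cr (A t) (B t) (C t))
    (hU : ∀ X, X ∈ rN N ↔ ∃ t, X ∈ convexHull ℝ ({A t, B t, C t} : Set ℂ))
    (hD : ∀ t s X, Inside (A t) (B t) (C t) X → Inside (A s) (B s) (C s) X → t = s) :
    ∑ t, (F (A t) (B t) + F (B t) (C t) + F (C t) (A t)) =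
      ∑ l ∈ Finset.range N, F (vx N l) (vx N (l + 1)) := by
  have main := triangles_sum_zero (I := Fin m ⊕ Fin N) F hF
    (Sum.elim (fun _ => 1) (fun _ => -1)) (Sum.elim A (fun _ => 0))
    (Sum.elim B (fun l => vx N l)) (Sum.elim C (fun l => vx N (l + 1))) ?_ ?_
  · rw [Fintype.sum_sum_type] at main
    simp only [Sum.elim_inl, Sum.elim_inr, one_mul, neg_one_mul] at main
    rw [Finset.sum_neg_distrib, ← sub_eq_add_neg, sub_eq_zero] at main
    rw [main, Finset.sum_range]
    have htel : ∑ l : Fin N, (F 0 (vx N l) - F 0 (vx N (l + 1))) = 0 := by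
      rw [← Finset.sum_range (fun l => F 0 (vx N l) - F 0 (vx N (l + 1))),
        Finset.sum_range_sub', vx_self N hN, sub_self]
    rw [← sub_eq_zero, ← htel, ← Finset.sum_sub_distrib]
    refine Finset.sum_congr rfl fun l _ => ?_
    rw [hF.antisymm (vx N (l + 1)) 0]; ring
  · rintro (t | l)
    · exact hpos t
    · have e : cr 0 (vx N l) (vx N (l + 1)) = Real.sin (2 * (π / N)) := by
        have : 2 * (π / N) = 2 * π * ((l.1 + 1 : ℕ) : ℝ) / N - 2 * π * l.1 / N := by
          push_cast; ring
        rw [this, Real.sin_sub]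
        simp only [cr, vx, Complex.zero_re, Complex.zero_im]; ring
      simp only [Sum.elim_inr]
      rw [e]
      have hN3 : (3 : ℝ) ≤ N := by exact_mod_cast hN
      refine Real.sin_pos_of_pos_of_lt_pi (by positivity) ?_
      rw [← mul_div_assoc, div_lt_iff₀ (by linarith)]; nlinarith [Real.pi_pos]
  · intro X hX
    rw [Fintype.sum_sum_type]
    simp only [Sum.elim_inl, Sum.elim_inr, one_mul, neg_one_mul]
    rw [Finset.sum_neg_distrib, ← fan_ind hN (fun l hl => (hX (Sum.inr ⟨l, hl⟩)).1)
      (fun l hl => (hX (Sum.inr ⟨l, hl⟩)).2.1)]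
    by_cases hmem : X ∈ rN N
    · obtain ⟨t, ht⟩ := (hU X).1 hmem
      have hc := cr_nonneg_of_mem_hull (hpos t) ht
      have hg := hX (Sum.inl t)
      simp only [Sum.elim_inl] at hg
      have hin : Inside (A t) (B t) (C t) X := ⟨lt_of_le_of_ne hc.1 hg.1.symm,
        lt_of_le_of_ne hc.2.1 hg.2.1.symm, lt_of_le_of_ne hc.2.2 hg.2.2.symm⟩
      rw [ind_pos hmem, Finset.sum_eq_single t (fun s _ hs => ind_neg fun h => hs (hD s t X h hin))
        (by simp), ind_pos hin]
      ring
    · rw [ind_neg hmem, neg_zero, add_zero]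
      refine Finset.sum_eq_zero fun t _ => ind_neg fun hin => hmem ((hU X).2 ⟨t, ?_⟩)
      exact mem_hull_of_cr (hpos t) hin.1.le hin.2.1.le hin.2.2.le (convex_convexHull _ _)
        (subset_convexHull _ _ (by simp)) (subset_convexHull _ _ (by simp))
        (subset_convexHull _ _ (by simp))

/-! ### Signed angles -/

lemma im_conj_mul (O P Q : ℂ) : (conj (P - O) * (Q - O)).im = cr O P Q := by
  simp [cr]; ring

open Classical in
/-- The signed angle in `(-π, π)` under which the segment `PQ` is seen from `O`. It is set to be `0`
when the three points are collinear, even if `O` lies between `P` and `Q`: this makes it exact on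
lines through `O` as well. -/
def G (O P Q : ℂ) : ℝ :=
  if cr O P Q = 0 then 0 else Complex.arg (conj (P - O) * (Q - O))

lemma cr_self0 (A B : ℂ) : cr A A B = 0 := by simp [cr]

lemma G_zero {O P Q : ℂ} (h : cr O P Q = 0) : G O P Q = 0 := if_pos h
lemma G_ne {O P Q : ℂ} (h : cr O P Q ≠ 0) :
    G O P Q = Complex.arg (conj (P - O) * (Q - O)) := if_neg h

lemma arg_mem_of_im_pos {z : ℂ} (h : 0 < z.im) : 0 < z.arg ∧ z.arg < π := by
  constructor
  · refine lt_of_le_of_ne (Complex.arg_nonneg_iff.2 h.le) fun h0 => ?_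
    exact h.ne' (Complex.arg_eq_zero_iff.1 h0.symm).2
  · refine lt_of_le_of_ne (Complex.arg_le_pi z) fun h0 => ?_
    exact h.ne' (Complex.arg_eq_pi_iff.1 h0).2

/-- If `P` and `Q` lie in a common open half plane bounded by a line through `O` (which `w` turns into
the upper half plane), then the angle is a difference of arguments. -/
lemma G_half {O P Q w : ℂ} (hP : 0 < (w * (P - O)).im) (hQ : 0 < (w * (Q - O)).im) :
    G O P Q = Complex.arg (w * (Q - O)) - Complex.arg (w * (P - O)) := by
  have hw : w ≠ 0 := by rintro rfl; simp at hP
  have hwn : 0 < Complex.normSq w := Complex.normSq_pos.2 hw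
  obtain ⟨p0, p1⟩ := arg_mem_of_im_pos hP
  obtain ⟨q0, q1⟩ := arg_mem_of_im_pos hQ
  have hP0 : w * (P - O) ≠ 0 := by intro h; rw [h] at hP; simp at hP
  have hQ0 : w * (Q - O) ≠ 0 := by intro h; rw [h] at hQ; simp at hQ
  have e1 : conj (w * (P - O)) * (w * (Q - O)) =
      (Complex.normSq w : ℝ) * (conj (P - O) * (Q - O)) := by
    rw [Complex.normSq_eq_conj_mul_self, map_mul]; ring
  have e2 : Complex.arg (conj (w * (P - O))) = - Complex.arg (w * (P - O)) := by
    rw [Complex.arg_conj, if_neg p1.ne]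
  have e3 : Complex.arg (conj (P - O) * (Q - O)) =
      Complex.arg (w * (Q - O)) - Complex.arg (w * (P - O)) := by
    rw [← Complex.arg_real_mul _ hwn, ← e1, Complex.arg_mul ((map_ne_zero _).2 hP0) hQ0, e2]
    · ring
    · rw [e2]; constructor <;> linarith
  by_cases h0 : cr O P Q = 0
  · rw [G_zero h0, ← e3]
    rw [← im_conj_mul] at h0
    have := Complex.sin_arg (conj (P - O) * (Q - O))
    rw [h0, zero_div, Real.sin_eq_zero_iff_of_lt_of_lt (by linarith) (by linarith)] at this
    exact this.symm
  · rw [G_ne h0, e3]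

/-- The signed angle seen from `O` between the images under `Φ`, restricted to edges of good directions,
is exact on lines as soon as `Φ` maps lines of good directions into lines. -/
lemma G_lineExact (O : ℂ) (good : ℂ → Prop) (Φ : ℂ → ℂ)
    (hg : ∀ (d : ℂ) (r : ℝ), r ≠ 0 → (good (r * d) ↔ good d))
    (hΦ : ∀ P d, d ≠ 0 → good d → ∃ d' : ℂ, d' ≠ 0 ∧ ∀ s : ℝ, ∃ s' : ℝ, Φ (P + s * d) = Φ P + s' * d') :
    LineExact fun P Q => ind (good (Q - P)) * G O (Φ P) (Φ Q) := by
  have hself : ∀ P, G O P P = 0 := fun P => G_zero (cr_self_right _ _)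
  intro P d hd
  by_cases hgd : good d
  · obtain ⟨d', hd', hs⟩ := hΦ P d hd hgd
    have hn : 0 < Complex.normSq d' := Complex.normSq_pos.2 hd'
    have hval : ∀ s t : ℝ, ind (good (P + t * d - (P + s * d))) * G O (Φ (P + s * d)) (Φ (P + t * d))
        = G O (Φ (P + s * d)) (Φ (P + t * d)) := by
      intro s t
      by_cases hst : t - s = 0
      · rw [sub_eq_zero.1 hst, hself, mul_zero]
      · rw [ind_pos, one_mul]
        have : P + t * d - (P + s * d) = ((t - s : ℝ) : ℂ) * d := by push_cast; ring
        rw [this, hg _ _ hst]; exact hgd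
    set κ := (conj d' * (Φ P - O)).im with hκ
    have him : ∀ s : ℝ, (conj d' * (Φ (P + s * d) - O)).im = κ := by
      intro s
      obtain ⟨s', hs'⟩ := hs s
      rw [hs', hκ]
      simp; ring
    rcases lt_trichotomy κ 0 with h | h | h
    · refine ⟨fun s => Complex.arg (-conj d' * (Φ (P + s * d) - O)), fun s t => ?_⟩
      beta_reduce
      rw [hval]
      exact G_half (by rw [neg_mul, Complex.neg_im, him]; linarith)
        (by rw [neg_mul, Complex.neg_im, him]; linarith)
    · refine ⟨fun _ => 0, fun s t => ?_⟩
      beta_reduce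
      rw [hval, sub_zero]
      apply G_zero
      have h1 := him s
      have h2 := him t
      rw [h] at h1 h2
      have e : Complex.normSq d' * cr O (Φ (P + s * d)) (Φ (P + t * d)) =
          (conj d' * (Φ (P + s * d) - O)).re * (conj d' * (Φ (P + t * d) - O)).im -
          (conj d' * (Φ (P + s * d) - O)).im * (conj d' * (Φ (P + t * d) - O)).re := by
        simp only [cr, Complex.normSq_apply, Complex.mul_re, Complex.mul_im, Complex.conj_re,
          Complex.conj_im, Complex.sub_re, Complex.sub_im]
        ring
      rw [h1, h2, mul_zero, zero_mul, sub_zero] at e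
      exact (mul_eq_zero.1 e).resolve_left hn.ne'
    · refine ⟨fun s => Complex.arg (conj d' * (Φ (P + s * d) - O)), fun s t => ?_⟩
      beta_reduce
      rw [hval]
      exact G_half (by rw [him]; exact h) (by rw [him]; exact h)
  · refine ⟨fun _ => 0, fun s t => ?_⟩
    beta_reduce
    rw [sub_zero]
    by_cases hst : t - s = 0
    · rw [sub_eq_zero.1 hst, hself, mul_zero]
    · rw [ind_neg, zero_mul]
      have : P + t * d - (P + s * d) = ((t - s : ℝ) : ℂ) * d := by push_cast; ring
      rw [this, hg _ _ hst]; exact hgd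

/-- The total signed angle under which the boundary of the triangle `ABC` is seen from `O`. For a
positively oriented triangle it is `2π` inside, `π` on the open sides, the angle of the triangle at a
vertex, and `0` outside. -/
def H (O A B C : ℂ) : ℝ := G O A B + G O B C + G O C A

lemma G_cases (O P Q : ℂ) :
    (0 < cr O P Q ∧ G O P Q = Complex.arg (conj (P - O) * (Q - O)) ∧ 0 < G O P Q ∧ G O P Q < π) ∨
    (cr O P Q < 0 ∧ G O P Q = Complex.arg (conj (P - O) * (Q - O)) ∧ -π < G O P Q ∧ G O P Q < 0) ∨
    (cr O P Q = 0 ∧ G O P Q = 0 ∧ (Complex.arg (conj (P - O) * (Q - O)) = 0 ∨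
      Complex.arg (conj (P - O) * (Q - O)) = π)) := by
  rcases lt_trichotomy (cr O P Q) 0 with h | h | h
  · refine Or.inr (Or.inl ⟨h, G_ne h.ne, ?_⟩)
    rw [G_ne h.ne]
    refine ⟨Complex.neg_pi_lt_arg _, Complex.arg_neg_iff.2 ?_⟩
    rwa [im_conj_mul]
  · refine Or.inr (Or.inr ⟨h, G_zero h, ?_⟩)
    rw [← im_conj_mul] at h
    rcases le_or_gt 0 (conj (P - O) * (Q - O)).re with h' | h'
    · exact Or.inl (Complex.arg_eq_zero_iff.2 ⟨h', h⟩)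
    · exact Or.inr (Complex.arg_eq_pi_iff.2 ⟨h', h⟩)
  · refine Or.inl ⟨h, G_ne h.ne', ?_⟩
    rw [G_ne h.ne']
    exact arg_mem_of_im_pos (by rwa [im_conj_mul])

/-- The three arguments add up to a multiple of `2π`, while the signs of the three areas add up to
that of the triangle; so a negative total angle is impossible. -/
lemma H_nonneg (O : ℂ) {A B C : ℂ} (h : 0 < cr A B C) : 0 ≤ H O A B C := by
  have hD : cr O A B + cr O B C + cr O C A = cr A B C := by simp only [cr]; ring
  by_cases hA : A = O
  · subst hA
    rw [H, G_zero (cr_self0 A B), G_zero (cr_self_left A C), zero_add, add_zero]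
    rcases G_cases A B C with g | g | g <;> linarith [g.1, g.2.1]
  by_cases hB : B = O
  · subst hB
    rw [H, G_zero (cr_self_left B A), G_zero (cr_self0 B C), zero_add, zero_add]
    have h2 : 0 < cr B C A := by rw [cr_rot]; exact h
    rcases G_cases B C A with g | g | g <;> linarith [g.1, g.2.1]
  by_cases hC : C = O
  · subst hC
    rw [H, G_zero (cr_self_left C B), G_zero (cr_self0 C A), add_zero, add_zero]
    have h2 : 0 < cr C A B := by rw [cr_rot, cr_rot]; exact h
    rcases G_cases C A B with g | g | g <;> linarith [g.1, g.2.1]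
  obtain ⟨n, hn⟩ : ∃ n : ℤ, n * (2 * π) = Complex.arg (conj (A - O) * (B - O)) +
      Complex.arg (conj (B - O) * (C - O)) + Complex.arg (conj (C - O) * (A - O)) := by
    have hA' := sub_ne_zero.2 hA
    have hB' := sub_ne_zero.2 hB
    have hC' := sub_ne_zero.2 hC
    have cA := (map_ne_zero (starRingEnd ℂ)).2 hA'
    have cB := (map_ne_zero (starRingEnd ℂ)).2 hB'
    have cC := (map_ne_zero (starRingEnd ℂ)).2 hC'
    have : ((Complex.arg (conj (A - O) * (B - O)) + Complex.arg (conj (B - O) * (C - O)) +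
        Complex.arg (conj (C - O) * (A - O)) : ℝ) : Real.Angle) = 0 := by
      rw [Real.Angle.coe_add, Real.Angle.coe_add,
        ← Complex.arg_mul_coe_angle (mul_ne_zero cA hB') (mul_ne_zero cB hC'),
        ← Complex.arg_mul_coe_angle (mul_ne_zero (mul_ne_zero cA hB') (mul_ne_zero cB hC'))
          (mul_ne_zero cC hA')]
      have e : conj (A - O) * (B - O) * (conj (B - O) * (C - O)) * (conj (C - O) * (A - O)) =
          ((Complex.normSq (A - O) * Complex.normSq (B - O) * Complex.normSq (C - O) : ℝ) : ℂ) := by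
        push_cast
        rw [Complex.normSq_eq_conj_mul_self, Complex.normSq_eq_conj_mul_self,
          Complex.normSq_eq_conj_mul_self]
        ring
      rw [e, Complex.arg_ofReal_of_nonneg]
      · simp
      · exact mul_nonneg (mul_nonneg (Complex.normSq_nonneg _) (Complex.normSq_nonneg _))
          (Complex.normSq_nonneg _)
    obtain ⟨n, hn⟩ := Real.Angle.coe_eq_zero_iff.1 this
    exact ⟨n, by rw [← hn]; simp⟩
  have hpi := Real.pi_pos
  have hn' : (n : ℝ) * (2 * π) ≤ -(2 * π) ∨ (n : ℝ) * (2 * π) = 0 ∨ 2 * π ≤ (n : ℝ) * (2 * π) := by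
    rcases lt_trichotomy n 0 with h | h | h
    · left
      have : (n : ℝ) ≤ -1 := by exact_mod_cast (by omega : n ≤ -1)
      nlinarith
    · right; left; simp [h]
    · right; right
      have : (1 : ℝ) ≤ n := by exact_mod_cast h
      nlinarith
  rw [hn] at hn'
  rw [H]
  by_contra hcon
  push Not at hcon
  rcases G_cases O A B with ⟨s1, g1, b1, c1⟩ | ⟨s1, g1, b1, c1⟩ | ⟨s1, g1, b1 | b1⟩ <;>
  rcases G_cases O B C with ⟨s2, g2, b2, c2⟩ | ⟨s2, g2, b2, c2⟩ | ⟨s2, g2, b2 | b2⟩ <;>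
  rcases G_cases O C A with ⟨s3, g3, b3, c3⟩ | ⟨s3, g3, b3, c3⟩ | ⟨s3, g3, b3 | b3⟩ <;>
  first
  | linarith
  | (rcases hn' with hn' | hn' | hn' <;> linarith)

lemma H_rot (O A B C : ℂ) : H O B C A = H O A B C := by simp only [H]; ring

lemma H_vertex {A B C : ℂ} (h : 0 < cr A B C) :
    H A A B C = Complex.arg (conj (B - A) * (C - A)) := by
  rw [H, G_zero (cr_self0 A B), G_zero (cr_self_left A C), zero_add, add_zero, G_ne h.ne']

lemma H_half {O A B C w : ℂ} (hA : 0 < (w * (A - O)).im) (hB : 0 < (w * (B - O)).im)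
    (hC : 0 < (w * (C - O)).im) : H O A B C = 0 := by
  rw [H, G_half hA hB, G_half hB hC, G_half hC hA]; ring

/-! ### Semilinear maps attached to cyclotomic automorphisms -/

section

open IntermediateField

/-- A simple extension `F⟮x⟯` maps into itself by sending `x` to a conjugate lying in `F⟮x⟯`. -/
lemma exists_adjoin_hom {F E : Type*} [Field F] [Field E] [Algebra F E] {x y : E}
    (hint : IsIntegral F x) (hy : y ∈ F⟮x⟯) (h : Polynomial.aeval y (minpoly F x) = 0) :
    ∃ σ : F⟮x⟯ →+* F⟮x⟯, ((σ (AdjoinSimple.gen F x) : F⟮x⟯) : E) = y := by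
  have hroot : Polynomial.aeval (⟨y, hy⟩ : F⟮x⟯) (minpoly F (AdjoinSimple.gen F x)) = 0 := by
    apply Subtype.val_injective
    rw [minpoly_gen]
    have h2 := Polynomial.aeval_algHom_apply (F⟮x⟯).val (⟨y, hy⟩ : F⟮x⟯) (minpoly F x)
    exact h2.symm.trans h
  have hg := (adjoin.powerBasis hint).lift_gen (⟨y, hy⟩ : F⟮x⟯) hroot
  rw [adjoin.powerBasis_gen] at hg
  exact ⟨((adjoin.powerBasis hint).lift (⟨y, hy⟩ : F⟮x⟯) hroot).toRingHom, congrArg Subtype.val hg⟩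

/-- The automorphism `ξ ↦ ξ ^ j` of the cyclotomic field. -/
lemma exists_sigma {M : ℕ} (hM : 0 < M) {ξ : ℂ} (hξ : IsPrimitiveRoot ξ M) (j : ℤ)
    (hj : Int.gcd j M = 1) :
    ∃ σ : ℚ⟮ξ⟯ →+* ℚ⟮ξ⟯, ((σ (AdjoinSimple.gen ℚ ξ) : ℚ⟮ξ⟯) : ℂ) = ξ ^ j := by
  have hprim : IsPrimitiveRoot (ξ ^ j) M := hξ.zpow_of_gcd_eq_one j hj
  refine exists_adjoin_hom (hξ.isIntegral hM).tower_top
    (zpow_mem (mem_adjoin_simple_self ℚ ξ) j) ?_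
  rw [← Polynomial.cyclotomic_eq_minpoly_rat hξ hM, Polynomial.cyclotomic_eq_minpoly_rat hprim hM]
  exact minpoly.aeval ℚ (ξ ^ j)

lemma ringHom_ext_gen {ξ : ℂ} (f g : ℚ⟮ξ⟯ →+* ℂ)
    (h : f (AdjoinSimple.gen ℚ ξ) = g (AdjoinSimple.gen ℚ ξ)) (x : ℚ⟮ξ⟯) : f x = g x := by
  obtain ⟨x, hx⟩ := x
  induction hx using adjoin_induction with
  | mem x hx =>
    obtain rfl : x = ξ := hx
    exact h
  | algebraMap q =>
    exact (map_ratCast f q).trans (map_ratCast g q).symm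
  | add x y hx hy h1 h2 =>
    exact (map_add f ⟨x, hx⟩ ⟨y, hy⟩).trans ((congrArg₂ _ h1 h2).trans (map_add g ⟨x, hx⟩ ⟨y, hy⟩).symm)
  | inv x hx h1 =>
    exact (map_inv₀ f ⟨x, hx⟩).trans ((congrArg _ h1).trans (map_inv₀ g ⟨x, hx⟩).symm)
  | mul x y hx hy h1 h2 =>
    exact (map_mul f ⟨x, hx⟩ ⟨y, hy⟩).trans ((congrArg₂ _ h1 h2).trans (map_mul g ⟨x, hx⟩ ⟨y, hy⟩).symm)

/-- The automorphism `ξ ↦ ξ ^ j` commutes with complex conjugation, hence preserves real elements. -/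
lemma exists_sigma_conj {M : ℕ} (hM : 0 < M) {ξ : ℂ} (hξ : IsPrimitiveRoot ξ M) (j : ℤ)
    (hj : Int.gcd j M = 1) :
    ∃ σ : ℚ⟮ξ⟯ →+* ℚ⟮ξ⟯, ((σ (AdjoinSimple.gen ℚ ξ) : ℚ⟮ξ⟯) : ℂ) = ξ ^ j ∧
      ∀ x : ℚ⟮ξ⟯, conj (x : ℂ) = x → conj ((σ x : ℚ⟮ξ⟯) : ℂ) = (σ x : ℚ⟮ξ⟯) := by
  obtain ⟨σ, hσ⟩ := exists_sigma hM hξ j hj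
  obtain ⟨τ, hτ⟩ := exists_sigma hM hξ (-1) (by simp)
  refine ⟨σ, hσ, ?_⟩
  have hconj : conj ξ = ξ ^ (-1 : ℤ) := by
    rw [zpow_neg_one, Complex.inv_def, Complex.normSq_eq_norm_sq, hξ.norm'_eq_one hM.ne']
    simp
  let ι : ℚ⟮ξ⟯ →+* ℂ := ℚ⟮ξ⟯.toSubfield.subtype
  have h1 := ringHom_ext_gen (ι.comp τ) ((starRingEnd ℂ).comp ι) (by
    change ((τ (AdjoinSimple.gen ℚ ξ) : ℚ⟮ξ⟯) : ℂ) = conj ξ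
    rw [hτ, hconj])
  have h2 := ringHom_ext_gen (ι.comp (σ.comp τ)) ((starRingEnd ℂ).comp (ι.comp σ)) (by
    change ((σ (τ (AdjoinSimple.gen ℚ ξ)) : ℚ⟮ξ⟯) : ℂ) =
      conj ((σ (AdjoinSimple.gen ℚ ξ) : ℚ⟮ξ⟯) : ℂ)
    have : τ (AdjoinSimple.gen ℚ ξ) = (AdjoinSimple.gen ℚ ξ)⁻¹ := by
      apply Subtype.val_injective
      rw [hτ]; simp
    rw [this, map_inv₀, hσ, map_zpow₀, hconj]
    push_cast
    rw [hσ, ← zpow_mul, ← zpow_neg]; congr 1; ring)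
  intro x hx
  have e1 := h1 x
  have e2 := h2 x
  have : τ x = x := by
    apply Subtype.val_injective
    change ((τ x : ℚ⟮ξ⟯) : ℂ) = conj (x : ℂ) at e1
    rw [e1, hx]
  change ((σ (τ x) : ℚ⟮ξ⟯) : ℂ) = conj ((σ x : ℚ⟮ξ⟯) : ℂ) at e2
  rw [← e2, this]

/-- An endomorphism `σ` of a subfield `K` of `ℝ` extends to a `σ`-semilinear injection of `ℝ`, by
applying `σ` to the coordinates in a `K`-basis of `ℝ`. -/
lemma exists_semilinear (K : Subfield ℝ) (σ : K →+* K) :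
    ∃ φ : ℝ →+ ℝ, Function.Injective φ ∧ ∀ (κ : K) (t : ℝ), φ (κ * t) = σ κ * φ t := by
  let b := Module.Basis.ofVectorSpace K ℝ
  let f : (Module.Basis.ofVectorSpaceIndex K ℝ →₀ K) →+ (Module.Basis.ofVectorSpaceIndex K ℝ →₀ K) :=
    Finsupp.mapRange.addMonoidHom σ.toAddMonoidHom
  have hf : Function.Injective f := Finsupp.mapRange_injective _ (map_zero σ) σ.injective
  refine ⟨(b.repr.symm : _ ≃+ ℝ).toAddMonoidHom.comp (f.comp (b.repr : ℝ ≃+ _).toAddMonoidHom), ?_, ?_⟩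
  · exact b.repr.symm.injective.comp (hf.comp b.repr.injective)
  · intro κ t
    change b.repr.symm (f (b.repr (κ * t))) = σ κ * b.repr.symm (f (b.repr t))
    have h1 : ((κ : ℝ) * t) = κ • t := rfl
    have h2 : (σ κ : ℝ) * b.repr.symm (f (b.repr t)) = σ κ • b.repr.symm (f (b.repr t)) := rfl
    rw [h1, h2, ← map_smul b.repr.symm]
    congr 1
    have : (b.repr (κ • t)) = κ • b.repr t := map_smul _ _ _
    rw [this]
    refine DFunLike.ext _ _ fun i => ?_
    change σ ((κ • b.repr t) i) = (σ κ • (f (b.repr t))) i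
    rw [Finsupp.smul_apply, Finsupp.smul_apply, smul_eq_mul, smul_eq_mul, map_mul]
    rfl

/-- There is an additive injection of the plane into itself which preserves the real line and turns
multiplication by `ξ` into multiplication by `ξ ^ k`. With `K` the real subfield of `ℚ(ξ)`, so that
`ℚ(ξ) = K(i)`, take `x + i y ↦ φ x + σ(i) φ y`, where `φ` is semilinear over `σ : ξ ↦ ξ ^ k`. -/
lemma exists_phi {q : ℕ} (hq : 0 < q) {ξ : ℂ} (hξ : IsPrimitiveRoot ξ (4 * q)) (hI : ξ ^ q = Complex.I)
    (k : ℤ) (hk : Int.gcd k (4 * q) = 1) :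
    ∃ Φ : ℂ →+ ℂ, Function.Injective Φ ∧ (∀ t : ℝ, ∃ s : ℝ, Φ t = s) ∧
      ∀ z, Φ (ξ * z) = ξ ^ k * Φ z := by
  obtain ⟨σ, hσ, hσc⟩ := exists_sigma_conj (by omega : 0 < 4 * q) hξ k (by exact_mod_cast hk)
  have hre : ∀ z : ℂ, conj z = z ↔ ((z.re : ℝ) : ℂ) = z := fun z =>
    ⟨fun h => Complex.conj_eq_iff_re.1 h, fun h => Complex.conj_eq_iff_re.2 h⟩
  let K : Subfield ℝ := (ℚ⟮ξ⟯.toSubfield).comap Complex.ofRealHom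
  have hKmem : ∀ x : ℝ, x ∈ K ↔ (x : ℂ) ∈ ℚ⟮ξ⟯ := fun x => Iff.rfl
  let up : K →+* ℚ⟮ξ⟯ :=
    { toFun := fun x => ⟨((x : ℝ) : ℂ), x.2⟩
      map_one' := by ext; simp
      map_mul' := fun x y => by ext; simp
      map_zero' := by ext; simp
      map_add' := fun x y => by ext; simp }
  have hup : ∀ x : K, ((up x : ℚ⟮ξ⟯) : ℂ) = ((x : ℝ) : ℂ) := fun x => rfl
  have hreal : ∀ x : K, (((σ (up x) : ℚ⟮ξ⟯) : ℂ).re : ℂ) = ((σ (up x) : ℚ⟮ξ⟯) : ℂ) := by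
    intro x
    apply (hre _).1
    apply hσc
    rw [hup]; simp
  have hcoe : Function.Injective (fun x : K => ((x : ℝ) : ℂ)) :=
    fun x y h => Subtype.ext (Complex.ofReal_injective h)
  let s0 : K → K := fun x => ⟨((σ (up x) : ℚ⟮ξ⟯) : ℂ).re, by
      rw [hKmem, hreal]; exact (σ (up x)).2⟩
  have hs0 : ∀ x, ((s0 x : ℝ) : ℂ) = ((σ (up x) : ℚ⟮ξ⟯) : ℂ) := fun x => hreal x
  let σ0 : K →+* K :=
    { toFun := s0
      map_one' := hcoe (by simp [hs0])
      map_mul' := fun x y => hcoe (by simp [hs0])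
      map_zero' := hcoe (by simp [hs0])
      map_add' := fun x y => hcoe (by simp [hs0]) }
  have hσ0 : ∀ x, ((σ0 x : ℝ) : ℂ) = ((σ (up x) : ℚ⟮ξ⟯) : ℂ) := hs0
  obtain ⟨φ, hφi, hφ⟩ := exists_semilinear K σ0
  have hξK : ξ ∈ ℚ⟮ξ⟯ := mem_adjoin_simple_self ℚ ξ
  have hIK : Complex.I ∈ ℚ⟮ξ⟯ := hI ▸ pow_mem hξK q
  have hcjK : conj ξ ∈ ℚ⟮ξ⟯ := by
    have : conj ξ = ξ⁻¹ := by
      rw [Complex.inv_def, Complex.normSq_eq_norm_sq, hξ.norm'_eq_one (by omega)]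
      simp
    rw [this]; exact inv_mem hξK
  have h2K : (2 : ℂ) ∈ ℚ⟮ξ⟯ := by exact_mod_cast IntermediateField.natCast_mem ℚ⟮ξ⟯ 2
  have hcK : ξ.re ∈ K := by
    rw [hKmem, Complex.re_eq_add_conj]
    exact div_mem (add_mem hξK hcjK) h2K
  have hsK : ξ.im ∈ K := by
    rw [hKmem, Complex.im_eq_sub_conj]
    exact div_mem (sub_mem hξK hcjK) (mul_mem h2K hIK)
  set J : ℂ := ((σ ⟨Complex.I, hIK⟩ : ℚ⟮ξ⟯) : ℂ) with hJ
  have hJJ : J * J = -1 := by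
    have : (⟨Complex.I, hIK⟩ : ℚ⟮ξ⟯) * ⟨Complex.I, hIK⟩ = -1 := by
      ext; simp
    rw [hJ, ← MulMemClass.coe_mul, ← map_mul, this, map_neg, map_one]; simp
  have hJ2 : J = Complex.I ∨ J = -Complex.I := by
    apply mul_self_eq_mul_self_iff.1
    rw [hJJ, Complex.I_mul_I]
  have hξk : ξ ^ k = ((σ0 ⟨_, hcK⟩ : ℝ) : ℂ) + J * ((σ0 ⟨_, hsK⟩ : ℝ) : ℂ) := by
    rw [hσ0, hσ0, hJ, ← hσ, ← MulMemClass.coe_mul, ← AddMemClass.coe_add, ← map_mul, ← map_add]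
    congr 2
    ext
    rw [AddMemClass.coe_add, MulMemClass.coe_mul, hup, hup, mul_comm]
    simp
  let Φ : ℂ →+ ℂ := 
    { toFun := fun z => (φ z.re : ℂ) + J * (φ z.im : ℂ)
      map_zero' := by simp
      map_add' := fun x y => by simp; ring }
  have hΦ : ∀ z, Φ z = (φ z.re : ℂ) + J * (φ z.im : ℂ) := fun z => rfl
  refine ⟨Φ, ?_, ?_, ?_⟩
  · rw [injective_iff_map_eq_zero]
    intro z hz
    rw [hΦ] at hz
    have h0 : φ z.re = 0 ∧ φ z.im = 0 := by
      have r := congrArg Complex.re hz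
      have i := congrArg Complex.im hz
      rcases hJ2 with h | h <;> rw [h] at r i <;> simp at r i <;> exact ⟨r, i⟩
    rw [map_eq_zero_iff _ hφi, map_eq_zero_iff _ hφi] at h0
    exact Complex.ext h0.1 h0.2
  · intro t
    exact ⟨φ t, by rw [hΦ]; simp⟩
  · intro z
    have a1 := hφ ⟨_, hcK⟩ z.re
    have a2 := hφ ⟨_, hcK⟩ z.im
    have a3 := hφ ⟨_, hsK⟩ z.re
    have a4 := hφ ⟨_, hsK⟩ z.im
    simp only at a1 a2 a3 a4
    rw [hΦ, hΦ, hξk, Complex.mul_re, Complex.mul_im, map_sub, map_add, a1, a2, a3, a4]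
    push_cast
    linear_combination ((σ0 ⟨_, hsK⟩ : ℝ) : ℂ) * (φ z.im : ℂ) * (-hJJ)

end

/-! ### Shapes of triangles and their images -/

/-- The point of the unit circle with argument `π x`. -/
def ee (x : ℝ) : ℂ := Complex.exp ((π * x : ℝ) * Complex.I)

lemma ee_add (x y : ℝ) : ee (x + y) = ee x * ee y := by
  rw [ee, ee, ee, ← Complex.exp_add]; congr 1; push_cast; ring

lemma ee_ne (x : ℝ) : ee x ≠ 0 := Complex.exp_ne_zero _

lemma ee_eq (x : ℝ) : ee x = Real.cos (π * x) + Real.sin (π * x) * Complex.I := by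
  rw [ee, Complex.exp_mul_I, Complex.ofReal_cos, Complex.ofReal_sin]

lemma ee_re (x : ℝ) : (ee x).re = Real.cos (π * x) := by
  rw [ee_eq]; simp [-Complex.ofReal_cos, -Complex.ofReal_sin]

lemma ee_im (x : ℝ) : (ee x).im = Real.sin (π * x) := by
  rw [ee_eq]; simp [-Complex.ofReal_cos, -Complex.ofReal_sin]

lemma ee_zero : ee 0 = 1 := by simp [ee]

lemma ee_half : ee (1 / 2) = Complex.I := by
  rw [ee_eq]; simp [-Complex.ofReal_cos, -Complex.ofReal_sin, ← div_eq_mul_inv]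

lemma ee_two_mul_int (m : ℤ) : ee (2 * m) = 1 := by
  rw [ee, Complex.exp_eq_one_iff]; exact ⟨m, by push_cast; ring⟩

lemma ee_int (m : ℤ) : ee m = (-1) ^ m := by
  have h : ee 1 = -1 := by simp [ee]
  rw [← h, ee, ee, ← Complex.exp_int_mul]; congr 1; push_cast; ring

lemma ee_neg (x : ℝ) : ee (-x) = (ee x)⁻¹ := by
  apply eq_inv_of_mul_eq_one_left; rw [← ee_add]; simp [ee_zero]

lemma ee_sub_neg (x : ℝ) : ee x - ee (-x) = 2 * Complex.I * (Real.sin (π * x) : ℝ) := by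
  rw [ee_eq, ee_eq, mul_neg, Real.cos_neg, Real.sin_neg]; push_cast; ring

lemma sin_pos_fract {x : ℝ} (h0 : 0 < x) (h1 : x < 1) : 0 < Real.sin (π * x) :=
  Real.sin_pos_of_pos_of_lt_pi (by positivity) (by nlinarith [Real.pi_pos])

lemma ee_arg {r x : ℝ} (hr : 0 < r) (h0 : 0 ≤ x) (h1 : x ≤ 1) : Complex.arg (r * ee x) = π * x := by
  rw [Complex.arg_real_mul _ hr, ee_eq, Complex.ofReal_cos, Complex.ofReal_sin,
    Complex.arg_cos_add_sin_mul_I]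
  constructor <;> nlinarith [Real.pi_pos]

/-- The law of sines as a complex equation. When `πx, πy, πz` are the angles of a triangle and
`A ≠ B`, it says that `ABC` is positively oriented with angle `πx` at `A`, `πy` at `B` and `πz`
at `C`. It also makes sense for other real numbers `x, y, z`. -/
def Shape (x y z : ℝ) (A B C : ℂ) : Prop :=
  (Real.sin (π * z) : ℂ) * (C - A) = (Real.sin (π * y) : ℂ) * ee x * (B - A)

lemma Shape.rot {x y z : ℝ} {A B C : ℂ} (hs : x + y + z = 1) (h : Shape x y z A B C) :
    Shape y z x B C A := by
  have hz : Real.sin (π * z) = Real.sin (π * x) * Real.cos (π * y)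
      + Real.cos (π * x) * Real.sin (π * y) := by
    rw [← Real.sin_add, ← Real.sin_pi_sub]; congr 1
    rw [show z = 1 - x - y by linarith]; ring
  have hI := Complex.I_mul_I
  have hcs : ((Real.cos (π * y) : ℝ) : ℂ) ^ 2 = 1 - ((Real.sin (π * y) : ℝ) : ℂ) ^ 2 := by
    have := Real.cos_sq' (π * y)
    exact_mod_cast this
  have hz' : ((Real.sin (π * z) : ℝ) : ℂ) = (Real.sin (π * x) : ℝ) * (Real.cos (π * y) : ℝ)
      + (Real.cos (π * x) : ℝ) * (Real.sin (π * y) : ℝ) := by exact_mod_cast hz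
  rw [Shape, ee_eq] at *
  linear_combination (-((Real.cos (π * y) : ℝ) + (Real.sin (π * y) : ℝ) * Complex.I)) * h
    + ((Real.cos (π * y) : ℝ) + (Real.sin (π * y) : ℝ) * Complex.I) * (B - A) * hz'
    + (B - A) * (Real.sin (π * x) : ℝ) * hcs
    - (B - A) * (Real.sin (π * x) : ℝ) * (Real.sin (π * y) : ℝ) ^ 2 * hI

lemma Shape.cr_eq {x y z : ℝ} {A B C : ℂ} (h : Shape x y z A B C) :
    Real.sin (π * z) * cr A B C =
      Real.sin (π * y) * Real.sin (π * x) * Complex.normSq (B - A) := by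
  rw [← im_conj_mul]
  have h2 : ((Real.sin (π * z) : ℝ) : ℂ) * (conj (B - A) * (C - A)) =
      ((Real.sin (π * y) * Complex.normSq (B - A) : ℝ) : ℂ) * ee x := by
    rw [Shape] at h
    push_cast at *
    rw [Complex.normSq_eq_conj_mul_self]
    linear_combination (conj (B - A)) * h
  have h3 := congrArg Complex.im h2
  rw [Complex.im_ofReal_mul, Complex.im_ofReal_mul, ee_im] at h3
  linarith

/-- The shape relation determines the orientation and the angle at the first vertex. -/
lemma Shape.arg_eq {x y z : ℝ} {A B C : ℂ} (hx0 : 0 < x) (hx1 : x < 1)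
    (hy : 0 < Real.sin (π * y))
    (hz : 0 < Real.sin (π * z)) (h : Shape x y z A B C) (hAB : A ≠ B) :
    0 < cr A B C ∧ Complex.arg (conj (B - A) * (C - A)) = π * x := by
  have hn : 0 < Complex.normSq (B - A) := Complex.normSq_pos.2 (sub_ne_zero.2 hAB.symm)
  constructor
  · have := h.cr_eq
    have h2 := mul_pos (mul_pos hy (sin_pos_fract hx0 hx1)) hn
    rw [← this] at h2
    exact pos_of_mul_pos_right h2 hz.le
  · have h2 : ((Real.sin (π * z) : ℝ) : ℂ) * (conj (B - A) * (C - A)) =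
        ((Real.sin (π * y) * Complex.normSq (B - A) : ℝ) : ℂ) * ee x := by
      rw [Shape] at h
      push_cast at *
      rw [Complex.normSq_eq_conj_mul_self]
      linear_combination (conj (B - A)) * h
    rw [← Complex.arg_real_mul _ hz, h2, ee_arg (mul_pos hy hn) hx0.le hx1.le]

lemma arg_of_angle {A B C : ℂ} {x : ℝ} (h : 0 < cr A B C) (ha : ∠ B A C = π * x) :
    ∃ r : ℝ, conj (B - A) * (C - A) = r * ee x := by
  have him : 0 < (conj (B - A) * (C - A)).im := by rwa [im_conj_mul]
  have hB : B - A ≠ 0 := by intro h0; rw [h0] at him; simp at him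
  have hC : C - A ≠ 0 := by intro h0; rw [h0] at him; simp at him
  refine ⟨‖conj (B - A) * (C - A)‖, ?_⟩
  rw [EuclideanGeometry.angle, vsub_eq_sub, vsub_eq_sub, InnerProductGeometry.angle_comm,
    Complex.angle_eq_abs_arg hC hB] at ha
  have e : (C - A) / (B - A) = ((Complex.normSq (B - A))⁻¹ : ℝ) * (conj (B - A) * (C - A)) := by
    rw [div_eq_mul_inv, Complex.inv_def]; push_cast; ring
  rw [e, Complex.arg_real_mul _ (inv_pos.2 (Complex.normSq_pos.2 hB)),
    abs_of_pos (arg_mem_of_im_pos him).1] at ha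
  rw [ee, ← ha, Complex.norm_mul_exp_arg_mul_I]

/-- Conversely, a positively oriented triangle with given angles satisfies the law of sines. -/
lemma shape_of_angles {A B C : ℂ} {x y z : ℝ} (hs : x + y + z = 1) (h : 0 < cr A B C)
    (hx : ∠ B A C = π * x) (hy : ∠ C B A = π * y) : Shape x y z A B C := by
  obtain ⟨r, hr⟩ := arg_of_angle h hx
  obtain ⟨s, hs'⟩ := arg_of_angle (by rwa [cr_rot]) hy
  have hz : Real.sin (π * z) = Real.sin (π * x) * Real.cos (π * y)
      + Real.cos (π * x) * Real.sin (π * y) := by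
    rw [← Real.sin_add, ← Real.sin_pi_sub]; congr 1
    rw [show z = 1 - x - y by linarith]; ring
  have hB : conj (B - A) ≠ 0 := by
    intro h0; rw [← im_conj_mul, h0] at h; simp at h
  have key : (r : ℂ) * ee x + s * conj (ee y) = conj (B - A) * (B - A) := by
    have := congrArg conj hs'
    rw [map_mul, map_mul, Complex.conj_conj, Complex.conj_ofReal] at this
    rw [← hr, ← this, map_sub, map_sub]; ring
  have k1 := congrArg Complex.re key
  have k2 := congrArg Complex.im key
  have k3 : conj (B - A) * (B - A) = (Complex.normSq (B - A) : ℝ) := by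
    rw [Complex.normSq_eq_conj_mul_self]
  rw [k3] at k1 k2
  rw [Complex.add_re, Complex.re_ofReal_mul, Complex.re_ofReal_mul, Complex.conj_re, ee_re, ee_re,
    Complex.ofReal_re] at k1
  rw [Complex.add_im, Complex.im_ofReal_mul, Complex.im_ofReal_mul, Complex.conj_im, ee_im, ee_im,
    Complex.ofReal_im] at k2
  apply mul_left_cancel₀ hB
  have e : Real.sin (π * z) * r = Real.sin (π * y) * Complex.normSq (B - A) := by
    rw [hz, ← k1]; linear_combination Real.cos (π * y) * k2
  have e' : ((Real.sin (π * z) : ℝ) : ℂ) * r = ((Real.sin (π * y) : ℝ) : ℂ) * (Complex.normSq (B - A) : ℝ) := by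
    exact_mod_cast e
  rw [← k3] at e'
  linear_combination ((Real.sin (π * z) : ℝ) : ℂ) * hr + ee x * e'

lemma sin_fract (t : ℝ) : Real.sin (π * t) = (-1) ^ ⌊t⌋ * Real.sin (π * Int.fract t) := by
  rw [← Real.sin_add_int_mul_pi]; congr 1
  conv_lhs => rw [← Int.fract_add_floor t]
  ring

lemma ee_fract (t : ℝ) : ee t = (-1) ^ ⌊t⌋ * ee (Int.fract t) := by
  conv_lhs => rw [← Int.floor_add_fract t, ee_add, ee_int]

/-- `Φ` turns each rotation through a multiple of `π/(2q)` into its `k`-th power. -/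
def Compat (Φ : ℂ →+ ℂ) (k : ℤ) (q : ℕ) : Prop :=
  ∀ (u : ℤ) (z : ℂ), Φ (ee (u / (2 * q)) * z) = ee (k * (u / (2 * q))) * Φ z

/-- A compatible map multiplies the angles in the shape relation by `k`. The sines are, up to the
common factor `2i`, differences of rotations. -/
lemma Shape.map {Φ : ℂ →+ ℂ} {k : ℤ} {q : ℕ} (hΦ : Compat Φ k q) {x y z : ℝ} {u v w : ℤ}
    (hx : x = u / (2 * q)) (hy : y = v / (2 * q)) (hz : z = w / (2 * q)) {A B C : ℂ}
    (h : Shape x y z A B C) : Shape (k * x) (k * y) (k * z) (Φ A) (Φ B) (Φ C) := by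
  have neg : ∀ (u : ℤ) (z : ℂ), Φ (ee (-(u / (2 * q) : ℝ)) * z) = ee (-(k * (u / (2 * q) : ℝ))) * Φ z := by
    intro u z
    have := hΦ (-u) z
    push_cast at this
    rw [neg_div] at this
    rw [this]; congr 2; ring
  have h2 : (ee z - ee (-z)) * (C - A) = (ee y - ee (-y)) * (ee x * (B - A)) := by
    rw [Shape] at h
    rw [ee_sub_neg, ee_sub_neg]
    linear_combination 2 * Complex.I * h
  have h3 := congrArg Φ h2
  rw [sub_mul, sub_mul, map_sub, map_sub, hz, hy, hx, hΦ, hΦ, hΦ, neg, neg, hΦ, ← hx, ← hy, ← hz,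
    ← sub_mul, ← sub_mul, ee_sub_neg, ee_sub_neg, map_sub, map_sub] at h3
  rw [Shape]
  have h2I : (2 * Complex.I) ≠ 0 := by simp
  apply mul_left_cancel₀ h2I
  linear_combination h3

/-! ### Angles seen from a vertex of the polygon -/

lemma ne_of_cr_pos {A B C : ℂ} (h : 0 < cr A B C) : A ≠ B ∧ B ≠ C ∧ C ≠ A := by
  refine ⟨?_, ?_, ?_⟩ <;> rintro rfl
  · rw [cr_self0] at h; exact h.false
  · rw [cr_self_right] at h; exact h.false
  · rw [cr_self_left] at h; exact h.false

/-- Seen from one of its vertices, a triangle subtends its angle there. -/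
lemma H_corner {x y z : ℝ} {A B C O : ℂ} (hx : 0 < x) (hy : 0 < y) (hz : 0 < z) (hs : x + y + z = 1)
    (h : Shape x y z A B C) (hAB : A ≠ B) (hO : A = O ∨ B = O ∨ C = O) :
    H O A B C = π * (ind (A = O) * x + ind (B = O) * y + ind (C = O) * z) := by
  have sx := sin_pos_fract hx (by linarith)
  have sy := sin_pos_fract hy (by linarith)
  have sz := sin_pos_fract hz (by linarith)
  obtain ⟨hcr, h1⟩ := h.arg_eq hx (by linarith) sy sz hAB
  obtain ⟨n1, n2, n3⟩ := ne_of_cr_pos hcr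
  have h' := h.rot hs
  have h'' := h'.rot (by linarith)
  obtain ⟨hcr', h2⟩ := h'.arg_eq hy (by linarith) sz sx n2
  obtain ⟨hcr'', h3⟩ := h''.arg_eq hz (by linarith) sx sy n3
  rcases hO with rfl | rfl | rfl
  · rw [H_vertex hcr, h1, ind_pos rfl, ind_neg n1.symm, ind_neg n3]; ring
  · rw [← H_rot, H_vertex hcr', h2, ind_pos rfl, ind_neg n1, ind_neg n2.symm]; ring
  · rw [← H_rot, ← H_rot, H_vertex hcr'', h3, ind_pos rfl, ind_neg n3.symm, ind_neg n2]; ring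

/-- Seen from any point, a positively oriented triangle subtends at least its angle at this point. -/
lemma H_ge {x y z : ℝ} {A B C : ℂ} (O : ℂ) (hx : 0 < x) (hy : 0 < y) (hz : 0 < z) (hs : x + y + z = 1)
    (h : Shape x y z A B C) (hAB : A ≠ B) :
    π * (ind (A = O) * x + ind (B = O) * y + ind (C = O) * z) ≤ H O A B C := by
  by_cases hO : A = O ∨ B = O ∨ C = O
  · exact (H_corner hx hy hz hs h hAB hO).ge
  · push Not at hO
    rw [ind_neg hO.1, ind_neg hO.2.1, ind_neg hO.2.2]
    simp only [zero_mul, add_zero, mul_zero]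
    exact H_nonneg O (h.arg_eq hx (by linarith) (sin_pos_fract hy (by linarith))
      (sin_pos_fract hz (by linarith)) hAB).1

lemma norm_le_one_of_mem_rN {N : ℕ} {X : ℂ} (hX : X ∈ rN N) : ‖X‖ ≤ 1 := by
  have : rN N ⊆ Metric.closedBall 0 1 := by
    apply convexHull_min _ (convex_closedBall _ _)
    rintro _ ⟨j, rfl⟩
    simp only [mem_closedBall_zero_iff]
    rw [vx_eq_exp, Complex.norm_exp_ofReal_mul_I]
  exact mem_closedBall_zero_iff.1 (this hX)

/-- Seen from a vertex of the polygon, all other points of the polygon lie in an open half plane. -/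
lemma half_vx {N l : ℕ} {X : ℂ} (hX : X ∈ rN N) (hne : X ≠ vx N l) :
    0 < (-Complex.I * conj (vx N l) * (X - vx N l)).im := by
  have h1 : Complex.normSq X ≤ 1 := by
    have := norm_le_one_of_mem_rN hX
    rw [Complex.normSq_eq_norm_sq]
    nlinarith [norm_nonneg X]
  have h2 : Complex.normSq (vx N l) = 1 := by
    rw [Complex.normSq_eq_norm_sq, vx_eq_exp, Complex.norm_exp_ofReal_mul_I]; norm_num
  have h3 : 0 < Complex.normSq (X - vx N l) := Complex.normSq_pos.2 (sub_ne_zero.2 hne)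
  have h4 : (-Complex.I * conj (vx N l) * (X - vx N l)).im
      = Complex.normSq (vx N l) - (X.re * (vx N l).re + X.im * (vx N l).im) := by
    rw [Complex.normSq_apply]
    simp; ring
  rw [h4]
  rw [Complex.normSq_apply] at h1 h2 h3 ⊢
  simp only [Complex.sub_re, Complex.sub_im] at h3
  nlinarith

/-- Seen from a vertex of the polygon, a triangle contained in the polygon subtends exactly its
angle at this vertex (zero if it is not one of the corners of the triangle). -/
lemma H_eq_of_mem {N l : ℕ} {x y z : ℝ} {A B C : ℂ} (hx : 0 < x) (hy : 0 < y) (hz : 0 < z)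
    (hs : x + y + z = 1) (h : Shape x y z A B C) (hAB : A ≠ B) (hA : A ∈ rN N) (hB : B ∈ rN N)
    (hC : C ∈ rN N) : H (vx N l) A B C = π * (ind (A = vx N l) * x + ind (B = vx N l) * y
      + ind (C = vx N l) * z) := by
  by_cases hO : A = vx N l ∨ B = vx N l ∨ C = vx N l
  · exact H_corner hx hy hz hs h hAB hO
  · push Not at hO
    rw [ind_neg hO.1, ind_neg hO.2.1, ind_neg hO.2.2,
      H_half (half_vx hA hO.1) (half_vx hB hO.2.1) (half_vx hC hO.2.2)]
    ring

lemma vx_eq_ee (N l : ℕ) : vx N l = ee (2 * l / N) := by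
  rw [vx_eq_exp, ee]; congr 3; ring

lemma G_scale (c O P Q : ℂ) (hc : c ≠ 0) : G (c * O) (c * P) (c * Q) = G O P Q := by
  have hn : 0 < Complex.normSq c := Complex.normSq_pos.2 hc
  by_cases h : cr O P Q = 0
  · rw [G_zero h, G_zero]; rw [cr_mul, h, mul_zero]
  · rw [G_ne h, G_ne, ← Complex.arg_real_mul (conj (P - O) * (Q - O)) hn]
    · congr 1
      rw [Complex.normSq_eq_conj_mul_self, ← mul_sub, ← mul_sub, map_mul]; ring
    · rw [cr_mul]; exact mul_ne_zero hn.ne' h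

/-- The chord from the point with argument `πθ` of the unit circle to the one with argument
`π(θ + 2φ)` makes an angle `π{φ}` with the tangent at the first point. -/
lemma ee_chord {θ φ : ℝ} (h0 : 0 < Int.fract φ) :
    0 < (-Complex.I * ee (-θ) * (ee (θ + 2 * φ) - ee θ)).im ∧
    Complex.arg (-Complex.I * ee (-θ) * (ee (θ + 2 * φ) - ee θ)) = π * Int.fract φ := by
  have hs := sin_pos_fract h0 (Int.fract_lt_one φ)
  have e1 : ee (2 * φ) = ee (Int.fract φ) * ee (Int.fract φ) := by
    rw [← ee_add]
    conv_lhs => rw [← Int.floor_add_fract φ]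
    rw [mul_add, ee_add, ee_two_mul_int, one_mul]; congr 1; ring
  have e2 : ee (Int.fract φ) * ee (-Int.fract φ) = 1 := by
    rw [← ee_add]; simp [ee_zero]
  have e3 : ee (-θ) * ee θ = 1 := by rw [← ee_add]; simp [ee_zero]
  have e : -Complex.I * ee (-θ) * (ee (θ + 2 * φ) - ee θ) =
      ((2 * Real.sin (π * Int.fract φ) : ℝ) : ℂ) * ee (Int.fract φ) := by
    have h := ee_sub_neg (Int.fract φ)
    rw [ee_add, e1]
    push_cast at h ⊢
    linear_combination (-Complex.I * (ee (Int.fract φ) * ee (Int.fract φ) - 1)) * e3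
      - Complex.I * ee (Int.fract φ) * h
      - Complex.I * e2 - 2 * Complex.sin (π * Int.fract φ) * ee (Int.fract φ) * Complex.I_mul_I
  rw [e]
  constructor
  · rw [Complex.im_ofReal_mul, ee_im]; positivity
  · exact ee_arg (by positivity) h0.le (Int.fract_lt_one φ).le

/-- The angle under which an edge of the image of the polygon is seen from the image of a vertex, by the
inscribed angle theorem; the two indicators correct for the edges ending at this vertex. -/
lemma boundary_term {N : ℕ} (hN : 3 ≤ N) {k : ℤ} (hk : Int.gcd k N = 1) (d : ℤ) (θ : ℝ) :
    G (ee θ) (ee (θ + 2 * (k * d / N))) (ee (θ + 2 * (k * (d + 1) / N))) =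
      π * (Int.fract (k * (d + 1) / N : ℝ) - Int.fract (k * d / N : ℝ)
        - ind ((N : ℤ) ∣ d) * Int.fract (k / N : ℝ)
        + ind ((N : ℤ) ∣ d + 1) * (1 - Int.fract (k / N : ℝ))) := by
  have hN0 : (N : ℝ) ≠ 0 := by positivity
  have hfr : ∀ e : ℤ, ¬ (N : ℤ) ∣ e → 0 < Int.fract (k * e / N : ℝ) := by
    intro e he
    refine lt_of_le_of_ne (Int.fract_nonneg _) fun h => he ?_
    obtain ⟨m, hm⟩ := Int.fract_eq_zero_iff.1 h.symm
    rw [eq_div_iff hN0] at hm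
    have : (m * N : ℤ) = k * e := by exact_mod_cast hm
    have h2 : (N : ℤ) ∣ k * e := ⟨m, by rw [← this]; ring⟩
    exact (Int.isCoprime_iff_gcd_eq_one.2 (by rwa [Int.gcd_comm])).dvd_of_dvd_mul_left h2
  have hint : ∀ m : ℤ, (k * ((N * m : ℤ) : ℝ) / N : ℝ) = ((k * m : ℤ) : ℝ) := by
    intro m; push_cast; field_simp
  have hself : ∀ m : ℤ, ee (θ + 2 * ((m : ℤ) : ℝ)) = ee θ := by
    intro m; rw [ee_add, ee_two_mul_int, mul_one]
  by_cases h1 : (N : ℤ) ∣ d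
  · have h2 : ¬ (N : ℤ) ∣ d + 1 := by
      intro h2
      have := (Int.dvd_iff_dvd_of_dvd_add h2).1 h1
      have := Int.le_of_dvd one_pos this
      omega
    rw [ind_pos h1, ind_neg h2]
    obtain ⟨m, rfl⟩ := h1
    have e : (k * (((N * m : ℤ) : ℝ) + 1) / N : ℝ) = ((k * m : ℤ) : ℝ) + k / N := by
      push_cast; field_simp
    rw [hint, hself, G_zero (cr_self0 _ _), e, Int.fract_intCast, Int.fract_intCast_add]
    ring
  · rw [ind_neg h1]
    obtain ⟨a1, a2⟩ := ee_chord (θ := θ) (hfr d h1)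
    by_cases h2 : (N : ℤ) ∣ d + 1
    · rw [ind_pos h2]
      obtain ⟨m, hm⟩ := h2
      have hd : (d : ℝ) + 1 = ((N * m : ℤ) : ℝ) := by exact_mod_cast hm
      have e : (k * d / N : ℝ) = ((k * m : ℤ) : ℝ) + -(k / N) := by
        rw [← hint m, ← hd]; field_simp; ring
      have hk1 : 0 < Int.fract (k / N : ℝ) := by
        have := hfr 1 (fun h => by have := Int.le_of_dvd one_pos h; omega)
        simpa using this
      rw [hd, hint, hself, G_zero (cr_self_left _ _), e, Int.fract_intCast, Int.fract_intCast_add,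
        Int.fract_neg hk1.ne']
      ring
    · rw [ind_neg h2]
      have h3 := hfr (d + 1) h2
      push_cast at h3
      obtain ⟨b1, b2⟩ := ee_chord (θ := θ) h3
      rw [G_half a1 b1, a2, b2]; ring

/-- The total signed angle, seen from a vertex, of the polygon whose vertices are the
`k`-th powers of the `N`-th roots of unity. -/
lemma boundary_sum {N : ℕ} (hN : 3 ≤ N) {k : ℤ} (hk : Int.gcd k N = 1) {j : ℕ} (hj : j < N) :
    ∑ l ∈ Finset.range N, G (ee (2 * (k * j / N))) (ee (2 * (k * l / N)))
      (ee (2 * (k * ((l + 1 : ℕ) : ℝ) / N))) = π * (1 - 2 * Int.fract (k / N : ℝ)) := by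
  have hN0 : (N : ℝ) ≠ 0 := by positivity
  set f : ℕ → ℝ := fun l => Int.fract (k * (((l : ℤ) - (j : ℤ) : ℤ) : ℝ) / N : ℝ) with hf
  set g : ℕ → ℝ := fun l => ind ((N : ℤ) ∣ (l : ℤ) - j) with hg
  set κ := Int.fract (k / N : ℝ)
  have hterm : ∀ l : ℕ, G (ee (2 * (k * j / N))) (ee (2 * (k * l / N)))
      (ee (2 * (k * ((l + 1 : ℕ) : ℝ) / N))) = π * (f (l + 1) - f l - g l * κ + g (l + 1) * (1 - κ)) := by
    intro l
    have := boundary_term hN hk ((l : ℤ) - j) (2 * (k * j / N))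
    have e1 : 2 * (k * j / N : ℝ) + 2 * (k * (((l : ℤ) - (j : ℤ) : ℤ) : ℝ) / N) = 2 * (k * l / N) := by
      push_cast; field_simp; ring
    have e2 : 2 * (k * j / N : ℝ) + 2 * (k * ((((l : ℤ) - (j : ℤ) : ℤ) : ℝ) + 1) / N)
        = 2 * (k * ((l + 1 : ℕ) : ℝ) / N) := by
      push_cast; field_simp; ring
    have e3 : (((l : ℤ) - (j : ℤ) : ℤ) : ℝ) + 1 = ((((l + 1 : ℕ) : ℤ) - (j : ℤ) : ℤ) : ℝ) := by
      push_cast; ring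
    have e4 : (l : ℤ) - j + 1 = ((l + 1 : ℕ) : ℤ) - j := by push_cast; ring
    rw [e1, e2, e3, e4] at this
    exact this
  rw [Finset.sum_congr rfl fun l _ => hterm l, ← Finset.mul_sum]
  congr 1
  have hfN : f N = f 0 := by
    simp only [hf]
    have : (k * (((N : ℕ) : ℤ) - (j : ℤ) : ℤ) / N : ℝ) = k + (k * ((((0 : ℕ) : ℤ) - (j : ℤ) : ℤ) : ℝ) / N) := by
      push_cast; field_simp; ring
    rw [this, Int.fract_intCast_add]
  have hgN : g N = g 0 := by
    simp only [hg]
    apply ind_congr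
    push_cast
    rw [sub_eq_add_neg, zero_sub]
    exact (Int.dvd_add_right (dvd_refl _))
  have s1 : ∑ l ∈ Finset.range N, (f (l + 1) - f l) = 0 := by
    rw [Finset.sum_range_sub, hfN, sub_self]
  have s2 : ∑ l ∈ Finset.range N, g l = 1 := by
    rw [Finset.sum_eq_single_of_mem j (Finset.mem_range.2 hj)]
    · simp only [hg]; exact ind_pos (by simp)
    · intro l hl hlj
      simp only [hg]
      apply ind_neg
      intro h
      have hl := Finset.mem_range.1 hl
      have := Int.eq_zero_of_abs_lt_dvd h (by rw [abs_lt]; omega)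
      omega
  have s3 : ∑ l ∈ Finset.range N, g (l + 1) = 1 := by
    have := Finset.sum_range_sub g N
    rw [Finset.sum_sub_distrib, hgN, sub_self, s2] at this
    linarith
  rw [Finset.sum_add_distrib, Finset.sum_sub_distrib, ← Finset.sum_mul, ← Finset.sum_mul, s1, s2, s3]
  ring

/-! ### Good directions and images of tiles -/

lemma G_swap (O P Q : ℂ) : G O Q P = -G O P Q := by
  by_cases h : cr O P Q = 0
  · rw [G_zero h, G_zero (by rw [cr_swap, h, neg_zero]), neg_zero]
  · rw [G_ne h, G_ne (by rw [cr_swap]; exact neg_ne_zero.2 h)]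
    have e : conj (Q - O) * (P - O) = conj (conj (P - O) * (Q - O)) := by
      rw [map_mul, Complex.conj_conj, mul_comm]
    rw [e, Complex.arg_conj, if_neg]
    intro h'
    rw [← im_conj_mul] at h
    exact h (Complex.arg_eq_pi_iff.1 h').2

lemma H_nonpos (O : ℂ) {A B C : ℂ} (h : cr A B C < 0) : H O A B C ≤ 0 := by
  have h1 : 0 < cr A C B := by rw [cr_swap]; linarith
  have h2 := H_nonneg O h1
  rw [H, G_swap O B C, G_swap O A B, G_swap O C A] at h2
  rw [H]; linarith

/-- The map of `exists_phi` for the root of unity `ξ = exp(πi/(2q))`. -/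
lemma exists_compat {q : ℕ} (hq : 0 < q) (k : ℤ) (hk : Int.gcd k (4 * q) = 1) :
    ∃ Φ : ℂ →+ ℂ, Function.Injective Φ ∧ (∀ t : ℝ, ∃ s : ℝ, Φ t = s) ∧ Compat Φ k q := by
  have hq0 : (q : ℝ) ≠ 0 := by positivity
  set ξ : ℂ := ee (1 / (2 * q)) with hξ
  have hpow : ∀ u : ℤ, ξ ^ u = ee (u / (2 * q)) := by
    intro u
    rw [hξ, ee, ee, ← Complex.exp_int_mul]; congr 1; push_cast; ring
  have hprim : IsPrimitiveRoot ξ (4 * q) := by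
    have h := Complex.isPrimitiveRoot_exp (4 * q) (by omega)
    have e : ξ = Complex.exp (2 * π * Complex.I / ((4 * q : ℕ) : ℂ)) := by
      rw [hξ, ee]; congr 1; push_cast
      have : (q : ℂ) ≠ 0 := by exact_mod_cast hq.ne'
      field_simp; norm_num
    rw [e]; exact h
  have hI : ξ ^ q = Complex.I := by
    have := hpow q
    rw [zpow_natCast] at this
    rw [this, ← ee_half]; congr 1; push_cast; field_simp
  obtain ⟨Φ, h1, h2, h3⟩ := exists_phi hq hprim hI k hk
  have hξ0 : ξ ≠ 0 := ee_ne _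
  have hnat : ∀ (m : ℕ) (z : ℂ), Φ (ξ ^ m * z) = (ξ ^ k) ^ m * Φ z := by
    intro m
    induction m with
    | zero => simp
    | succ m ih => intro z; rw [pow_succ', mul_assoc, h3, ih, pow_succ']; ring
  have hint : ∀ (u : ℤ) (z : ℂ), Φ (ξ ^ u * z) = (ξ ^ k) ^ u * Φ z := by
    intro u z
    obtain ⟨m, rfl | rfl⟩ := u.eq_nat_or_neg
    · simpa using hnat m z
    · have h := hnat m (ξ ^ (-(m : ℤ)) * z)
      rw [← mul_assoc, ← zpow_natCast, ← zpow_add₀ hξ0, add_neg_cancel, zpow_zero, one_mul] at h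
      rw [h, ← mul_assoc, ← zpow_natCast, ← zpow_add₀ (zpow_ne_zero _ hξ0), neg_add_cancel, zpow_zero,
        one_mul]
  refine ⟨Φ, h1, h2, fun u z => ?_⟩
  have := hint u z
  rw [← zpow_mul, hpow, hpow] at this
  rw [this]; congr 2; push_cast; ring

/-- The directions making an angle with the real axis that is a multiple of `π/(2q)`. -/
def Good (q : ℕ) (d : ℂ) : Prop := ∃ (u : ℤ) (t : ℝ), d = t * ee (u / (2 * q))

lemma good_mul {q : ℕ} (v : ℤ) {ρ : ℝ} {d : ℂ} (h : Good q d) :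
    Good q (ρ * ee (v / (2 * q)) * d) := by
  obtain ⟨u, t, rfl⟩ := h
  refine ⟨v + u, ρ * t, ?_⟩
  push_cast
  rw [add_div, ee_add]; ring

lemma good_mul_iff {q : ℕ} (v : ℤ) {ρ : ℝ} (hρ : ρ ≠ 0) {d : ℂ} :
    Good q (ρ * ee (v / (2 * q)) * d) ↔ Good q d := by
  refine ⟨fun h => ?_, good_mul v⟩
  have h2 := good_mul (-v) (ρ := ρ⁻¹) h
  have e : ((ρ⁻¹ : ℝ) : ℂ) * ee (((-v : ℤ) : ℝ) / (2 * q)) * (ρ * ee (v / (2 * q)) * d) = d := by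
    have : (ρ : ℂ) ≠ 0 := by exact_mod_cast hρ
    have h3 := ee_ne (v / (2 * q))
    push_cast
    rw [neg_div, ee_neg]; field_simp
  rwa [e] at h2

lemma good_smul_iff {q : ℕ} (d : ℂ) (r : ℝ) (hr : r ≠ 0) : Good q (r * d) ↔ Good q d := by
  have := good_mul_iff (q := q) 0 hr (d := d)
  simpa [ee_zero] using this

/-- In a triangle whose angle at `A` is a multiple of `π/(2q)`, the sides through `A` are both good or
both not good. -/
lemma Shape.good {q : ℕ} {x y z : ℝ} {u : ℤ} (hx : x = u / (2 * q))
    (hx0 : 0 < x) (hy0 : 0 < y) (hz0 : 0 < z)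
    (hs : x + y + z = 1) {A B C : ℂ} (h : Shape x y z A B C) :
    (Good q (C - A) ↔ Good q (B - A)) := by
  have sy := sin_pos_fract hy0 (by linarith)
  have sz := sin_pos_fract hz0 (by linarith)
  have e : C - A = ((Real.sin (π * y) / Real.sin (π * z) : ℝ) : ℂ) * ee (u / (2 * q)) * (B - A) := by
    have : ((Real.sin (π * z) : ℝ) : ℂ) ≠ 0 := by exact_mod_cast sz.ne'
    rw [Shape, hx] at h
    rw [Complex.ofReal_div]
    field_simp
    linear_combination h
  rw [e]
  exact good_mul_iff u (div_ne_zero sy.ne' sz.ne')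

/-- The sides of the `N`-gon are good. -/
lemma good_edge {n N : ℕ} (hn : 0 < n) (hN : 0 < N) (l : ℕ) :
    Good (n * N) (vx N (l + 1) - vx N l) := by
  refine ⟨2 * n * (2 * l + 1) + n * N, 2 * Real.sin (π * (1 / N)), ?_⟩
  have hn0 : (n : ℝ) ≠ 0 := by positivity
  have hN0 : (N : ℝ) ≠ 0 := by positivity
  have e : (((2 * n * (2 * l + 1) + n * N : ℤ) : ℝ) / (2 * ((n * N : ℕ) : ℝ))) =
      (2 * l + 1) / N + 1 / 2 := by
    push_cast; field_simp
  have h := ee_sub_neg (1 / (N : ℝ))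
  rw [e, vx_eq_ee, vx_eq_ee, ee_add, ee_half]
  have e1 : 2 * ((l + 1 : ℕ) : ℝ) / N = (2 * l + 1) / N + 1 / N := by push_cast; ring
  have e2 : 2 * (l : ℝ) / N = (2 * l + 1) / N + -(1 / N) := by ring
  rw [e1, e2, ee_add, ee_add]
  push_cast at h ⊢
  linear_combination ee ((2 * l + 1) / N) * h

lemma lineExact_all (V : ℂ) : LineExact fun P Q => G V P Q := by
  have := G_lineExact V (fun _ => True) id (fun _ _ _ => Iff.rfl)
    (fun _ d hd _ => ⟨d, hd, fun s => ⟨s, rfl⟩⟩)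
  simpa [ind_pos] using this

lemma lineExact_good (q : ℕ) (V : ℂ) : LineExact fun P Q => ind (Good q (Q - P)) * G V P Q :=
  G_lineExact V (Good q) id good_smul_iff (fun _ d hd _ => ⟨d, hd, fun s => ⟨s, rfl⟩⟩)

/-- A compatible map sends lines of good directions into lines; nothing is claimed about other lines,
which is why only the good edges are counted. -/
lemma lineExact_map {q : ℕ} {k : ℤ} {Φ : ℂ →+ ℂ} (hr : ∀ t : ℝ, ∃ s : ℝ, Φ t = s)
    (hΦ : Compat Φ k q) (O : ℂ) :
    LineExact fun P Q => ind (Good q (Q - P)) * G O (Φ P) (Φ Q) := by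
  refine G_lineExact O (Good q) Φ good_smul_iff ?_
  rintro P _ - ⟨u, t, rfl⟩
  refine ⟨ee (k * (u / (2 * q))), ee_ne _, fun s => ?_⟩
  obtain ⟨s', hs'⟩ := hr (s * t)
  refine ⟨s', ?_⟩
  rw [map_add]
  congr 1
  rw [← hs', show (s : ℂ) * (t * ee (u / (2 * q))) = ee (u / (2 * q)) * ((s * t : ℝ) : ℂ) by
    push_cast; ring, hΦ, mul_comm]

lemma ind_int (p : Prop) : ∃ e : ℤ, ind p = e := by
  by_cases h : p
  · exact ⟨1, by rw [ind_pos h]; simp⟩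
  · exact ⟨0, by rw [ind_neg h]; simp⟩

lemma ind_nonneg (p : Prop) : 0 ≤ ind p := by
  by_cases h : p
  · rw [ind_pos h]; norm_num
  · rw [ind_neg h]

/-- The image of a tile: either the fractional parts add up to `1` and the tile is mapped to a
positively oriented triangle with these angles, or it is mapped to a negatively oriented one. -/
lemma image_tile {k : ℤ} (hk : Odd k) {x y z : ℝ} {A B C : ℂ} (hs : x + y + z = 1)
    (hx : 0 < Int.fract (k * x)) (hy : 0 < Int.fract (k * y)) (hz : 0 < Int.fract (k * z))
    (h : Shape (k * x) (k * y) (k * z) A B C) (hAB : A ≠ B) :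
    (Int.fract (k * x) + Int.fract (k * y) + Int.fract (k * z) = 1 ∧
      Shape (Int.fract (k * x)) (Int.fract (k * y)) (Int.fract (k * z)) A B C) ∨
    (Int.fract (k * x) + Int.fract (k * y) + Int.fract (k * z) = 2 ∧ cr A B C < 0) := by
  have lx := Int.fract_lt_one (k * x)
  have ly := Int.fract_lt_one (k * y)
  have lz := Int.fract_lt_one (k * z)
  have fx := Int.self_sub_floor (k * x)
  have fy := Int.self_sub_floor (k * y)
  have fz := Int.self_sub_floor (k * z)
  have hsum : Int.fract (k * x) + Int.fract (k * y) + Int.fract (k * z) =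
      ((k - (⌊k * x⌋ + ⌊k * y⌋ + ⌊k * z⌋) : ℤ) : ℝ) := by
    push_cast
    have : (k : ℝ) * x + k * y + k * z = k := by rw [← mul_add, ← mul_add, hs, mul_one]
    linarith
  have sq : ∀ m : ℤ, ((-1 : ℝ) ^ m) * (-1) ^ m = 1 := by
    intro m; rw [← zpow_add₀ (by norm_num)]; exact Even.neg_one_zpow ⟨m, rfl⟩
  have sqc : ∀ m : ℤ, ((-1 : ℂ) ^ m) * (-1) ^ m = 1 := by
    intro m; rw [← zpow_add₀ (by norm_num)]; exact Even.neg_one_zpow ⟨m, rfl⟩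
  set S := k - (⌊k * x⌋ + ⌊k * y⌋ + ⌊k * z⌋) with hS
  have hS12 : S = 1 ∨ S = 2 := by
    have h1 : (0 : ℝ) < S := by rw [← hsum]; positivity
    have h2 : (S : ℝ) < 3 := by rw [← hsum]; linarith
    have h1' : 0 < S := by exact_mod_cast h1
    have h2' : S < 3 := by exact_mod_cast h2
    omega
  obtain ⟨k', hk'⟩ := hk
  rcases hS12 with h1 | h2
  · left
    refine ⟨by rw [hsum, h1]; norm_num, ?_⟩
    have ev : Even (⌊k * x⌋ + ⌊k * y⌋ + ⌊k * z⌋) := ⟨k', by omega⟩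
    have e1 := Even.neg_one_zpow (α := ℂ) ev
    rw [zpow_add₀ (by norm_num), zpow_add₀ (by norm_num)] at e1
    rw [Shape, sin_fract (k * z), sin_fract (k * y), ee_fract] at h
    rw [Shape]
    push_cast at h ⊢
    have sz := sqc ⌊k * z⌋
    linear_combination (-1) ^ ⌊k * z⌋ * h
      - Complex.sin (π * Int.fract (k * z)) * (C - A) * sz
      + Complex.sin (π * Int.fract (k * y)) * ee (Int.fract (k * x)) * (B - A) * e1
  · right
    refine ⟨by rw [hsum, h2]; norm_num, ?_⟩
    have od : Odd (⌊k * x⌋ + ⌊k * y⌋ + ⌊k * z⌋) := ⟨k' - 1, by omega⟩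
    have e1 := Odd.neg_one_zpow (α := ℝ) od
    rw [zpow_add₀ (by norm_num), zpow_add₀ (by norm_num)] at e1
    have hc := h.cr_eq
    rw [sin_fract (k * z), sin_fract (k * y), sin_fract (k * x)] at hc
    have sx := sin_pos_fract hx lx
    have sy := sin_pos_fract hy ly
    have sz := sin_pos_fract hz lz
    have hn : 0 < Complex.normSq (B - A) := Complex.normSq_pos.2 (sub_ne_zero.2 hAB.symm)
    have sqz := sq ⌊k * z⌋
    have key : Real.sin (π * Int.fract (k * z)) * cr A B C =
        -(Real.sin (π * Int.fract (k * y)) * Real.sin (π * Int.fract (k * x)) *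
          Complex.normSq (B - A)) := by
      linear_combination (-1) ^ ⌊k * z⌋ * hc
        - Real.sin (π * Int.fract (k * z)) * cr A B C * sqz
        + Real.sin (π * Int.fract (k * y)) * Real.sin (π * Int.fract (k * x)) *
          Complex.normSq (B - A) * e1
    have hp : 0 < Real.sin (π * Int.fract (k * y)) * Real.sin (π * Int.fract (k * x)) *
          Complex.normSq (B - A) := by positivity
    by_contra hcon
    push Not at hcon
    have := mul_nonneg sz.le hcon
    linarith

/-! ### Positively oriented tilings -/

/-- The statement for a tiling by positively oriented triangles `A t, B t, C t` with angles
`πa/n, πb/n, πc/n`, where `b = b t` and `c = c t` may be interchanged from tile to tile, and for odd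
`k`. -/
lemma core {N n m : ℕ} (hN : 3 ≤ N) {a : ℕ} {b c : Fin m → ℕ} (ha : 0 < a) (hb : ∀ t, 0 < b t)
    (hc : ∀ t, 0 < c t) (habc : ∀ t, a + b t + c t = n) {k : ℤ} (hkodd : Odd k)
    (hk : Int.gcd k (n * N) = 1) (hkN : Int.fract (k / N : ℝ) < 1 / 2)
    {A B C : Fin m → ℂ} (hpos : ∀ t, 0 < cr (A t) (B t) (C t))
    (hU : ∀ X, X ∈ rN N ↔ ∃ t, X ∈ convexHull ℝ ({A t, B t, C t} : Set ℂ))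
    (hbc : ∀ t s, (b t = b s ∧ c t = c s) ∨ (b t = c s ∧ c t = b s))
    (hD : ∀ t s X, Inside (A t) (B t) (C t) X → Inside (A s) (B s) (C s) X → t = s)
    (hsh : ∀ t, Shape (a / n) (b t / n) (c t / n) (A t) (B t) (C t)) (j : ℕ) (hj : j < N) :
    (∃ t, Int.fract (k * (a / n) : ℝ) + Int.fract (k * (b t / n) : ℝ)
      + Int.fract (k * (c t / n) : ℝ) = 1) ∧
    ∑ t, (ind (A t = vx N j) * Int.fract (k * (a / n) : ℝ)
      + ind (B t = vx N j) * Int.fract (k * (b t / n) : ℝ)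
      + ind (C t = vx N j) * Int.fract (k * (c t / n) : ℝ)) = 1 - 2 * Int.fract (k / N : ℝ) := by
  have hN0 : (0 : ℝ) < N := by positivity
  have hm : Nonempty (Fin m) := by
    obtain ⟨t, -⟩ := (hU _).1 (vx_mem N j hj)
    exact ⟨t⟩
  have hn : 0 < n := by
    obtain ⟨t⟩ := hm
    have := habc t; omega
  have hn0 : (0 : ℝ) < n := by positivity
  have hpi := Real.pi_pos
  set V := vx N j with hV
  have hkn : Int.gcd k n = 1 := Nat.dvd_one.1 (hk ▸ Int.gcd_dvd_gcd_mul_right_right k n N)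
  have hkN' : Int.gcd k N = 1 := Nat.dvd_one.1 (hk ▸ Int.gcd_dvd_gcd_mul_left_right k N n)
  have hk4 : Int.gcd k (4 * (n * N : ℕ)) = 1 := by
    rw [← Int.isCoprime_iff_gcd_eq_one] at hk ⊢
    have h2 : IsCoprime k 2 := by
      obtain ⟨r, hr⟩ := hkodd
      exact ⟨1, -r, by rw [hr]; ring⟩
    have h4 : IsCoprime k 4 := by
      have := h2.mul_right h2
      norm_num at this; exact this
    push_cast
    exact h4.mul_right hk
  -- a multiple of `n` and of `N`, so that both the tile angles and the polygon are covered
  obtain ⟨Φ, hinj, hreal, hΦ⟩ := exists_compat (q := n * N) (by positivity) k hk4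
  -- the angles of the tiles and their images
  set x : ℝ := a / n with hx
  set y : Fin m → ℝ := fun t => b t / n with hy
  set z : Fin m → ℝ := fun t => c t / n with hz
  have hxyz : ∀ t, x + y t + z t = 1 := by
    intro t
    simp only [hx, hy, hz]
    rw [← add_div, ← add_div, div_eq_one_iff_eq hn0.ne']
    exact_mod_cast habc t
  have hx0 : 0 < x := by positivity
  have hy0 : ∀ t, 0 < y t := fun t => div_pos (by exact_mod_cast hb t) hn0
  have hz0 : ∀ t, 0 < z t := fun t => div_pos (by exact_mod_cast hc t) hn0
  have hrat : ∀ e : ℕ, (e : ℝ) / n = ((2 * N * e : ℤ) : ℝ) / (2 * ((n * N : ℕ) : ℝ)) := by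
    intro e; push_cast; field_simp
  have hfr : ∀ e : ℕ, 0 < e → e < n → 0 < Int.fract (k * (e / n) : ℝ) := by
    intro e h0 h1
    refine lt_of_le_of_ne (Int.fract_nonneg _) fun h => ?_
    obtain ⟨r, hr⟩ := Int.fract_eq_zero_iff.1 h.symm
    rw [← mul_div_assoc, eq_div_iff hn0.ne'] at hr
    have : (r * n : ℤ) = k * e := by exact_mod_cast hr
    have h2 : (n : ℤ) ∣ k * e := ⟨r, by rw [← this]; ring⟩
    have h3 := (Int.isCoprime_iff_gcd_eq_one.2 (by rwa [Int.gcd_comm])).dvd_of_dvd_mul_left h2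
    have := Int.le_of_dvd (by exact_mod_cast h0) h3
    omega
  have hfx : 0 < Int.fract (k * x) := by
    obtain ⟨t⟩ := hm
    exact hfr a ha (by have := habc t; have := hb t; omega)
  have hfy : ∀ t, 0 < Int.fract (k * y t) := fun t =>
    hfr _ (hb t) (by have := habc t; omega)
  have hfz : ∀ t, 0 < Int.fract (k * z t) := fun t =>
    hfr _ (hc t) (by have := habc t; omega)
  have hAB : ∀ t, A t ≠ B t := fun t => (ne_of_cr_pos (hpos t)).1
  have himg : ∀ t, Shape (k * x) (k * y t) (k * z t) (Φ (A t)) (Φ (B t)) (Φ (C t)) := fun t =>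
    (hsh t).map hΦ (hrat a) (hrat (b t)) (hrat (c t))
  have hcase := fun t => image_tile hkodd (hxyz t) hfx (hfy t) (hfz t) (himg t)
    (fun h => hAB t (hinj h))
  -- `π * W t` is the angle of the tile at `V`, and `X t` the quantity to be summed; `γ t` tells
  -- whether the sides of the tile have good directions
  set W : Fin m → ℝ := fun t => ind (A t = V) * x + ind (B t = V) * y t + ind (C t = V) * z t with hW
  set X : Fin m → ℝ := fun t => ind (A t = V) * Int.fract (k * x)
      + ind (B t = V) * Int.fract (k * y t) + ind (C t = V) * Int.fract (k * z t) with hX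
  set γ : Fin m → ℝ := fun t => ind (Good (n * N) (B t - A t)) with hγ
  have hγ1 : ∀ t, γ t = 0 ∨ γ t = 1 := by
    intro t
    by_cases h : Good (n * N) (B t - A t)
    · exact Or.inr (ind_pos h)
    · exact Or.inl (ind_neg h)
  have hW0 : ∀ t, 0 ≤ W t := fun t => by
    have := ind_nonneg (A t = V); have := ind_nonneg (B t = V); have := ind_nonneg (C t = V)
    have := (hy0 t).le; have := (hz0 t).le
    simp only [hW]; positivity
  have hX0 : ∀ t, 0 ≤ X t := fun t => by
    have := ind_nonneg (A t = V); have := ind_nonneg (B t = V); have := ind_nonneg (C t = V)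
    have := (hfy t).le; have := (hfz t).le
    simp only [hX]; positivity
  have hWX : ∀ t, W t = 0 ↔ X t = 0 := by
    intro t
    have iff : ∀ u v w : ℝ, 0 < u → 0 < v → 0 < w →
        (ind (A t = V) * u + ind (B t = V) * v + ind (C t = V) * w = 0 ↔
          ind (A t = V) = 0 ∧ ind (B t = V) = 0 ∧ ind (C t = V) = 0) := by
      intro u v w hu hv hw
      have i1 := ind_nonneg (A t = V)
      have i2 := ind_nonneg (B t = V)
      have i3 := ind_nonneg (C t = V)
      constructor
      · intro h
        have p1 := mul_nonneg i1 hu.le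
        have p2 := mul_nonneg i2 hv.le
        have p3 := mul_nonneg i3 hw.le
        exact ⟨(mul_eq_zero.1 (by linarith)).resolve_right hu.ne',
          (mul_eq_zero.1 (by linarith)).resolve_right hv.ne',
          (mul_eq_zero.1 (by linarith)).resolve_right hw.ne'⟩
      · rintro ⟨h1, h2, h3⟩
        rw [h1, h2, h3]; ring
    exact (iff _ _ _ hx0 (hy0 t) (hz0 t)).trans (iff _ _ _ hfx (hfy t) (hfz t)).symm
  -- the vertices of the tiles lie in the polygon
  have hmem : ∀ t, A t ∈ rN N ∧ B t ∈ rN N ∧ C t ∈ rN N := fun t =>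
    ⟨(hU _).2 ⟨t, subset_convexHull _ _ (by simp)⟩, (hU _).2 ⟨t, subset_convexHull _ _ (by simp)⟩,
      (hU _).2 ⟨t, subset_convexHull _ _ (by simp)⟩⟩
  have hHW : ∀ t, H V (A t) (B t) (C t) = π * W t := fun t =>
    H_eq_of_mem hx0 (hy0 t) (hz0 t) (hxyz t) (hsh t) (hAB t) (hmem t).1 (hmem t).2.1 (hmem t).2.2
  have hgood : ∀ t, (Good (n * N) (C t - B t) ↔ Good (n * N) (B t - A t)) ∧
      (Good (n * N) (A t - C t) ↔ Good (n * N) (B t - A t)) := by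
    intro t
    have h1 := (hsh t).good (hrat a) hx0 (hy0 t) (hz0 t) (hxyz t)
    have h2 := ((hsh t).rot (hxyz t)).good (hrat (b t)) (hy0 t) (hz0 t) hx0
      (by have := hxyz t; linarith)
    have neg : ∀ P Q : ℂ, Good (n * N) (P - Q) ↔ Good (n * N) (Q - P) := by
      intro P Q
      have := good_smul_iff (q := n * N) (Q - P) (-1) (by norm_num)
      rw [← this]; push_cast; rw [neg_one_mul, neg_sub]
    exact ⟨h2.symm.trans (neg _ _), (neg _ _).trans h1⟩
  -- the three boundary identities
  have hk1 : Int.gcd 1 N = 1 := by simp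
  have hbd1 : ∑ l ∈ Finset.range N, G V (vx N l) (vx N (l + 1)) = π * (1 - 2 / N) := by
    have := boundary_sum hN hk1 hj
    rw [Int.cast_one, Int.fract_eq_self.2 ⟨by positivity, by
      rw [div_lt_one hN0]; exact_mod_cast (by omega : 1 < N)⟩] at this
    rw [mul_one_div] at this
    rw [← this]
    refine Finset.sum_congr rfl fun l _ => ?_
    rw [hV, vx_eq_ee, vx_eq_ee, vx_eq_ee]
    congr 2 <;> ring
  have h1 : ∑ t, W t = 1 - 2 / N := by
    have := tiling_sum hN _ (lineExact_all V) A B C hpos hU hD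
    rw [hbd1] at this
    have e : ∑ t, H V (A t) (B t) (C t) = π * (1 - 2 / N) := this
    rw [Finset.sum_congr rfl fun t _ => hHW t, ← Finset.mul_sum] at e
    exact mul_left_cancel₀ hpi.ne' e
  have hedge : ∀ l, ind (Good (n * N) (vx N (l + 1) - vx N l)) = 1 := fun l =>
    ind_pos (good_edge hn (by omega) l)
  have h2 : ∑ t, γ t * W t = 1 - 2 / N := by
    have := tiling_sum hN _ (lineExact_good (n * N) V) A B C hpos hU hD
    simp only [hedge, one_mul] at this
    rw [hbd1] at this
    have e : ∑ t, γ t * H V (A t) (B t) (C t) = π * (1 - 2 / N) := by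
      rw [← this]
      refine Finset.sum_congr rfl fun t _ => ?_
      rw [ind_congr (hgood t).1, ind_congr (hgood t).2, H]; ring
    have e2 : ∑ t, γ t * H V (A t) (B t) (C t) = π * ∑ t, γ t * W t := by
      rw [Finset.mul_sum]
      exact Finset.sum_congr rfl fun t _ => by rw [hHW]; ring
    rw [e2] at e
    exact mul_left_cancel₀ hpi.ne' e
  have hΦV : ∀ l : ℕ, Φ (vx N l) = Φ 1 * ee (2 * (k * l / N)) := by
    intro l
    have := hΦ (4 * n * l) 1
    have e : (((4 * n * l : ℤ) : ℝ) / (2 * ((n * N : ℕ) : ℝ))) = 2 * l / N := by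
      push_cast; field_simp; ring
    rw [e, mul_one, ← vx_eq_ee] at this
    rw [this, mul_comm]; congr 2; ring
  have hΦ1 : Φ 1 ≠ 0 := by
    rw [Ne, map_eq_zero_iff _ hinj]; exact one_ne_zero
  have h3 : ∑ t, γ t * H (Φ V) (Φ (A t)) (Φ (B t)) (Φ (C t)) = π * (1 - 2 * Int.fract (k / N : ℝ)) := by
    have := tiling_sum hN _ (lineExact_map hreal hΦ (Φ V)) A B C hpos hU hD
    simp only [hedge, one_mul] at this
    rw [← boundary_sum hN hkN' hj]
    refine Eq.trans (Finset.sum_congr rfl fun t _ => ?_) (this.trans (Finset.sum_congr rfl fun l _ => ?_))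
    · rw [ind_congr (hgood t).1, ind_congr (hgood t).2, H]; ring
    · rw [hV, hΦV, hΦV, hΦV, G_scale _ _ _ _ hΦ1]
  -- tiles with bad directions have no vertex at `V`
  have hbad : ∀ t, γ t * X t = X t := by
    have e : ∑ t, (1 - γ t) * W t = 0 := by
      simp only [sub_mul, one_mul]
      rw [Finset.sum_sub_distrib, h1, h2, sub_self]
    have e2 := (Finset.sum_eq_zero_iff_of_nonneg (fun t _ => by
      rcases hγ1 t with h | h <;> rw [h] <;> simp [hW0 t])).1 e
    intro t
    rcases hγ1 t with h | h
    · have := e2 t (Finset.mem_univ t)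
      rw [h, sub_zero, one_mul, hWX] at this
      rw [this, mul_zero]
    · rw [h, one_mul]
  have hκ0 := Int.fract_nonneg (k / N : ℝ)
  have hsum1 : ∀ t, Int.fract (k * x) + Int.fract (k * y t) + Int.fract (k * z t) = 1 ∧
      Shape (Int.fract (k * x)) (Int.fract (k * y t)) (Int.fract (k * z t))
        (Φ (A t)) (Φ (B t)) (Φ (C t)) := by
    -- the sum of the three fractional parts does not depend on the tile
    have hsame : ∀ t s, Int.fract (k * x) + Int.fract (k * y t) + Int.fract (k * z t) =
        Int.fract (k * x) + Int.fract (k * y s) + Int.fract (k * z s) := by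
      intro t s
      rcases hbc t s with ⟨h, h'⟩ | ⟨h, h'⟩
      · simp only [hy, hz, h, h']
      · simp only [hy, hz, h, h']; ring
    intro t
    refine (hcase t).resolve_right fun hbad2 => ?_
    have hneg : ∀ s, cr (Φ (A s)) (Φ (B s)) (Φ (C s)) < 0 := by
      intro s
      rcases hcase s with h | h
      · have := hsame t s
        rw [h.1, hbad2.1] at this
        norm_num at this
      · exact h.2
    have hle : ∑ t, γ t * H (Φ V) (Φ (A t)) (Φ (B t)) (Φ (C t)) ≤ 0 :=
      Finset.sum_nonpos fun s _ =>
        mul_nonpos_of_nonneg_of_nonpos (ind_nonneg _) (H_nonpos _ (hneg s))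
    rw [h3] at hle
    have : 0 < π * (1 - 2 * Int.fract (k / N : ℝ)) := mul_pos hpi (by linarith)
    linarith
  obtain ⟨t0⟩ := hm
  refine ⟨⟨t0, (hsum1 t0).1⟩, ?_⟩
  have hle : ∑ t, X t ≤ 1 - 2 * Int.fract (k / N : ℝ) := by
    have : π * ∑ t, X t ≤ π * (1 - 2 * Int.fract (k / N : ℝ)) := by
      rw [← h3, Finset.mul_sum]
      refine Finset.sum_le_sum fun t _ => ?_
      have hg := H_ge (Φ V) hfx (hfy t) (hfz t) (hsum1 t).1 (hsum1 t).2 (fun h => hAB t (hinj h))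
      rw [ind_congr hinj.eq_iff, ind_congr hinj.eq_iff, ind_congr hinj.eq_iff] at hg
      rw [← hbad t]
      have : 0 ≤ γ t := ind_nonneg _
      calc π * (γ t * X t) = γ t * (π * X t) := by ring
        _ ≤ _ := mul_le_mul_of_nonneg_left hg this
    exact le_of_mul_le_mul_left this hpi
  have hgt : 0 < ∑ t, X t := by
    have hWpos : 0 < ∑ t, W t := by
      rw [h1, sub_pos, div_lt_one hN0]; exact_mod_cast (by omega : 2 < N)
    by_contra hcon
    have hz := le_antisymm (not_lt.1 hcon) (Finset.sum_nonneg fun t _ => hX0 t)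
    have hz' := (Finset.sum_eq_zero_iff_of_nonneg fun t _ => hX0 t).1 hz
    have : ∑ t, W t = 0 := Finset.sum_eq_zero fun t ht => (hWX t).2 (hz' t ht)
    linarith
  -- the sum is known modulo integers, because `k ∑ W = k (1 - 2 / N)`
  have hcong : ∀ t, ∃ e : ℤ, k * W t - X t = e := by
    intro t
    obtain ⟨e1, h1⟩ := ind_int (A t = V)
    obtain ⟨e2, h2⟩ := ind_int (B t = V)
    obtain ⟨e3, h3⟩ := ind_int (C t = V)
    refine ⟨e1 * ⌊k * x⌋ + e2 * ⌊k * y t⌋ + e3 * ⌊k * z t⌋, ?_⟩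
    simp only [hW, hX, h1, h2, h3, Int.fract]
    push_cast; ring
  choose e he using hcong
  have hE : ∑ t, X t = k * (1 - 2 / N) - ((∑ t, e t : ℤ) : ℝ) := by
    rw [← h1]; push_cast
    rw [← Finset.sum_congr rfl fun t _ => he t, Finset.sum_sub_distrib, Finset.mul_sum]; ring
  have hD : ∑ t, X t = ((k - (∑ t, e t) - 2 * ⌊(k / N : ℝ)⌋ - 1 : ℤ) : ℝ)
      + (1 - 2 * Int.fract (k / N : ℝ)) := by
    rw [hE, Int.fract]; push_cast; ring
  set D := k - (∑ t, e t) - 2 * ⌊(k / N : ℝ)⌋ - 1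
  have d1 : (D : ℝ) < 1 := by linarith
  have d2 : (-1 : ℝ) < D := by linarith
  have d1' : D < 1 := by exact_mod_cast d1
  have d2' : -1 < D := by exact_mod_cast d2
  have : D = 0 := by omega
  rw [hD, this]; simp

/-! ### Passage from the plane to the complex numbers -/

/-- The isometric identification `P ↦ P 0 + P 1 * I` of the plane with `ℂ`. -/
def toC : Pt ≃ₗᵢ[ℝ] ℂ := Complex.orthonormalBasisOneI.repr.symm

lemma toC_apply (P : Pt) : toC P = ⟨P 0, P 1⟩ := by
  rw [toC, Complex.orthonormalBasisOneI_repr_symm_apply]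
  apply Complex.ext <;> simp

lemma toC_ngonVertex (N j : ℕ) : toC (ngonVertex N j) = vx N j := by
  rw [toC_apply]; simp [ngonVertex, vx]

lemma toC_mem_hull (S : Set Pt) (P : Pt) : toC P ∈ convexHull ℝ (toC '' S) ↔ P ∈ convexHull ℝ S := by
  have := LinearMap.image_convexHull (toC.toLinearEquiv : Pt →ₗ[ℝ] ℂ) S
  have e : toC '' (convexHull ℝ S) = convexHull ℝ (toC '' S) := this
  rw [← e]
  exact toC.injective.mem_set_image

lemma toC_mem_rN (N : ℕ) (P : Pt) : toC P ∈ rN N ↔ P ∈ ngon N := by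
  rw [rN, ngon, ← toC_mem_hull, ← Set.range_comp]
  simp only [Function.comp_def, toC_ngonVertex]

lemma toC_mem_tri (T : Fin 3 → Pt) (P : Pt) :
    toC P ∈ convexHull ℝ ({toC (T 0), toC (T 1), toC (T 2)} : Set ℂ) ↔ P ∈ triRegion T := by
  rw [triRegion, ← toC_mem_hull, ← Set.range_comp]
  have : Set.range (toC ∘ T) = {toC (T 0), toC (T 1), toC (T 2)} := by
    ext X
    simp [Fin.exists_fin_succ, eq_comm]
  rw [this]

lemma toC_angle (P Q R : Pt) : ∠ (toC P) (toC Q) (toC R) = ∠ P Q R := by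
  simp only [EuclideanGeometry.angle, vsub_eq_sub, ← map_sub]
  exact toC.toLinearIsometry.angle_map _ _

lemma cr_ne_zero {T : Fin 3 → Pt} (h : AffineIndependent ℝ T) :
    cr (toC (T 0)) (toC (T 1)) (toC (T 2)) ≠ 0 := by
  intro h0
  have h01 : T 1 ≠ T 0 := fun e => by simpa using h.injective e
  rw [affineIndependent_iff_not_collinear] at h
  refine h ((collinear_iff_of_mem (Set.mem_range_self 0)).2 ⟨T 1 - T 0, ?_⟩)
  simp only [cr, toC_apply] at h0
  have h2 : ∃ r : ℝ, T 2 = r • (T 1 - T 0) + T 0 := by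
    by_cases hx : T 1 0 - T 0 0 = 0
    · have hy : T 1 1 - T 0 1 ≠ 0 := by
        intro hy
        refine h01 ?_
        ext i
        fin_cases i
        · exact sub_eq_zero.1 hx
        · exact sub_eq_zero.1 hy
      refine ⟨(T 2 1 - T 0 1) / (T 1 1 - T 0 1), ?_⟩
      have hx2 : T 2 0 - T 0 0 = 0 := by
        rw [hx, zero_mul, zero_sub, neg_eq_zero] at h0
        exact (mul_eq_zero.1 h0).resolve_left hy
      ext i
      fin_cases i
      · simp [hx]; linarith
      · simp; field_simp; ring
    · refine ⟨(T 2 0 - T 0 0) / (T 1 0 - T 0 0), ?_⟩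
      ext i
      fin_cases i
      · simp; field_simp; ring
      · simp; field_simp; linarith
  rintro _ ⟨i, rfl⟩
  simp only [vadd_eq_add]
  fin_cases i
  · exact ⟨0, by simp⟩
  · exact ⟨1, by simp⟩
  · exact h2

lemma isOpen_inside (A B C : ℂ) : IsOpen {X | Inside A B C X} := by
  have hc : ∀ P Q : ℂ, Continuous fun X => cr P Q X := by
    intro P Q
    unfold cr
    fun_prop
  exact (isOpen_lt continuous_const (hc A B)).inter
    ((isOpen_lt continuous_const (hc B C)).inter (isOpen_lt continuous_const (hc C A)))

lemma mem_interior_of_inside {S : Set Pt} {A B C X : ℂ} (hpos : 0 < cr A B C)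
    (hS : ∀ P, toC P ∈ convexHull ℝ ({A, B, C} : Set ℂ) ↔ P ∈ S) (hX : Inside A B C X) :
    toC.symm X ∈ interior S := by
  refine mem_interior.2 ⟨toC ⁻¹' {X | Inside A B C X}, fun P hP => ?_,
    (isOpen_inside A B C).preimage toC.continuous, by simpa using hX⟩
  exact (hS P).1 (mem_hull_of_cr hpos hP.1.le hP.2.1.le hP.2.2.le (convex_convexHull ℝ _)
    (subset_convexHull _ _ (by simp)) (subset_convexHull _ _ (by simp))
    (subset_convexHull _ _ (by simp)))

lemma count_eq {m : ℕ} (T : Fin m → Fin 3 → Pt) (i : Fin 3) (N j : ℕ) :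
    (countAt T i (ngonVertex N j) : ℝ) = ∑ t, ind (toC (T t i) = vx N j) := by
  classical
  rw [countAt, Nat.card_eq_fintype_card, Fintype.card_subtype, Finset.card_filter]
  push_cast
  refine Finset.sum_congr rfl fun t _ => ?_
  rw [← toC_ngonVertex, ind_congr toC.injective.eq_iff, ind]
  congr

/-- Removes the parity assumption of `core`: replacing `k` by `k + nN` changes no fractional
part, and one of the two numbers is odd. -/
lemma core_all {N n m : ℕ} (hN : 3 ≤ N) {a : ℕ} {b c : Fin m → ℕ} (ha : 0 < a) (hb : ∀ t, 0 < b t)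
    (hc : ∀ t, 0 < c t) (habc : ∀ t, a + b t + c t = n) {k : ℤ}
    (hk : Int.gcd k (n * N) = 1) (hkN : Int.fract (k / N : ℝ) < 1 / 2)
    {A B C : Fin m → ℂ} (hpos : ∀ t, 0 < cr (A t) (B t) (C t))
    (hU : ∀ X, X ∈ rN N ↔ ∃ t, X ∈ convexHull ℝ ({A t, B t, C t} : Set ℂ))
    (hbc : ∀ t s, (b t = b s ∧ c t = c s) ∨ (b t = c s ∧ c t = b s))
    (hD : ∀ t s X, Inside (A t) (B t) (C t) X → Inside (A s) (B s) (C s) X → t = s)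
    (hsh : ∀ t, Shape (a / n) (b t / n) (c t / n) (A t) (B t) (C t)) (j : ℕ) (hj : j < N) :
    (∃ t, Int.fract (k * (a / n) : ℝ) + Int.fract (k * (b t / n) : ℝ)
      + Int.fract (k * (c t / n) : ℝ) = 1) ∧
    ∑ t, (ind (A t = vx N j) * Int.fract (k * (a / n) : ℝ)
      + ind (B t = vx N j) * Int.fract (k * (b t / n) : ℝ)
      + ind (C t = vx N j) * Int.fract (k * (c t / n) : ℝ)) = 1 - 2 * Int.fract (k / N : ℝ) := by
  rcases Int.even_or_odd k with hev | hodd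
  · obtain ⟨t0, -⟩ := (hU _).1 (vx_mem N j hj)
    have hn : 0 < n := by have := habc t0; omega
    have hn0 : (n : ℝ) ≠ 0 := by positivity
    have hN0 : (N : ℝ) ≠ 0 := by positivity
    have hodd : Odd ((n : ℤ) * N) := by
      by_contra hcon
      rw [Int.not_odd_iff_even] at hcon
      have := Int.dvd_coe_gcd hev.two_dvd hcon.two_dvd
      rw [hk] at this
      norm_num at this
    have f1 : ∀ e : ℕ, Int.fract (((k + n * N : ℤ) : ℝ) * (e / n)) = Int.fract (k * (e / n) : ℝ) := by
      intro e
      have : ((k + n * N : ℤ) : ℝ) * (e / n) = k * (e / n) + ((N * e : ℤ) : ℝ) := by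
        push_cast; field_simp
      rw [this, Int.fract_add_intCast]
    have f2 : Int.fract (((k + n * N : ℤ) : ℝ) / N) = Int.fract (k / N : ℝ) := by
      have : ((k + n * N : ℤ) : ℝ) / N = k / N + ((n : ℤ) : ℝ) := by
        push_cast; field_simp
      rw [this, Int.fract_add_intCast]
    have := core (k := k + n * N) hN ha hb hc habc (hev.add_odd hodd)
      (by rw [← Int.isCoprime_iff_gcd_eq_one] at hk ⊢
          simpa using hk.add_mul_left_left 1) (by rwa [f2]) hpos hU hbc hD hsh j hj
    simpa only [f1, f2] using this
  · exact core hN ha hb hc habc hodd hk hkN hpos hU hbc hD hsh j hj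

/-- Suppose `R_N` is dissected into finitely many triangles with angles `(a/n)π`,
`(b/n)π`, `(c/n)π`, where `a + b + c = n`. If `k` is prime to `nN` and `{k/N} < 1/2`,
then `{ka/n} + {kb/n} + {kc/n} = 1` and, at every vertex `V_j` of `R_N`,
`p_j{ka/n} + q_j{kb/n} + r_j{kc/n} = 1 - 2{k/N}`. -/
theorem statement8 (N : ℕ) (hN : 3 ≤ N) (a b c n : ℕ)
    (ha : 0 < a) (hb : 0 < b) (hc : 0 < c) (habc : a + b + c = n)
    {m : ℕ} (T : Fin m → Fin 3 → Pt) (htile : IsTiling N T)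
    (hang : ∀ t, HasAngles (T t) ((a : ℝ) / n * π) ((b : ℝ) / n * π) ((c : ℝ) / n * π))
    (k : ℤ) (hk : Int.gcd k (n * N) = 1) (hkN : Int.fract ((k : ℝ) / N) < 1 / 2) :
    Int.fract ((k : ℝ) * a / n) + Int.fract ((k : ℝ) * b / n)
        + Int.fract ((k : ℝ) * c / n) = 1 ∧
    ∀ j : Fin N,
      (countAt T 0 (ngonVertex N j) : ℝ) * Int.fract ((k : ℝ) * a / n) +
      (countAt T 1 (ngonVertex N j) : ℝ) * Int.fract ((k : ℝ) * b / n) +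
      (countAt T 2 (ngonVertex N j) : ℝ) * Int.fract ((k : ℝ) * c / n)
        = 1 - 2 * Int.fract ((k : ℝ) / N) := by
  classical
  obtain ⟨hind, hdisj, hunion⟩ := htile
  have hn : 0 < n := by omega
  have hn0 : (n : ℝ) ≠ 0 := by positivity
  have hs : (a / n : ℝ) + b / n + c / n = 1 := by
    rw [← add_div, ← add_div, div_eq_one_iff_eq hn0]
    exact_mod_cast habc
  -- `p t` says that the tile `t` is positively oriented
  let p : Fin m → Prop := fun t => 0 < cr (toC (T t 0)) (toC (T t 1)) (toC (T t 2))
  -- interchange the last two vertices of the other tiles to make them positively oriented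
  let A : Fin m → ℂ := fun t => toC (T t 0)
  let B : Fin m → ℂ := fun t => if p t then toC (T t 1) else toC (T t 2)
  let C : Fin m → ℂ := fun t => if p t then toC (T t 2) else toC (T t 1)
  let b' : Fin m → ℕ := fun t => if p t then b else c
  let c' : Fin m → ℕ := fun t => if p t then c else b
  have hpos : ∀ t, 0 < cr (A t) (B t) (C t) := by
    intro t
    by_cases h : p t
    · simpa only [A, B, C, if_pos h] using h
    · simp only [A, B, C, if_neg h]
      rw [cr_swap, neg_pos]
      exact lt_of_le_of_ne (not_lt.1 h) (cr_ne_zero (hind t))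
  have hS : ∀ t P, toC P ∈ convexHull ℝ ({A t, B t, C t} : Set ℂ) ↔ P ∈ triRegion (T t) := by
    intro t P
    rw [← toC_mem_tri]
    by_cases h : p t
    · simp only [A, B, C, if_pos h]
    · simp only [A, B, C, if_neg h]
      rw [Set.pair_comm]
  have hU : ∀ X, X ∈ rN N ↔ ∃ t, X ∈ convexHull ℝ ({A t, B t, C t} : Set ℂ) := by
    intro X
    obtain ⟨P, rfl⟩ := toC.surjective X
    simp only [toC_mem_rN, hS, ← hunion, Set.mem_iUnion]
  have hD : ∀ t s X, Inside (A t) (B t) (C t) X → Inside (A s) (B s) (C s) X → t = s := by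
    intro t s X h1 h2
    by_contra hne
    exact Set.disjoint_left.1 (hdisj hne) (mem_interior_of_inside (hpos t) (hS t) h1)
      (mem_interior_of_inside (hpos s) (hS s) h2)
  have hsh : ∀ t, Shape (a / n) (b' t / n) (c' t / n) (A t) (B t) (C t) := by
    intro t
    obtain ⟨h0, h1, h2⟩ := hang t
    have e0 : ∠ (T t 1) (T t 0) (T t 2) = a / n * π := h0
    have e1 : ∠ (T t 2) (T t 1) (T t 0) = b / n * π := h1
    have e2 : ∠ (T t 0) (T t 2) (T t 1) = c / n * π := h2
    have hp := hpos t
    by_cases h : p t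
    · simp only [A, B, C, b', c', if_pos h] at hp ⊢
      exact shape_of_angles hs hp (by rw [toC_angle, e0, mul_comm]) (by rw [toC_angle, e1, mul_comm])
    · simp only [A, B, C, b', c', if_neg h] at hp ⊢
      exact shape_of_angles (by linarith) hp (by rw [toC_angle, angle_comm, e0, mul_comm])
        (by rw [toC_angle, angle_comm, e2, mul_comm])
  have hb' : ∀ t, 0 < b' t := fun t => by simp only [b']; split_ifs <;> assumption
  have hc' : ∀ t, 0 < c' t := fun t => by simp only [c']; split_ifs <;> assumption
  have habc' : ∀ t, a + b' t + c' t = n := fun t => by simp only [b', c']; split_ifs <;> omega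
  have hbc : ∀ t s, (b' t = b' s ∧ c' t = c' s) ∨ (b' t = c' s ∧ c' t = b' s) := fun t s => by
    simp only [b', c']; split_ifs <;> simp
  have main := core_all hN ha hb' hc' habc' hk hkN hpos hU hbc hD hsh
  simp only [mul_div_assoc]
  refine ⟨?_, fun j => ?_⟩
  · obtain ⟨t, ht⟩ := (main 0 (by omega)).1
    by_cases h : p t
    · simpa only [b', c', if_pos h] using ht
    · simp only [b', c', if_neg h] at ht
      rw [← ht]; ring
  · rw [← (main j j.2).2, count_eq, count_eq, count_eq, Finset.sum_mul, Finset.sum_mul,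
      Finset.sum_mul, ← Finset.sum_add_distrib, ← Finset.sum_add_distrib]
    refine Finset.sum_congr rfl fun t _ => ?_
    by_cases h : p t
    · simp only [A, B, C, b', c', if_pos h]
    · simp only [A, B, C, b', c', if_neg h]
      ring
end
end

section
/- Let a, n, N, N′ be positive integers such that gcd(a, n) = 1 and gcd(N, N′) = 1. Then one of the following statements is true: (i) there exists an integer k such that gcd(k, nN) = 1, k ≡ N′ (mod N), and {ka/n} ≥ 1/3; (ii) N is odd and n divides 2N; (iii) N is even and n divides N. -/
open Real

/-!
Put `d = gcd(n, N)`. By the Chinese remainder theorem, as `k` runs over the integers prime to `nN`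
with `k ≡ N' (mod N)`, the residue of `ka` mod `n` runs over all units `r` mod `n` with
`r ≡ aN' (mod d)` (`exists_lift`). If two such units differ by `s` mod `n` with `n/3 ≤ s ≤ 2n/3`,
they cannot both have fractional part `{r/n} < 1/3` (`fract_alternative`), so it suffices to find
such a pair (`exists_pair`) when `n/d ≥ 2`, apart from the case where `n/d = 2` and `d` is odd;
the excluded cases are exactly alternatives (ii) and (iii).

If some prime `p ∣ n/d` satisfies `p² ∣ n`, then `n/p` is divisible by `d` and by every prime factor
of `n`, so the units of the class are stable under translation by `n/p`, and one takes
`s = ⌊p/2⌋ · n/p`. Otherwise `m = n/d` is prime to `d`, not divisible by `4`, and at least `3`; the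
class consists of the `r` with `r ≡ aN' (mod d)` and `r ≡ du (mod m)`, where `u` is any unit mod `m`.
Then `u = 1` is compared with `u = (m+1)/2` for odd `m` and with `u = m/2 + 2` for even `m`.
-/

/-- Two reals whose difference is within `[1/3, 2/3]` modulo `1` cannot both have fractional part
below `1/3`. -/
lemma fract_alternative (x y t : ℝ) (z : ℤ) (h : y - x = t + z) (h1 : 1 / 3 ≤ t)
    (h2 : t ≤ 2 / 3) : 1 / 3 ≤ Int.fract x ∨ 1 / 3 ≤ Int.fract y := by
  by_contra! hc
  obtain ⟨hx, hy⟩ := hc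
  have hx0 := Int.fract_nonneg x
  have hy0 := Int.fract_nonneg y
  have ex := Int.floor_add_fract x
  have ey := Int.floor_add_fract y
  -- The integer `⌊y⌋ - ⌊x⌋ - z = t + {x} - {y}` would lie strictly between `0` and `1`.
  have e : ((⌊y⌋ - ⌊x⌋ - z : ℤ) : ℝ) = t + Int.fract x - Int.fract y := by
    push_cast; linarith
  have l : (0 : ℝ) < ((⌊y⌋ - ⌊x⌋ - z : ℤ) : ℝ) := by rw [e]; linarith
  have u : ((⌊y⌋ - ⌊x⌋ - z : ℤ) : ℝ) < 1 := by rw [e]; linarith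
  have l' : 0 < ⌊y⌋ - ⌊x⌋ - z := by exact_mod_cast l
  have u' : ⌊y⌋ - ⌊x⌋ - z < 1 := by exact_mod_cast u
  omega

lemma exists_coprime_modEq (n d c : ℕ) (hn : 0 < n) (hd : d ∣ n) (hc : Nat.Coprime c d) :
    ∃ r : ℕ, Nat.Coprime r n ∧ r ≡ c [MOD d] := by
  have : NeZero n := ⟨hn.ne'⟩
  obtain ⟨v, hv⟩ := ZMod.unitsMap_surjective hd (ZMod.unitOfCoprime c hc)
  refine ⟨(v : ZMod n).val, ZMod.val_coe_unit_coprime v, ?_⟩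
  have := congrArg (fun w : (ZMod d)ˣ => (w : ZMod d)) hv
  simp only [ZMod.unitsMap_val, ZMod.coe_unitOfCoprime] at this
  rw [← ZMod.natCast_eq_natCast_iff, ZMod.natCast_val, this]

/-- A class of units mod `n` cut out by a congruence mod `d` contains two elements whose difference
lies in the middle third of `[0, n]`, unless `n = d`, or `n = 2d` with `d` odd. -/
lemma exists_pair (n d c : ℕ) (hn : 0 < n) (hd : d ∣ n) (hc : Nat.Coprime c d) (hne : n ≠ d)
    (h2 : n = 2 * d → ¬ Odd d) :
    ∃ r s : ℕ, Nat.Coprime r n ∧ r ≡ c [MOD d] ∧ Nat.Coprime (r + s) n ∧ r + s ≡ c [MOD d] ∧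
      n ≤ 3 * s ∧ 3 * s ≤ 2 * n := by
  obtain ⟨m, rfl⟩ := hd
  have hd0 : 0 < d := Nat.pos_of_mul_pos_right hn
  have hm0 : 0 < m := Nat.pos_of_mul_pos_left hn
  by_cases H : ∃ p, p.Prime ∧ p ∣ m ∧ p * p ∣ d * m
  · obtain ⟨p, pp, ⟨m', rfl⟩, hpp⟩ := H
    obtain ⟨r, hr, hrc⟩ := exists_coprime_modEq (d * (p * m')) d c hn ⟨_, rfl⟩ hc
    have hp2 := pp.two_le
    have hpd : p ∣ d * m' := by
      refine Nat.dvd_of_mul_dvd_mul_left pp.pos ?_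
      convert hpp using 1; ring
    have hb : 3 * (p / 2) ≤ 2 * p ∧ p ≤ 3 * (p / 2) := by omega
    refine ⟨r, p / 2 * (d * m'), hr, hrc, ?_, ?_, ?_, ?_⟩
    · refine Nat.Coprime.symm (Nat.coprime_of_dvd fun q hq hqn hqr => ?_)
      have hqd : q ∣ d * m' := by
        have : q ∣ p * (d * m') := by convert hqn using 1; ring
        rcases (Nat.Prime.dvd_mul hq).1 this with h | h
        · rwa [(Nat.prime_dvd_prime_iff_eq hq pp).1 h]
        · exact h
      have : q ∣ r := (Nat.dvd_add_left (hqd.mul_left _)).1 hqr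
      exact Nat.not_coprime_of_dvd_of_dvd hq.one_lt this hqn hr
    · refine Nat.ModEq.trans ?_ hrc
      have : d ∣ p / 2 * (d * m') := ⟨p / 2 * m', by ring⟩
      simpa using (Nat.ModEq.refl r).add ((Nat.modEq_zero_iff_dvd).2 this)
    · calc d * (p * m') = p * (d * m') := by ring
        _ ≤ 3 * (p / 2) * (d * m') := Nat.mul_le_mul_right _ hb.2
        _ = _ := by ring
    · calc 3 * (p / 2 * (d * m')) = 3 * (p / 2) * (d * m') := by ring
        _ ≤ 2 * p * (d * m') := Nat.mul_le_mul_right _ hb.1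
        _ = _ := by ring
  · push Not at H
    have hcop : Nat.Coprime d m := by
      refine Nat.coprime_of_dvd fun q hq hqd hqm => ?_
      exact H q hq hqm (Nat.mul_dvd_mul hqd hqm)
    have h4 : ¬ 4 ∣ m := fun h =>
      H 2 Nat.prime_two ((by norm_num : (2 : ℕ) ∣ 4).trans h) (h.mul_left d)
    have hm3 : 3 ≤ m := by
      have h1 : m ≠ 1 := by rintro rfl; simp at hne
      have h2' : m ≠ 2 := by
        rintro rfl
        exact h2 (by ring) (Nat.coprime_two_right.1 hcop)
      omega
    -- `w + 1` is the unit mod `m` to be compared with `1`.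
    obtain ⟨w, hw, hw1, hw2⟩ : ∃ w, Nat.Coprime (w + 1) m ∧ m ≤ 3 * w ∧ 3 * w ≤ 2 * m := by
      rcases Nat.even_or_odd' m with ⟨t, rfl | rfl⟩
      · have ht : Odd t := by
          rw [← Nat.not_even_iff_odd]
          rintro ⟨z, rfl⟩
          exact h4 ⟨z, by ring⟩
        refine ⟨t + 1, ?_, by omega, by obtain ⟨z, rfl⟩ := ht; omega⟩
        have o : Nat.Coprime t 2 := Nat.coprime_two_right.2 ht
        refine Nat.Coprime.mul_right ?_ ?_
        · exact Nat.coprime_two_right.2 (by obtain ⟨z, rfl⟩ := ht; exact ⟨z + 1, by ring⟩)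
        · have : Nat.Coprime (t + 2) t := by simpa using o.symm
          exact this
      · refine ⟨t, ?_, by omega, by omega⟩
        have : 2 * t + 1 = t + (t + 1) := by ring
        rw [this]
        simp
    let r := Nat.chineseRemainder hcop c d
    have hrc : (r : ℕ) ≡ c [MOD d] := r.2.1
    have hrm : (r : ℕ) ≡ d [MOD m] := r.2.2
    have hsc : (r : ℕ) + d * w ≡ c [MOD d] := by
      refine Nat.ModEq.trans ?_ hrc
      simp [Nat.ModEq]
    have hsm : (r : ℕ) + d * w ≡ d * (w + 1) [MOD m] := by
      have := hrm.add_right (d * w)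
      rwa [show d + d * w = d * (w + 1) by ring] at this
    refine ⟨r, d * w, ?_, hrc, ?_, hsc, ?_, ?_⟩
    · exact Nat.Coprime.mul_right (hrc.gcd_eq.trans hc) (hrm.gcd_eq.trans hcop)
    · exact Nat.Coprime.mul_right (hsc.gcd_eq.trans hc)
        (hsm.gcd_eq.trans (Nat.Coprime.mul_left hcop hw))
    · calc d * m ≤ d * (3 * w) := Nat.mul_le_mul_left _ hw1
        _ = _ := by ring
    · calc 3 * (d * w) = d * (3 * w) := by ring
        _ ≤ d * (2 * m) := Nat.mul_le_mul_left _ hw2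
        _ = _ := by ring

/-- Every unit `r` mod `n` in the class of `aN'` mod `gcd(n, N)` has the form `ka` with `k` prime to
`nN` and `k ≡ N' (mod N)`. -/
lemma exists_lift (a n N N' r : ℕ) (hn : 0 < n)
    (han : Nat.Coprime a n) (hNN' : Nat.Coprime N N') (hr : Nat.Coprime r n)
    (hrc : r ≡ a * N' [MOD Nat.gcd n N]) :
    ∃ k : ℕ, Nat.Coprime k (n * N) ∧ k ≡ N' [MOD N] ∧ k * a ≡ r [MOD n] := by
  obtain ⟨b, hb, hab⟩ : ∃ b, Nat.Coprime b n ∧ a * b ≡ 1 [MOD n] := by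
    have : NeZero n := ⟨hn.ne'⟩
    let v := (ZMod.unitOfCoprime a han)⁻¹
    refine ⟨(v : ZMod n).val, ZMod.val_coe_unit_coprime v, ?_⟩
    rw [← ZMod.natCast_eq_natCast_iff]
    push_cast
    rw [ZMod.natCast_zmod_val, ← ZMod.coe_unitOfCoprime a han]
    exact Units.mul_inv _
  have hcompat : b * r ≡ N' [MOD Nat.gcd n N] := by
    calc b * r ≡ b * (a * N') [MOD Nat.gcd n N] := hrc.mul_left b
      _ = a * b * N' := by ring
      _ ≡ 1 * N' [MOD Nat.gcd n N] := (hab.of_dvd (Nat.gcd_dvd_left n N)).mul_right N'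
      _ = N' := one_mul _
  let k := Nat.chineseRemainder' hcompat
  have hk1 : (k : ℕ) ≡ b * r [MOD n] := k.2.1
  have hk2 : (k : ℕ) ≡ N' [MOD N] := k.2.2
  refine ⟨k, ?_, hk2, ?_⟩
  · exact Nat.Coprime.mul_right (hk1.gcd_eq.trans (Nat.Coprime.mul_left hb hr))
      (hk2.gcd_eq.trans hNN'.symm)
  · calc (k : ℕ) * a ≡ b * r * a [MOD n] := hk1.mul_right a
      _ = a * b * r := by ring
      _ ≡ 1 * r [MOD n] := hab.mul_right r
      _ = r := one_mul _

/-- Let `a, n, N, N'` be positive integers with `gcd(a,n) = 1` and `gcd(N,N') = 1`. Then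
(i) there is an integer `k` prime to `nN` with `k ≡ N' (mod N)` and `{ka/n} ≥ 1/3`, or
(ii) `N` is odd and `n ∣ 2N`, or (iii) `N` is even and `n ∣ N`. -/
theorem statement9 (a n N N' : ℕ) (ha : 0 < a) (hn : 0 < n) (hN : 0 < N) (hN' : 0 < N')
    (han : Nat.gcd a n = 1) (hNN' : Nat.gcd N N' = 1) :
    (∃ k : ℤ, Int.gcd k (n * N) = 1 ∧ k ≡ (N' : ℤ) [ZMOD (N : ℤ)] ∧
      1 / 3 ≤ Int.fract ((k : ℝ) * a / n)) ∨
    (Odd N ∧ n ∣ 2 * N) ∨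
    (Even N ∧ n ∣ N) := by
  by_cases hbad : (Odd N ∧ n ∣ 2 * N) ∨ (Even N ∧ n ∣ N)
  · exact Or.inr hbad
  left
  have hdn := Nat.gcd_dvd_left n N
  have hdN := Nat.gcd_dvd_right n N
  have hc : Nat.Coprime (a * N') (Nat.gcd n N) :=
    Nat.Coprime.mul_left (Nat.Coprime.coprime_dvd_right hdn han)
      (Nat.Coprime.coprime_dvd_right hdN (Nat.Coprime.symm hNN'))
  have hne : n ≠ Nat.gcd n N := by
    intro h
    have hnN : n ∣ N := h ▸ hdN
    rcases Nat.even_or_odd N with hE | hO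
    · exact hbad (Or.inr ⟨hE, hnN⟩)
    · exact hbad (Or.inl ⟨hO, hnN.mul_left 2⟩)
  have h2 : n = 2 * Nat.gcd n N → ¬ Odd (Nat.gcd n N) := by
    intro h hO
    rcases Nat.even_or_odd N with hE | hO'
    · refine hbad (Or.inr ⟨hE, ?_⟩)
      rw [h]
      exact Nat.Coprime.mul_dvd_of_dvd_of_dvd (Nat.coprime_two_left.2 hO) hE.two_dvd hdN
    · refine hbad (Or.inl ⟨hO', ?_⟩)
      rw [h]
      exact Nat.mul_dvd_mul_left 2 hdN
  obtain ⟨r, s, hr, hrc, hs, hsc, hl, hu⟩ :=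
    exists_pair n (Nat.gcd n N) (a * N') hn hdn hc hne h2
  obtain ⟨k, hk, hkN, hka⟩ := exists_lift a n N N' r hn han hNN' hr hrc
  obtain ⟨l, hlc, hlN, hla⟩ := exists_lift a n N N' (r + s) hn han hNN' hs hsc
  have hdiff : ∃ z : ℤ, (l : ℤ) * a - k * a = s + n * z := by
    have h1 := (Nat.modEq_iff_dvd.1 hla.symm)
    have h3 := (Nat.modEq_iff_dvd.1 hka.symm)
    obtain ⟨z1, h1⟩ := h1
    obtain ⟨z3, h3⟩ := h3
    push_cast at h1 h3
    exact ⟨z1 - z3, by linear_combination h1 - h3⟩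
  obtain ⟨z, hz⟩ := hdiff
  have hnR : (0 : ℝ) < n := by exact_mod_cast hn
  have hzR : (l : ℝ) * a - k * a = s + n * z := by exact_mod_cast hz
  have hlR : (n : ℝ) ≤ 3 * s := by exact_mod_cast hl
  have huR : 3 * (s : ℝ) ≤ 2 * n := by exact_mod_cast hu
  rcases fract_alternative ((k : ℝ) * a / n) ((l : ℝ) * a / n) (s / n) z
    (by rw [← sub_div, hzR]; field_simp)
    (by rw [le_div_iff₀ hnR]; linarith) (by rw [div_le_iff₀ hnR]; linarith) with h | h
  · exact ⟨k, by exact_mod_cast hk, (Int.natCast_modEq_iff).2 hkN, by simpa only [Int.cast_natCast] using h⟩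
  · exact ⟨l, by exact_mod_cast hlc, (Int.natCast_modEq_iff).2 hlN, by simpa only [Int.cast_natCast] using h⟩
end

section
/- Let a, b, n, N be positive integers and p, q be nonnegative integers such that a + b < n, N ≥ 3, N ≠ 6, and p{ka/n} + q{kb/n} = 1 − 2{k/N} for every integer k satisfying gcd(k, nN) = 1 and {k/N} < 1/2. Then p + q ≤ 2. -/
/-!
Put `α = a / n`, `β = 1 / N` and assume `p + q ≥ 3` with, say, `p ≥ 2`. Since `p {kα} ≤ 1 - 2 {kβ}`
whenever `{kβ} < 1/2`, the fractional parts `{kα}` and `{kβ}` lie in the same half of `[0, 1)` for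
every `k` prime to `nN` (replace `k` by `-k` for the upper half). Let `L` be the least common
multiple of the orders of `α` and `β` modulo `1`.

* If `4 ∣ L`, multiplication by `-1 + L/2` is invertible modulo `L`. Comparing the hypothesis there
  with the hypothesis at `k = 1` gives `p / 2 + q (y + z) = 1`, where `y = b / n > 0` and `z ≥ 0`, so
  `p = 2` and `q = 0`.
* If `4 ∤ L`, then modulo `1` each of `α, β` is `0` or `1/2` plus an element of odd order. On
  elements of odd order multiplication by powers of `2` is realised by admissible `k`, and the
  halves containing the fractional parts of `2 ^ e * t` are the binary digits of `t`. So the two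
  odd parts agree up to sign: either `α = β` or `α + β = 1/2`. The second equality contradicts the
  hypothesis at `k = 1`. The first forces `{k / N} < 1/4` whenever `{k / N} < 1/2`; taking `k` close
  to `N / 2` shows that this happens only for `N = 6`.
-/

open Real

/-- Units modulo a divisor `D` of `M` lift to units modulo `M`. -/
lemma exists_lift_coprime (D M : ℕ) (hM : 0 < M) (hD : D ∣ M) (u : ℤ) (hu : IsCoprime u (D : ℤ)) :
    ∃ k j : ℤ, k = u + j * D ∧ IsCoprime k (M : ℤ) := by
  have : NeZero M := ⟨hM.ne'⟩
  obtain ⟨v, hv⟩ := ZMod.unitsMap_surjective hD ((ZMod.coe_int_isUnit_iff_isCoprime u D).2 hu.symm).unit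
  have h1 : (((v : ZMod M).val : ℤ) : ZMod D) = (u : ZMod D) := by
    have := congrArg Units.val hv
    rw [ZMod.unitsMap_val] at this
    rw [Int.cast_natCast, ZMod.natCast_val]
    exact this
  obtain ⟨j, hj⟩ := (ZMod.intCast_eq_intCast_iff_dvd_sub _ _ _).1 h1.symm
  refine ⟨((v : ZMod M).val : ℤ), j, by linarith, ?_⟩
  exact Nat.isCoprime_iff_coprime.2 (ZMod.val_coe_unit_coprime v)

lemma fract_two_mul_lo {t : ℝ} (h : Int.fract t < 1 / 2) :
    Int.fract (2 * t) = 2 * Int.fract t := by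
  rw [Int.fract_eq_iff]
  have := Int.fract_nonneg t
  exact ⟨by linarith, by linarith, 2 * ⌊t⌋, by rw [Int.fract]; push_cast; ring⟩

lemma fract_two_mul_hi {t : ℝ} (h : ¬ Int.fract t < 1 / 2) :
    Int.fract (2 * t) = 2 * Int.fract t - 1 := by
  rw [Int.fract_eq_iff]
  have := Int.fract_lt_one t
  exact ⟨by linarith, by linarith, 2 * ⌊t⌋ + 1, by rw [Int.fract]; push_cast; ring⟩

lemma eq_zero_of_two_pow_mul {d : ℝ} (h : ∀ e : ℕ, |2 ^ e * d| < 1) : d = 0 := by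
  by_contra hd
  obtain ⟨e, he⟩ := pow_unbounded_of_one_lt (1 / |d|) (one_lt_two (α := ℝ))
  have h1 := h e
  have hd' := abs_pos.2 hd
  rw [abs_mul, abs_of_nonneg (by positivity)] at h1
  rw [div_lt_iff₀ hd'] at he
  linarith

/-- A real number modulo `1` is determined by its binary digits. -/
lemma fract_eq_of_digits {s t : ℝ}
    (h : ∀ e : ℕ, Int.fract (2 ^ e * s) < 1 / 2 ↔ Int.fract (2 ^ e * t) < 1 / 2) :
    Int.fract s = Int.fract t := by
  have key : ∀ e : ℕ, Int.fract (2 ^ e * s) - Int.fract (2 ^ e * t)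
      = 2 ^ e * (Int.fract s - Int.fract t) := by
    intro e
    induction e with
    | zero => simp
    | succ e ih =>
      rw [pow_succ', mul_assoc, mul_assoc, mul_assoc, ← ih]
      by_cases hs : Int.fract (2 ^ e * s) < 1 / 2
      · rw [fract_two_mul_lo hs, fract_two_mul_lo ((h e).1 hs)]; ring
      · rw [fract_two_mul_hi hs, fract_two_mul_hi (fun ht => hs ((h e).2 ht))]; ring
  refine sub_eq_zero.1 (eq_zero_of_two_pow_mul fun e => ?_)
  rw [← key e, abs_lt]
  have := Int.fract_nonneg (2 ^ e * s)
  have := Int.fract_nonneg (2 ^ e * t)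
  have := Int.fract_lt_one (2 ^ e * s)
  have := Int.fract_lt_one (2 ^ e * t)
  constructor <;> linarith

/-- Two real numbers with complementary binary digits have fractional parts adding up to `1`. -/
lemma fract_add_of_digits {s t : ℝ}
    (h : ∀ e : ℕ, Int.fract (2 ^ e * s) < 1 / 2 ↔ ¬ Int.fract (2 ^ e * t) < 1 / 2) :
    Int.fract s + Int.fract t = 1 := by
  have key : ∀ e : ℕ, Int.fract (2 ^ e * s) + Int.fract (2 ^ e * t) - 1
      = 2 ^ e * (Int.fract s + Int.fract t - 1) := by
    intro e
    induction e with
    | zero => simp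
    | succ e ih =>
      rw [pow_succ', mul_assoc, mul_assoc, mul_assoc, ← ih]
      by_cases hs : Int.fract (2 ^ e * s) < 1 / 2
      · rw [fract_two_mul_lo hs, fract_two_mul_hi ((h e).1 hs)]; ring
      · rw [fract_two_mul_hi hs, fract_two_mul_lo (not_not.1 fun ht => hs ((h e).2 ht))]; ring
  refine sub_eq_zero.1 (eq_zero_of_two_pow_mul fun e => ?_)
  rw [← key e, abs_lt]
  -- the bound `> -1` is strict because one of the two fractional parts is at least `1/2`
  have := Int.fract_nonneg (2 ^ e * s)
  have := Int.fract_nonneg (2 ^ e * t)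
  have := Int.fract_lt_one (2 ^ e * s)
  have := Int.fract_lt_one (2 ^ e * t)
  refine ⟨?_, by linarith⟩
  by_cases hs : Int.fract (2 ^ e * s) < 1 / 2
  · have := (h e).1 hs; linarith
  · linarith

lemma fract_half_add (t : ℝ) : Int.fract (1 / 2 + t) < 1 / 2 ↔ ¬ Int.fract t < 1 / 2 := by
  have h0 := Int.fract_nonneg t
  have h1 := Int.fract_lt_one t
  by_cases h : Int.fract t < 1 / 2
  · have : Int.fract (1 / 2 + t) = 1 / 2 + Int.fract t := by
      rw [Int.fract_eq_iff]
      exact ⟨by linarith, by linarith, ⌊t⌋, by rw [Int.fract]; ring⟩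
    rw [this]; constructor
    · intro; linarith
    · intro h'; exact absurd h h'
  · have : Int.fract (1 / 2 + t) = Int.fract t - 1 / 2 := by
      rw [Int.fract_eq_iff]
      exact ⟨by linarith, by linarith, ⌊t⌋ + 1, by rw [Int.fract]; push_cast; ring⟩
    rw [this]; constructor
    · intro; exact h
    · intro; linarith

lemma exists_odd_of_not_four_dvd (m : ℕ) (h : ¬ 4 ∣ m) : ∃ o, Odd o ∧ o ∣ m ∧ m ∣ 2 * o := by
  rcases Nat.even_or_odd' m with ⟨c, hc | hc⟩
  · refine ⟨c, ?_, ⟨2, by lia⟩, ⟨1, by lia⟩⟩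
    rw [← Nat.not_even_iff_odd]
    rintro ⟨d, hd⟩
    exact h ⟨d, by lia⟩
  · exact ⟨m, ⟨c, hc⟩, dvd_rfl, ⟨2, by ring⟩⟩

/-- If `α` is killed by `2 * D` modulo `1`, with `D` odd, then `α` is `0` or `1/2` plus an element
killed by `D`. -/
lemma exists_odd_part {α : ℝ} {D : ℕ} (hD : Odd D) {A : ℤ} (hA : 2 * (D : ℝ) * α = A) :
    ∃ (ξ : ℝ) (X : ℤ), (D : ℝ) * ξ = X ∧ (α = ξ ∨ α = 1 / 2 + ξ) := by
  obtain ⟨d, hd⟩ := hD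
  rcases Int.even_or_odd' A with ⟨c, hc | hc⟩
  · refine ⟨α, c, ?_, Or.inl rfl⟩
    rw [hc] at hA; push_cast at hA; linarith
  · refine ⟨α - 1 / 2, c - d, ?_, Or.inr (by ring)⟩
    rw [hc] at hA
    have : (D : ℝ) = 2 * d + 1 := by rw [hd]; push_cast; ring
    push_cast at hA ⊢
    linarith

/-- The digits of the odd part of `α` are read off, directly or complemented, from the fractional
parts of odd multiples of `α`. -/
lemma digit_odd_part {α ξ : ℝ} {D : ℕ} {X : ℤ} (hX : (D : ℝ) * ξ = X) {k j : ℤ} (hk : Odd k)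
    {e : ℕ} (hj : k = 2 ^ e + j * D) :
    (α = ξ → (Int.fract (k * α) < 1 / 2 ↔ Int.fract (2 ^ e * ξ) < 1 / 2)) ∧
    (α = 1 / 2 + ξ → (Int.fract (k * α) < 1 / 2 ↔ ¬ Int.fract (2 ^ e * ξ) < 1 / 2)) := by
  have h1 : (k : ℝ) * ξ = 2 ^ e * ξ + ((j * X : ℤ) : ℝ) := by
    rw [hj]; push_cast; rw [← hX]; ring
  constructor
  · rintro rfl
    rw [h1, Int.fract_add_intCast]
  · rintro rfl
    obtain ⟨c, hc⟩ := hk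
    have h2 : (k : ℝ) * (1 / 2 + ξ) = (1 / 2 + 2 ^ e * ξ) + ((c + j * X : ℤ) : ℝ) := by
      rw [mul_add, h1, hc]; push_cast; ring
    rw [h2, Int.fract_add_intCast, fract_half_add]

/-- If `α, β ∈ (0, 1/2)` are killed by `2 * D` modulo `1`, with `D` odd, and admissible multiples
of them always lie in the same half of the unit interval, then `α = β` or `α + β = 1/2`. -/
lemma eq_or_add_eq_half {α β : ℝ} {D M : ℕ} (hD : Odd D) (hM : 0 < M) (hDM : D ∣ M) {A B : ℤ}
    (hA : 2 * (D : ℝ) * α = A) (hB : 2 * (D : ℝ) * β = B)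
    (hα0 : 0 < α) (hα : α < 1 / 2) (hβ0 : 0 < β) (hβ : β < 1 / 2)
    (h : ∀ k : ℤ, IsCoprime k (M : ℤ) →
      (Int.fract (k * α) < 1 / 2 ↔ Int.fract (k * β) < 1 / 2)) :
    α = β ∨ α + β = 1 / 2 := by
  obtain ⟨ξ, X, hX, h1⟩ := exists_odd_part hD hA
  obtain ⟨ζ, Z, hZ, h2⟩ := exists_odd_part hD hB
  have lift : ∀ e : ℕ, ∃ k j : ℤ, Odd k ∧ k = 2 ^ e + j * D ∧ IsCoprime k (M : ℤ) := by
    intro e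
    have hcop : IsCoprime ((2 : ℤ) ^ e) (D : ℤ) := by
      apply IsCoprime.pow_left
      exact_mod_cast Nat.isCoprime_iff_coprime.2 (Nat.coprime_two_left.2 hD)
    obtain ⟨k, j, hk, hc⟩ := exists_lift_coprime D (2 * M) (by lia) (hDM.mul_left 2) _ hcop
    push_cast at hc
    refine ⟨k, j, ?_, hk, hc.of_mul_right_right⟩
    exact Int.isCoprime_two_right.1 hc.of_mul_right_left
  have hfa : ∀ s t : ℝ, Int.fract s = Int.fract t → ∃ c : ℤ, s - t = c := fun s t hst => by
    obtain ⟨c, hc⟩ := Int.fract_eq_fract.1 hst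
    exact ⟨c, hc⟩
  have hfb : ∀ s t : ℝ, Int.fract s + Int.fract t = 1 → ∃ c : ℤ, s + t = c := fun s t hst => by
    refine ⟨⌊s⌋ + ⌊t⌋ + 1, ?_⟩
    rw [Int.fract, Int.fract] at hst
    push_cast; linarith
  have same : ∀ c : ℤ, α - β = c → α = β := by
    intro c hc
    have h3 : (c : ℝ) < 1 := by linarith
    have h4 : (-1 : ℝ) < c := by linarith
    have h3' : c < 1 := by exact_mod_cast h3
    have h4' : -1 < c := by exact_mod_cast h4
    obtain rfl : c = 0 := by lia
    push_cast at hc; linarith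
  have opp : ∀ c : ℤ, α + β = 1 / 2 + c → α + β = 1 / 2 := by
    intro c hc
    have h3 : (c : ℝ) < 1 := by linarith
    have h4 : (-1 : ℝ) < c := by linarith
    have h3' : c < 1 := by exact_mod_cast h3
    have h4' : -1 < c := by exact_mod_cast h4
    obtain rfl : c = 0 := by lia
    push_cast at hc; linarith
  rcases h1 with h1 | h1 <;> rcases h2 with h2 | h2
  · left
    obtain ⟨c, hc⟩ := hfa ξ ζ (fract_eq_of_digits fun e => by
      obtain ⟨k, j, hk, hj, hc⟩ := lift e
      have := (digit_odd_part hX hk hj).1 h1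
      have := (digit_odd_part hZ hk hj).1 h2
      have := h k hc
      tauto)
    exact same c (by linarith)
  · right
    obtain ⟨c, hc⟩ := hfb ξ ζ (fract_add_of_digits fun e => by
      obtain ⟨k, j, hk, hj, hc⟩ := lift e
      have := (digit_odd_part hX hk hj).1 h1
      have := (digit_odd_part hZ hk hj).2 h2
      have := h k hc
      tauto)
    exact opp c (by linarith)
  · right
    obtain ⟨c, hc⟩ := hfb ξ ζ (fract_add_of_digits fun e => by
      obtain ⟨k, j, hk, hj, hc⟩ := lift e
      have := (digit_odd_part hX hk hj).2 h1
      have := (digit_odd_part hZ hk hj).1 h2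
      have := h k hc
      tauto)
    exact opp c (by linarith)
  · left
    obtain ⟨c, hc⟩ := hfa ξ ζ (fract_eq_of_digits fun e => by
      obtain ⟨k, j, hk, hj, hc⟩ := lift e
      have := (digit_odd_part hX hk hj).2 h1
      have := (digit_odd_part hZ hk hj).2 h2
      have := h k hc
      tauto)
    exact same c (by linarith)

/-- Outside `N = 6` and the multiples of `4`, some unit modulo `N` lies in `[N/4, N/2)`. -/
lemma exists_unit_second_quarter (N : ℕ) (hN : 3 ≤ N) (hN6 : N ≠ 6) (h4 : ¬ 4 ∣ N) :
    ∃ u : ℤ, IsCoprime u (N : ℤ) ∧ (N : ℤ) ≤ 4 * u ∧ 2 * u < N := by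
  rcases Nat.even_or_odd' N with ⟨w, hw | hw⟩
  · -- here `N = 2 * w` with `w` odd and at least `5`; the unit is `w - 2`
    obtain ⟨v, hv⟩ : ∃ v, w = 2 * v + 1 := ⟨w / 2, by lia⟩
    refine ⟨w - 2, ?_, by lia, by lia⟩
    rw [hw]; push_cast
    have h2 : IsCoprime ((w : ℤ) - 2) 2 := ⟨1, 1 - v, by rw [hv]; push_cast; ring⟩
    have h3 : IsCoprime ((w : ℤ) - 2) w := ⟨v, 1 - v, by rw [hv]; push_cast; ring⟩
    exact h2.mul_right h3
  · refine ⟨w, ⟨-2, 1, by rw [hw]; push_cast; ring⟩, by lia, by lia⟩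

/-- If `4` divides one of the orders `n₁, N` of `α, β` modulo `1`, and `{kα} < 1/2` whenever
`{kβ} < 1/2`, then some admissible `k` acts on both `α` and `β` as `t ↦ 1/2 - t`. -/
lemma exists_reflection {α β : ℝ} {a' n₁ N M : ℕ} (hnα : (n₁ : ℝ) * α = a')
    (hNβ : (N : ℝ) * β = 1) (hcop : Nat.Coprime a' n₁) (hn₁ : 0 < n₁) (hN : 0 < N) (hM : 0 < M)
    (hn₁M : n₁ ∣ M) (hNM : N ∣ M) (hα0 : 0 < α) (hα2 : α < 1 / 2) (hβ0 : 0 < β) (hβ2 : β < 1 / 2)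
    (half : ∀ k : ℤ, IsCoprime k (M : ℤ) → Int.fract (k * β) < 1 / 2 →
      Int.fract (k * α) < 1 / 2) (h4 : 4 ∣ n₁ ∨ 4 ∣ N) :
    ∃ k : ℤ, IsCoprime k (M : ℤ) ∧ Int.fract (k * α) = 1 / 2 - α ∧
      Int.fract (k * β) = 1 / 2 - β := by
  have fβ : Int.fract β = β := Int.fract_eq_self.2 ⟨hβ0.le, by linarith⟩
  have hL4 : 4 ∣ Nat.lcm n₁ N :=
    h4.elim (fun h => h.trans (Nat.dvd_lcm_left _ _)) (fun h => h.trans (Nat.dvd_lcm_right _ _))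
  have hLM : Nat.lcm n₁ N ∣ M := Nat.lcm_dvd hn₁M hNM
  have hLpos : 0 < Nat.lcm n₁ N := Nat.lcm_pos hn₁ (by lia)
  obtain ⟨r, hr⟩ := hL4
  -- `2 * r` is half of the least common multiple of the two orders
  obtain ⟨s, hs⟩ : n₁ ∣ 4 * r := hr ▸ Nat.dvd_lcm_left _ _
  obtain ⟨t, ht⟩ : N ∣ 4 * r := hr ▸ Nat.dvd_lcm_right _ _
  have hLα : (4 * r : ℝ) * α = (s * a' : ℤ) := by
    have : (4 * r : ℝ) = n₁ * s := by exact_mod_cast hs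
    rw [this]; push_cast; linear_combination (s : ℝ) * hnα
  have hLβ : (4 * r : ℝ) * β = (t : ℤ) := by
    have : (4 * r : ℝ) = N * t := by exact_mod_cast ht
    rw [this]; push_cast; linear_combination (t : ℝ) * hNβ
  -- units `±1 + 2 * r` modulo `4 * r`, and the effect of multiplying by them
  have cop : ∀ w : ℤ, w = 1 ∨ w = -1 → ∃ k j : ℤ, k = w + 2 * r + j * (4 * r : ℕ) ∧
      IsCoprime k (M : ℤ) := by
    intro w hw
    refine exists_lift_coprime (4 * r) M hM (hr ▸ hLM) _ ?_
    rcases hw with rfl | rfl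
    · exact ⟨1 - 2 * r, r, by push_cast; ring⟩
    · exact ⟨-1 - 2 * r, r, by push_cast; ring⟩
  have shift : ∀ (δ : ℝ) (A : ℤ), (4 * r : ℝ) * δ = A → ∀ w k j : ℤ,
      k = w + 2 * r + j * (4 * r : ℕ) →
      (Even A → ∃ c : ℤ, k * δ = w * δ + c) ∧
      (Odd A → ∃ c : ℤ, k * δ = w * δ + 1 / 2 + c) := by
    intro δ A hA w k j hk
    constructor
    · rintro ⟨c, rfl⟩
      refine ⟨c + j * (c + c), ?_⟩
      rw [hk]; push_cast at hA ⊢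
      linear_combination (1 / 2 + j : ℝ) * hA
    · rintro ⟨c, rfl⟩
      refine ⟨c + j * (2 * c + 1), ?_⟩
      rw [hk]; push_cast at hA ⊢
      linear_combination (1 / 2 + j : ℝ) * hA
  rcases Int.even_or_odd (t : ℤ) with hte | hto
  · rcases Int.even_or_odd (s * a' : ℤ) with hse | hso
    · -- both orders would divide half of their least common multiple
      have h1 : N ∣ 2 * r := by
        obtain ⟨c, hc⟩ := hte
        have hc' : t = 2 * c.toNat := by lia
        exact ⟨c.toNat, by rw [hc'] at ht; nlinarith⟩
      have h2 : n₁ ∣ 2 * r := by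
        obtain ⟨c, hc⟩ := hse
        have hc' : s * a' = 2 * c.toNat := by
          have : ((s * a' : ℕ) : ℤ) = c + c := by exact_mod_cast hc
          lia
        refine hcop.symm.dvd_of_dvd_mul_right ⟨c.toNat, ?_⟩
        have : 4 * r * a' = n₁ * (s * a') := by rw [hs]; ring
        rw [hc'] at this
        nlinarith
      have := Nat.le_of_dvd (by lia) (Nat.lcm_dvd h2 h1)
      lia
    · obtain ⟨k, j, hk, hkM⟩ := cop 1 (Or.inl rfl)
      obtain ⟨c, hc⟩ := (shift β _ hLβ _ _ _ hk).1 hte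
      obtain ⟨d, hd⟩ := (shift α _ hLα _ _ _ hk).2 hso
      have h1 := half k hkM (by
        rw [hc, Int.fract_add_intCast, Int.cast_one, one_mul, fβ]; linarith)
      rw [hd, Int.fract_add_intCast, Int.cast_one, one_mul,
        Int.fract_eq_self.2 ⟨by linarith, by linarith⟩] at h1
      linarith
  · obtain ⟨k, j, hk, hkM⟩ := cop (-1) (Or.inr rfl)
    obtain ⟨c, hc⟩ := (shift β _ hLβ _ _ _ hk).2 hto
    have hz : Int.fract (k * β) = 1 / 2 - β := by
      rw [hc, Int.fract_add_intCast, Int.fract_eq_iff]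
      exact ⟨by linarith, by linarith, 0, by push_cast; ring⟩
    have hz2 : Int.fract (k * β) < 1 / 2 := by rw [hz]; linarith
    have hx2 := half k hkM hz2
    rcases Int.even_or_odd (s * a' : ℤ) with hse | hso
    · obtain ⟨d, hd⟩ := (shift α _ hLα _ _ _ hk).1 hse
      have : Int.fract (k * α) = 1 - α := by
        rw [hd, Int.fract_add_intCast, Int.fract_eq_iff]
        exact ⟨by linarith, by linarith, -1, by push_cast; ring⟩
      linarith
    · obtain ⟨d, hd⟩ := (shift α _ hLα _ _ _ hk).2 hso
      refine ⟨k, hkM, ?_, hz⟩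
      rw [hd, Int.fract_add_intCast, Int.fract_eq_iff]
      exact ⟨by linarith, by linarith, 0, by push_cast; ring⟩

/-- The heart of the argument, in terms of `α = a' / n₁` in lowest terms and `β = 1 / N`; `γ` plays
the role of `b / n`. -/
lemma core_s10 (α β γ : ℝ) (a' n₁ N M p q : ℕ) (hα : α = a' / n₁) (hβ : β = 1 / N)
    (ha : 0 < a') (han : a' < n₁) (hcop : Nat.Coprime a' n₁) (hN : 3 ≤ N) (hN6 : N ≠ 6)
    (hγ0 : 0 < γ) (hγ1 : γ < 1)
    (hγ : ∀ k : ℤ, IsCoprime k (M : ℤ) → 0 < Int.fract (k * γ))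
    (hM : 0 < M) (hnM : n₁ * N ∣ M) (hp : 2 ≤ p) (hpq : 3 ≤ p + q)
    (h : ∀ k : ℤ, IsCoprime k (M : ℤ) → Int.fract (k * β) < 1 / 2 →
      (p : ℝ) * Int.fract (k * α) + q * Int.fract (k * γ) = 1 - 2 * Int.fract (k * β)) :
    False := by
  have hn₁ : 0 < n₁ := by lia
  have hnR : (0 : ℝ) < n₁ := by exact_mod_cast hn₁
  have hNR : (3 : ℝ) ≤ N := by exact_mod_cast hN
  have haR : (0 : ℝ) < a' := by exact_mod_cast ha
  have hpR : (2 : ℝ) ≤ p := by exact_mod_cast hp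
  have hqR : (0 : ℝ) ≤ q := by positivity
  have hpqR : (3 : ℝ) ≤ p + q := by exact_mod_cast hpq
  have hn₁M : n₁ ∣ M := (Dvd.intro _ rfl).trans hnM
  have hNM : N ∣ M := (Dvd.intro_left _ rfl).trans hnM
  have hβ0 : 0 < β := by rw [hβ]; positivity
  have hβ3 : β ≤ 1 / 3 := by
    rw [hβ]; exact one_div_le_one_div_of_le (by norm_num) hNR
  have hα0 : 0 < α := by rw [hα]; positivity
  have hα1 : α < 1 := by rw [hα, div_lt_one hnR]; exact_mod_cast han
  have hNβ : (N : ℝ) * β = 1 := by rw [hβ]; field_simp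
  have hnα : (n₁ : ℝ) * α = a' := by rw [hα]; field_simp
  have fα : Int.fract α = α := Int.fract_eq_self.2 ⟨hα0.le, hα1⟩
  have fβ : Int.fract β = β := Int.fract_eq_self.2 ⟨hβ0.le, by linarith⟩
  have fγ : Int.fract γ = γ := Int.fract_eq_self.2 ⟨hγ0.le, hγ1⟩
  have e1 : (p : ℝ) * α + q * γ = 1 - 2 * β := by
    have := h 1 isCoprime_one_left (by rw [Int.cast_one, one_mul, fβ]; linarith)
    simpa only [Int.cast_one, one_mul, fα, fβ, fγ] using this
  have hqγ : 0 ≤ q * γ := by positivity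
  have hα2 : α < 1 / 2 := by nlinarith
  have hpos : ∀ s : ℝ, 0 < s → ∀ g : ℝ, 0 < g → 0 < (p - 2) * s + q * g := by
    intro s hs g hg
    have hqg : 0 ≤ q * g := mul_nonneg hqR hg.le
    rcases hpR.eq_or_lt with h2 | h2
    · have : (0 : ℝ) < q := by linarith
      rw [← h2, sub_self, zero_mul, zero_add]
      exact mul_pos this hg
    · linarith [mul_pos (sub_pos.2 h2) hs]
  -- for admissible `k`, neither `2 * k * β` nor `k * α` is an integer
  have zne : ∀ k : ℤ, IsCoprime k (M : ℤ) → ∀ c : ℤ, 2 * (k * β) ≠ c := by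
    intro k hk c hc
    have h1 : (2 * k : ℝ) = c * N := by
      linear_combination (N : ℝ) * hc - 2 * k * hNβ
    have h2 : 2 * k = c * N := by exact_mod_cast h1
    have h3 : IsCoprime k (N : ℤ) := hk.of_isCoprime_of_dvd_right (by exact_mod_cast hNM)
    have h4 : (N : ℤ) ∣ 2 := h3.symm.dvd_of_dvd_mul_right ⟨c, by rw [h2]; ring⟩
    have := Int.le_of_dvd (by norm_num) h4
    lia
  have xne : ∀ k : ℤ, IsCoprime k (M : ℤ) → ∀ c : ℤ, k * α ≠ c := by
    intro k hk c hc
    have h1 : (k * a' : ℝ) = c * n₁ := by linear_combination (n₁ : ℝ) * hc - k * hnα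
    have h2 : k * a' = c * n₁ := by exact_mod_cast h1
    have h3 : IsCoprime k (n₁ : ℤ) := hk.of_isCoprime_of_dvd_right (by exact_mod_cast hn₁M)
    have h4 : (n₁ : ℤ) ∣ a' := h3.symm.dvd_of_dvd_mul_left ⟨c, by rw [h2]; ring⟩
    have := Int.le_of_dvd (by lia) h4
    lia
  have half : ∀ k : ℤ, IsCoprime k (M : ℤ) → Int.fract (k * β) < 1 / 2 →
      Int.fract (k * α) < 1 / 2 := by
    intro k hk hz
    have h1 := h k hk hz
    have h2 : 0 < Int.fract (k * β) := by
      rw [Int.fract_pos]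
      intro h3
      exact zne k hk (2 * ⌊(k * β : ℝ)⌋) (by push_cast; linarith)
    have h3 := Int.fract_nonneg (k * α)
    have h4 : 0 ≤ q * Int.fract (k * γ) := mul_nonneg hqR (Int.fract_nonneg _)
    nlinarith
  have halfiff : ∀ k : ℤ, IsCoprime k (M : ℤ) →
      (Int.fract (k * α) < 1 / 2 ↔ Int.fract (k * β) < 1 / 2) := by
    intro k hk
    refine ⟨fun hx => ?_, half k hk⟩
    by_contra hz
    have h0 : Int.fract (k * β : ℝ) ≠ 0 := by intro h0; rw [h0] at hz; norm_num at hz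
    have h1 : Int.fract (k * β : ℝ) ≠ 1 / 2 := fun h1 =>
      zne k hk (2 * ⌊(k * β : ℝ)⌋ + 1) (by rw [Int.fract] at h1; push_cast; linarith)
    have h2 : Int.fract ((-k : ℤ) * β : ℝ) = 1 - Int.fract (k * β : ℝ) := by
      rw [Int.cast_neg, neg_mul, Int.fract_neg h0]
    have h3 : Int.fract (k * α : ℝ) ≠ 0 := fun h3 =>
      xne k hk ⌊(k * α : ℝ)⌋ (by rw [Int.fract] at h3; linarith)
    have h4 := half (-k) hk.neg_left (by
      rw [h2]
      have := lt_of_le_of_ne (not_lt.1 hz) h1.symm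
      linarith)
    rw [Int.cast_neg, neg_mul, Int.fract_neg h3] at h4
    linarith
  by_cases h4 : 4 ∣ n₁ ∨ 4 ∣ N
  · obtain ⟨k, hkM, hx, hz⟩ := exists_reflection hnα hNβ hcop hn₁ (by lia) hM hn₁M hNM hα0 hα2
      hβ0 (by linarith) half h4
    have h1 := h k hkM (by rw [hz]; linarith)
    rw [hx, hz] at h1
    have h2 : 0 ≤ q * Int.fract (k * γ) := mul_nonneg hqR (Int.fract_nonneg _)
    have := hpos (1 / 2) (by norm_num) γ hγ0
    linarith
  · push Not at h4
    obtain ⟨o₁, ho₁, hd₁, s, hs⟩ := exists_odd_of_not_four_dvd n₁ h4.1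
    obtain ⟨o₂, ho₂, hd₂, t, ht⟩ := exists_odd_of_not_four_dvd N h4.2
    have hA : 2 * ((o₁ * o₂ : ℕ) : ℝ) * α = ((o₂ * s * a' : ℤ) : ℝ) := by
      have : (2 * o₁ : ℝ) = n₁ * s := by exact_mod_cast hs
      push_cast
      linear_combination (o₂ * α : ℝ) * this + (o₂ * s : ℝ) * hnα
    have hB : 2 * ((o₁ * o₂ : ℕ) : ℝ) * β = ((o₁ * t : ℤ) : ℝ) := by
      have : (2 * o₂ : ℝ) = N * t := by exact_mod_cast ht
      push_cast
      linear_combination (o₁ * β : ℝ) * this + (o₁ * t : ℝ) * hNβ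
    rcases eq_or_add_eq_half (ho₁.mul ho₂) hM ((mul_dvd_mul hd₁ hd₂).trans hnM) hA hB hα0 hα2 hβ0
      (by linarith) halfiff with hab | hab
    · obtain ⟨u, hu, hu4, hu2⟩ := exists_unit_second_quarter N hN hN6 h4.2
      obtain ⟨k, j, hk, hkM⟩ := exists_lift_coprime N M hM hNM u hu
      have hu4' : (N : ℝ) ≤ 4 * u := by exact_mod_cast hu4
      have hu2' : (2 * u : ℝ) < N := by exact_mod_cast hu2
      have h1 : 1 / 4 ≤ u * β := by nlinarith
      have h2 : u * β < 1 / 2 := by nlinarith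
      have hz : Int.fract (k * β) = u * β := by
        rw [Int.fract_eq_iff]
        refine ⟨by linarith, by linarith, j, ?_⟩
        rw [hk]; push_cast; linear_combination (j : ℝ) * hNβ
      have h3 := h k hkM (by rw [hz]; exact h2)
      rw [hab, hz] at h3
      have := hpos (u * β) (by linarith) _ (hγ k hkM)
      linarith
    · have := hpos α hα0 γ hγ0
      linarith

/-- Let `a, b, n, N` be positive integers and `p, q` nonnegative integers with
`a + b < n`, `N ≥ 3`, `N ≠ 6`, such that `p{ka/n} + q{kb/n} = 1 - 2{k/N}` for every
integer `k` with `gcd(k, nN) = 1` and `{k/N} < 1/2`. Then `p + q ≤ 2`. -/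
theorem statement10 (a b n N : ℕ) (ha : 0 < a) (hb : 0 < b) (hn : 0 < n) (hab : a + b < n)
    (hN : 3 ≤ N) (hN6 : N ≠ 6) (p q : ℕ)
    (h : ∀ k : ℤ, Int.gcd k (n * N) = 1 → Int.fract ((k : ℝ) / N) < 1 / 2 →
      (p : ℝ) * Int.fract ((k : ℝ) * a / n) + (q : ℝ) * Int.fract ((k : ℝ) * b / n)
        = 1 - 2 * Int.fract ((k : ℝ) / N)) :
    p + q ≤ 2 := by
  have hn0 : (n : ℝ) ≠ 0 := by positivity
  -- the two pairs `(p, a)` and `(q, b)` play symmetric roles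
  have main : ∀ a b p q : ℕ, 0 < a → 0 < b → a + b < n → 2 ≤ p → 3 ≤ p + q →
      (∀ k : ℤ, Int.gcd k (n * N) = 1 → Int.fract ((k : ℝ) / N) < 1 / 2 →
        (p : ℝ) * Int.fract ((k : ℝ) * a / n) + (q : ℝ) * Int.fract ((k : ℝ) * b / n)
          = 1 - 2 * Int.fract ((k : ℝ) / N)) → False := by
    intro a b p q ha hb hab hp hpq h
    obtain ⟨g, a', n₁, hg, hcop, rfl, rfl⟩ := Nat.exists_coprime' (Nat.gcd_pos_of_pos_left n ha)
    have hgR : (g : ℝ) ≠ 0 := by positivity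
    have hn₁ : 0 < n₁ := Nat.pos_of_mul_pos_right hn
    have hn₁R : (n₁ : ℝ) ≠ 0 := by positivity
    have hnR : (0 : ℝ) < (n₁ * g : ℕ) := by exact_mod_cast hn
    refine core_s10 ((a' : ℝ) / n₁) (1 / N) (b / (n₁ * g : ℕ)) a' n₁ N (n₁ * g * N) p q rfl rfl
      (Nat.pos_of_mul_pos_right ha) (lt_of_mul_lt_mul_right (by lia : a' * g < n₁ * g) g.zero_le)
      hcop hN hN6 (by positivity) ?_ ?_ (by positivity) ⟨g, by ring⟩ hp hpq ?_
    · rw [div_lt_one hnR]; exact_mod_cast (by lia : b < n₁ * g)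
    · intro k hk
      rw [Int.fract_pos]
      intro hc
      have h1 : (k * b : ℝ) = ⌊(k * (b / (n₁ * g : ℕ)) : ℝ)⌋ * (n₁ * g : ℕ) := by
        rw [← hc]; field_simp
      have h2 : k * b = ⌊(k * (b / (n₁ * g : ℕ)) : ℝ)⌋ * (n₁ * g : ℕ) := by exact_mod_cast h1
      rw [Nat.cast_mul (n₁ * g) N] at hk
      have h3 := hk.of_mul_right_left.symm.dvd_of_dvd_mul_left ⟨_, h2.trans (mul_comm _ _)⟩
      have := Int.le_of_dvd (by lia) h3
      lia
    · intro k hk hz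
      have h1 := h k (by
        rw [← Int.isCoprime_iff_gcd_eq_one]; exact_mod_cast hk) (by
        rwa [div_eq_mul_one_div])
      have h2 : (k : ℝ) * (a' * g : ℕ) / (n₁ * g : ℕ) = k * (a' / n₁) := by
        push_cast; field_simp
      rw [h2, mul_div_assoc, div_eq_mul_one_div (k : ℝ) (N : ℝ)] at h1
      exact h1
  by_contra hpq
  rcases le_or_gt 2 p with hp | hp
  · exact main a b p q ha hb hab hp (by lia) h
  · exact main b a q p hb ha (by lia) (by lia) (by lia) fun k hk hz => by
      rw [add_comm]; exact h k hk hz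
end

section
/- For every even integer N ≥ 26 there are integers k, k′ such that N/4 < k < N/2, N/4 < k′ < N/2, gcd(k, N) = gcd(k′, N) = 1, k ≡ 1 (mod 4), and k′ ≡ 3 (mod 4). -/
open Real

/-!
Explicit witnesses exist, each a small shift of a fixed fraction of `N`, so that only the primes
`2` and `3` can obstruct coprimality with `N`.

* `N = 2m`, `m` odd: `m - 2` and `m - 4` are coprime to `2m` and lie in different odd classes mod 4.
* `N = 4m`, `m` odd: likewise `m + 2` and `m + 4`.
* `N = 4m`, `m` even: `2m - 1` is in class 3. For class 1, take `2m - 3` if `3 ∤ m`, and `m + 1`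
  if `4 ∣ m`. Otherwise `m = 6u` with `u` odd, so `N = 24u`; the candidates near `N / 3 = 8u` are
  `8u + 1`, which fails only if `u ≡ 1 [ZMOD 3]`, and in that case `8u - 3`.
-/

lemma isCoprime_of_eq_add_mul {k d a : ℤ} (q : ℤ) (h : IsCoprime d a) (hk : k = d + a * q) :
    IsCoprime k a := by
  rw [hk]; exact h.add_mul_left_left q

lemma isCoprime_two_of_odd {k : ℤ} (h : k % 2 = 1) : IsCoprime k 2 :=
  (Int.prime_two.coprime_iff_not_dvd.2 (by omega)).symm

lemma isCoprime_three_of_not_dvd {k : ℤ} (h : k % 3 ≠ 0) : IsCoprime k 3 :=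
  (Int.prime_three.coprime_iff_not_dvd.2 (by omega)).symm

lemma isCoprime_four_of_odd {k : ℤ} (h : k % 2 = 1) : IsCoprime k 4 := by
  have := (isCoprime_two_of_odd h).mul_right (isCoprime_two_of_odd h)
  norm_num at this
  exact this

/-- Two admissible integers that differ mod 4 can be put in the required order. -/
lemma exists_pair_of_two_classes {n a b : ℤ} (ha : n < 4 * a ∧ 2 * a < n ∧ IsCoprime a n)
    (hb : n < 4 * b ∧ 2 * b < n ∧ IsCoprime b n)
    (hab : a % 4 = 1 ∧ b % 4 = 3 ∨ a % 4 = 3 ∧ b % 4 = 1) :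
    ∃ k k' : ℤ, (n < 4 * k ∧ 2 * k < n ∧ IsCoprime k n) ∧
      (n < 4 * k' ∧ 2 * k' < n ∧ IsCoprime k' n) ∧ k % 4 = 1 ∧ k' % 4 = 3 := by
  rcases hab with h | h
  · exact ⟨a, b, ha, hb, h⟩
  · exact ⟨b, a, hb, ha, h.2, h.1⟩

lemma exists_pair_two_mul_odd {m : ℤ} (hm : 13 ≤ m) (hodd : m % 2 = 1) :
    ∃ k k' : ℤ, (2 * m < 4 * k ∧ 2 * k < 2 * m ∧ IsCoprime k (2 * m)) ∧
      (2 * m < 4 * k' ∧ 2 * k' < 2 * m ∧ IsCoprime k' (2 * m)) ∧ k % 4 = 1 ∧ k' % 4 = 3 := by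
  refine exists_pair_of_two_classes (a := m - 2) (b := m - 4)
    ⟨by omega, by omega, (isCoprime_two_of_odd (by omega)).mul_right ?_⟩
    ⟨by omega, by omega, (isCoprime_two_of_odd (by omega)).mul_right ?_⟩ (by omega)
  · exact isCoprime_of_eq_add_mul 1 (isCoprime_two_of_odd hodd).symm.neg_left (by ring)
  · exact isCoprime_of_eq_add_mul 1 (isCoprime_four_of_odd hodd).symm.neg_left (by ring)

lemma exists_pair_four_mul_odd {m : ℤ} (hm : 7 ≤ m) (hodd : m % 2 = 1) :
    ∃ k k' : ℤ, (4 * m < 4 * k ∧ 2 * k < 4 * m ∧ IsCoprime k (4 * m)) ∧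
      (4 * m < 4 * k' ∧ 2 * k' < 4 * m ∧ IsCoprime k' (4 * m)) ∧ k % 4 = 1 ∧ k' % 4 = 3 := by
  refine exists_pair_of_two_classes (a := m + 2) (b := m + 4)
    ⟨by omega, by omega, (isCoprime_four_of_odd (by omega)).mul_right ?_⟩
    ⟨by omega, by omega, (isCoprime_four_of_odd (by omega)).mul_right ?_⟩ (by omega)
  · exact isCoprime_of_eq_add_mul 1 (isCoprime_two_of_odd hodd).symm (by ring)
  · exact isCoprime_of_eq_add_mul 1 (isCoprime_four_of_odd hodd).symm (by ring)

lemma exists_one_mod_four_of_even {m : ℤ} (hm : 7 ≤ m) (heven : m % 2 = 0) :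
    ∃ k : ℤ, (4 * m < 4 * k ∧ 2 * k < 4 * m ∧ IsCoprime k (4 * m)) ∧ k % 4 = 1 := by
  by_cases h3 : m % 3 = 0
  · by_cases h4 : m % 4 = 0
    · refine ⟨m + 1, ⟨by omega, by omega, (isCoprime_four_of_odd (by omega)).mul_right ?_⟩,
        by omega⟩
      exact isCoprime_of_eq_add_mul 1 isCoprime_one_left (by ring)
    · obtain ⟨u, rfl⟩ : ∃ u, m = 6 * u := ⟨m / 6, by omega⟩
      have key : ∀ k : ℤ, k % 2 = 1 → k % 3 ≠ 0 → IsCoprime k u →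
          IsCoprime k (4 * (6 * u)) := by
        intro k h2 h3 hu
        have := (isCoprime_four_of_odd h2).mul_right
          ((isCoprime_two_of_odd h2).mul_right ((isCoprime_three_of_not_dvd h3).mul_right hu))
        rwa [show (4 * (2 * (3 * u)) : ℤ) = 4 * (6 * u) by ring] at this
      by_cases hu : u % 3 = 1
      · refine ⟨8 * u - 3, ⟨by omega, by omega, key _ (by omega) (by omega) ?_⟩, by omega⟩
        exact isCoprime_of_eq_add_mul 8
          (isCoprime_three_of_not_dvd (k := u) (by omega)).symm.neg_left (by ring)
      · refine ⟨8 * u + 1, ⟨by omega, by omega, key _ (by omega) (by omega) ?_⟩, by omega⟩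
        exact isCoprime_of_eq_add_mul 8 isCoprime_one_left (by ring)
  · refine ⟨2 * m - 3, ⟨by omega, by omega, (isCoprime_four_of_odd (by omega)).mul_right ?_⟩,
      by omega⟩
    exact isCoprime_of_eq_add_mul 2 (isCoprime_three_of_not_dvd h3).symm.neg_left (by ring)

lemma exists_three_mod_four_of_even {m : ℤ} (hm : 7 ≤ m) (heven : m % 2 = 0) :
    ∃ k : ℤ, (4 * m < 4 * k ∧ 2 * k < 4 * m ∧ IsCoprime k (4 * m)) ∧ k % 4 = 3 := by
  refine ⟨2 * m - 1, ⟨by omega, by omega, (isCoprime_four_of_odd (by omega)).mul_right ?_⟩,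
    by omega⟩
  exact isCoprime_of_eq_add_mul 2 isCoprime_one_left.neg_left (by ring)

lemma exists_pair_of_even {n : ℤ} (hn : 26 ≤ n) (heven : n % 2 = 0) :
    ∃ k k' : ℤ, (n < 4 * k ∧ 2 * k < n ∧ IsCoprime k n) ∧
      (n < 4 * k' ∧ 2 * k' < n ∧ IsCoprime k' n) ∧ k % 4 = 1 ∧ k' % 4 = 3 := by
  by_cases h4 : n % 4 = 0
  · obtain ⟨m, rfl⟩ : ∃ m, n = 4 * m := ⟨n / 4, by omega⟩
    by_cases hm : m % 2 = 1
    · exact exists_pair_four_mul_odd (by omega) hm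
    · obtain ⟨k, hk, hk1⟩ := exists_one_mod_four_of_even (m := m) (by omega) (by omega)
      obtain ⟨k', hk', hk3⟩ := exists_three_mod_four_of_even (m := m) (by omega) (by omega)
      exact ⟨k, k', hk, hk', hk1, hk3⟩
  · obtain ⟨m, rfl⟩ : ∃ m, n = 2 * m := ⟨n / 2, by omega⟩
    exact exists_pair_two_mul_odd (by omega) (by omega)

/-- For every even integer `N ≥ 26` there are integers `k, k'` with
`N/4 < k, k' < N/2`, `gcd(k,N) = gcd(k',N) = 1`, `k ≡ 1 (mod 4)` and `k' ≡ 3 (mod 4)`. -/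
theorem statement11 (N : ℕ) (hN : 26 ≤ N) (hNeven : Even N) :
    ∃ k k' : ℤ,
      (N : ℝ) / 4 < (k : ℝ) ∧ (k : ℝ) < (N : ℝ) / 2 ∧
      (N : ℝ) / 4 < (k' : ℝ) ∧ (k' : ℝ) < (N : ℝ) / 2 ∧
      Int.gcd k N = 1 ∧ Int.gcd k' N = 1 ∧
      k ≡ 1 [ZMOD 4] ∧ k' ≡ 3 [ZMOD 4] := by
  have h2 : N % 2 = 0 := Nat.even_iff.1 hNeven
  obtain ⟨k, k', ⟨h1, h2, h3⟩, ⟨h1', h2', h3'⟩, hk, hk'⟩ :=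
    exists_pair_of_even (n := (N : ℤ)) (by omega) (by omega)
  have e1 : (N : ℝ) < 4 * k := by exact_mod_cast h1
  have e2 : 2 * (k : ℝ) < N := by exact_mod_cast h2
  have e3 : (N : ℝ) < 4 * k' := by exact_mod_cast h1'
  have e4 : 2 * (k' : ℝ) < N := by exact_mod_cast h2'
  exact ⟨k, k', by linarith, by linarith, by linarith, by linarith,
    Int.isCoprime_iff_gcd_eq_one.1 h3, Int.isCoprime_iff_gcd_eq_one.1 h3', hk, hk'⟩
end

section
/- For every integer N ≥ 43 there exists an integer k such that N/6 < k < N/4 and gcd(k, 2N) = 1. -/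
open Real

/-!
If `b * k = a * M + c` with `k` odd and `c` a divisor of `16`, then `k` is coprime to `M`, since
`gcd(k, M)` divides `c` while `k` is coprime to `2` (`isCoprime_of_linear`). An odd `k` coprime to
`N` and close to a fixed multiple of `N` between `N / 6` and `N / 4` is obtained as follows.

* `N` odd: take `5 * k = N + c`. If `5 ∤ N`, some `c ∈ {±2, ±4}` has the right residue, since `±2`
  and `±4` represent all nonzero classes modulo `5`. If `N = 5 * M`, take `k = M ± 2`, where
  one of the two signs avoids the multiples of `5`.
* `N = 4 * m`: take `k = m - 1` or `k = m - 2`, whichever is odd.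
* `N = 2 * M` with `M` odd: take `7 * k = 3 * M + c`. If `7 ∤ M`, some `c ∈ {±2, ±4, ±8}` has
  the right residue. If `M = 7 * Q`, take `k = 3 * Q ± 2`, where one of the two signs avoids the
  multiples of `7`.
-/

theorem isCoprime_of_linear {k M : ℤ} (a b c : ℤ) (hk : Odd k) (hc : c ∣ 16)
    (h : b * k = a * M + c) : IsCoprime k M := by
  have h2 : IsCoprime k (2 ^ 4) := (Int.isCoprime_two_right.mpr hk).pow_right
  obtain ⟨u, v, huv⟩ : IsCoprime k c := h2.of_isCoprime_of_dvd_right (by simpa using hc)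
  exact ⟨u + v * b, -(v * a), by linear_combination huv + v * h⟩

theorem isCoprime_prime_of_not_dvd {k p : ℤ} (hp : Prime p) (h : ¬ p ∣ k) : IsCoprime k p :=
  ((Prime.coprime_iff_not_dvd hp).mpr h).symm

theorem exists_coprime_of_odd (N : ℤ) (hN : 43 ≤ N) (hodd : Odd N) :
    ∃ k : ℤ, N < 6 * k ∧ 4 * k < N ∧ Odd k ∧ IsCoprime k N := by
  by_cases h5 : 5 ∣ N
  · obtain ⟨M, rfl⟩ := h5
    have hM : Odd M := (Int.odd_mul.mp hodd).2
    have key : ∀ c : ℤ, c ∣ 16 → Odd (M + c) → ¬ 5 ∣ M + c → IsCoprime (M + c) (5 * M) :=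
      fun c hc ho h5 => (isCoprime_prime_of_not_dvd (by norm_num) h5).mul_right
        (isCoprime_of_linear 1 1 c ho hc (by ring))
    -- The sign `+` comes first: for `N = 45` and `N = 55` the choice `M - 2` is below the window.
    by_cases h : 5 ∣ M + 2
    · have ho : Odd (M + -2) := by grind
      exact ⟨M + -2, by omega, by omega, ho, key _ (by norm_num) ho (by omega)⟩
    · have ho : Odd (M + 2) := by grind
      exact ⟨M + 2, by omega, by omega, ho, key _ (by norm_num) ho h⟩
  · have key : ∀ c : ℤ, c ∣ 16 → 2 ∣ c → |c| ≤ 4 → 5 ∣ N + c →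
        ∃ k : ℤ, N < 6 * k ∧ 4 * k < N ∧ Odd k ∧ IsCoprime k N := by
      rintro c hc h2 hb ⟨k, hk⟩
      rw [abs_le] at hb
      have ho : Odd k := by grind
      exact ⟨k, by omega, by omega, ho, isCoprime_of_linear 1 5 c ho hc (by linarith)⟩
    have : 5 ∣ N + 2 ∨ 5 ∣ N + -2 ∨ 5 ∣ N + 4 ∨ 5 ∣ N + -4 := by omega
    rcases this with h | h | h | h <;> exact key _ (by norm_num) (by norm_num) (by norm_num) h

theorem exists_coprime_of_four_dvd (m : ℤ) (hm : 11 ≤ m) :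
    ∃ k : ℤ, 4 * m < 6 * k ∧ 4 * k < 4 * m ∧ Odd k ∧ IsCoprime k (4 * m) := by
  have key : ∀ c : ℤ, c ∣ 16 → Odd (m + c) → IsCoprime (m + c) (4 * m) := by
    intro c hc ho
    have h4 : IsCoprime (m + c) 4 := isCoprime_of_linear 1 0 (-4) ho (by norm_num) (by norm_num)
    exact h4.mul_right (isCoprime_of_linear 1 1 c ho hc (by ring))
  rcases Int.even_or_odd m with h | h
  · have ho : Odd (m + -1) := by grind
    exact ⟨m + -1, by omega, by omega, ho, key _ (by norm_num) ho⟩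
  · have ho : Odd (m + -2) := by grind
    exact ⟨m + -2, by omega, by omega, ho, key _ (by norm_num) ho⟩

theorem exists_coprime_of_two_mul_odd (M : ℤ) (hM : 22 ≤ M) (hodd : Odd M) :
    ∃ k : ℤ, 2 * M < 6 * k ∧ 4 * k < 2 * M ∧ Odd k ∧ IsCoprime k (2 * M) := by
  suffices ∃ k : ℤ, M < 3 * k ∧ 2 * k < M ∧ Odd k ∧ IsCoprime k M by
    obtain ⟨k, h1, h2, ho, hc⟩ := this
    exact ⟨k, by omega, by omega, ho, (Int.isCoprime_two_right.mpr ho).mul_right hc⟩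
  by_cases h7 : 7 ∣ M
  · obtain ⟨Q, rfl⟩ := h7
    have hQ : Odd Q := (Int.odd_mul.mp hodd).2
    have key : ∀ c : ℤ, c ∣ 16 → Odd (3 * Q + c) → ¬ 7 ∣ 3 * Q + c →
        IsCoprime (3 * Q + c) (7 * Q) :=
      fun c hc ho h7 => (isCoprime_prime_of_not_dvd (by norm_num) h7).mul_right
        (isCoprime_of_linear 3 1 c ho hc (by ring))
    have ho (c : ℤ) (hc : 2 ∣ c) : Odd (3 * Q + c) := by grind
    by_cases h : 7 ∣ 3 * Q + 2
    · exact ⟨3 * Q + -2, by grind, by grind, ho _ (by norm_num),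
        key _ (by norm_num) (ho _ (by norm_num)) (by omega)⟩
    · exact ⟨3 * Q + 2, by grind, by grind, ho _ (by norm_num),
        key _ (by norm_num) (ho _ (by norm_num)) h⟩
  · have key : ∀ c : ℤ, c ∣ 16 → 2 ∣ c → |c| ≤ 8 → 7 ∣ 3 * M + c →
        ∃ k : ℤ, M < 3 * k ∧ 2 * k < M ∧ Odd k ∧ IsCoprime k M := by
      rintro c hc h2 hb ⟨k, hk⟩
      rw [abs_le] at hb
      have ho : Odd k := by grind
      exact ⟨k, by omega, by omega, ho, isCoprime_of_linear 3 7 c ho hc (by linarith)⟩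
    have : 7 ∣ 3 * M + 2 ∨ 7 ∣ 3 * M + -2 ∨ 7 ∣ 3 * M + 4 ∨ 7 ∣ 3 * M + -4 ∨
        7 ∣ 3 * M + 8 ∨ 7 ∣ 3 * M + -8 := by
      have hr : M % 7 = 1 ∨ M % 7 = 2 ∨ M % 7 = 3 ∨ M % 7 = 4 ∨ M % 7 = 5 ∨ M % 7 = 6 := by omega
      rcases hr with hr | hr | hr | hr | hr | hr <;> omega
    rcases this with h | h | h | h | h | h <;>
      exact key _ (by norm_num) (by norm_num) (by norm_num) h

/-- For every integer `N ≥ 43` there exists an integer `k` such that `N/6 < k < N/4`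
and `gcd(k, 2N) = 1`. -/
theorem statement12 (N : ℕ) (hN : 43 ≤ N) :
    ∃ k : ℤ, (N : ℝ) / 6 < (k : ℝ) ∧ (k : ℝ) < (N : ℝ) / 4 ∧ Int.gcd k (2 * N) = 1 := by
  have main : ∃ k : ℤ, (N : ℤ) < 6 * k ∧ 4 * k < (N : ℤ) ∧ Odd k ∧ IsCoprime k (N : ℤ) := by
    have hN' : (43 : ℤ) ≤ N := by exact_mod_cast hN
    generalize (N : ℤ) = n at hN'
    rcases Int.even_or_odd n with h | h
    · obtain ⟨M, rfl⟩ := h.two_dvd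
      rcases Int.even_or_odd M with h' | h'
      · obtain ⟨m, rfl⟩ := h'.two_dvd
        have := exists_coprime_of_four_dvd m (by omega)
        rwa [← mul_assoc]
      · exact exists_coprime_of_two_mul_odd M (by omega) h'
    · exact exists_coprime_of_odd n hN' h
  obtain ⟨k, h1, h2, ho, hc⟩ := main
  have h1' : (N : ℝ) < 6 * k := by exact_mod_cast h1
  have h2' : 4 * (k : ℝ) < N := by exact_mod_cast h2
  exact ⟨k, by linarith, by linarith,
    Int.isCoprime_iff_gcd_eq_one.mp ((Int.isCoprime_two_right.mpr ho).mul_right hc)⟩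
end
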